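/- arXiv:2206.11735 — 3 statements merged into one kernel-verified Lean document; each statement's English description precedes it below -/
import Mathlib

section
/- Assume (A(t), B(t)) is totally controllable on [0,1]. For any symmetric positive definite matrices Σ₀ and Σ₁, there exists a pair (Π, Σ) of matrix functions on [0,1] such that: Π is symmetric and solves the Riccati equation Π' = −A(t)ᵀΠ − ΠA(t) + ΠB(t)B(t)ᵀΠ − Q(t) on [0,1]; Σ solves Σ' = (A(t) − B(t)B(t)ᵀΠ(t))Σ + Σ(A(t) − B(t)B(t)ᵀΠ(t))ᵀ + C(t)D(t)C(t)ᵀ on [0,1]; and Σ(0) = Σ₀, Σ(1) = Σ₁. Moreover, the initial value Π(0), and hence the pair (Π, Σ), is unique. -/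
/-!
Let `Φ` be the fundamental matrix of `x' = A x` and `W = Φ⁻¹`. In the moving frame
`P ↦ Φᵀ P Φ`, `S ↦ W S Wᵀ` the drift disappears, and the equations become
`P' = P M P - Q`, `S' = -M P S - S P M + N` with positive semidefinite `M`, `Q`, `N`, where
`M = W B Bᵀ Wᵀ`. Since `(W Γ_k)' = W Γ_{k+1}`, total controllability says that no nonzero constant
vector is annihilated by `M` throughout a subinterval
(`nowhereDegenerate_of_totallyControllable`).

Uniqueness (`driftless_unique`). For two solutions put `Δ = P₁ - P₂`. Up to sign, the derivative of
`tr (Δ (S₁ - S₂))` is `tr (Δ M Δ (S₁ + S₂))`, which is nonnegative as both `S_i` stay positive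
definite. The function vanishes at both ends, so `M Δ = 0` throughout; then `Δ` is constant, and
nondegeneracy of `M` forces `Δ = 0`.

Existence (`driftless_exists`). Among the Riccati solutions on `[0, 1]`, minimise
`dualCost P = tr (P(1) Σ₁) - tr (P(0) Σ₀) - ∫ tr (P N)`. If `S` is the Lyapunov flow of `P` started
at `Σ₀`, varying the terminal value of `P` changes `dualCost` to first order by
`tr (δP(1) (Σ₁ - S(1)))` (`dualCost_sub_le`), so a minimiser satisfies `S(1) = Σ₁`. A minimiser
exists by compactness: steering the covariance with open-loop controls, available for every pair of
end values near `(Σ₀, Σ₁)` because the Gramian `∫ M` over any interval is invertible, bounds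
`dualCost` from below by arbitrary linear functionals of `(P(0), P(1))` (`weak_duality`, `coercive`),
and therefore bounds all of `P` on sublevel sets (`apriori_bound`). Truncating the Riccati field
outside a large ball gives a flow that is globally defined and depends continuously on the terminal
value, and the a priori bound keeps the minimiser inside that ball.
-/

open Matrix

/-- `IsCtrbMatSeq A B Γ`: `Γ 0 = B` and `Γ k = -A Γ (k-1) + Γ' (k-1)`, i.e. the derivative of
each entry of `Γ k` is the corresponding entry of `Γ (k+1) + A * Γ k`, for `k < n`. -/
def IsCtrbMatSeq {n p : ℕ} (A : ℝ → Matrix (Fin n) (Fin n) ℝ)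
    (B : ℝ → Matrix (Fin n) (Fin p) ℝ) (Γ : ℕ → ℝ → Matrix (Fin n) (Fin p) ℝ) : Prop :=
  Γ 0 = B ∧
  ∀ k < n, ∀ (t : ℝ) (i : Fin n) (j : Fin p),
    HasDerivAt (fun τ : ℝ => Γ k τ i j) ((Γ (k + 1) t + A t * Γ k t) i j) t

/-- The controllability matrix `Θₙ(t) = [Γ₀(t) Γ₁(t) ⋯ Γ_{n−1}(t)]`. -/
def ctrbMat {n p : ℕ} (Γ : ℕ → ℝ → Matrix (Fin n) (Fin p) ℝ) (t : ℝ) :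
    Matrix (Fin n) (Fin n × Fin p) ℝ :=
  Matrix.of fun i kj => Γ (kj.1 : ℕ) t i kj.2

/-- Total controllability of `(A(t), B(t))` on `[0,1]`. -/
def TotallyControllable {n p : ℕ} (Γ : ℕ → ℝ → Matrix (Fin n) (Fin p) ℝ) : Prop :=
  ∀ t₀ t₁ : ℝ, 0 ≤ t₀ → t₀ < t₁ → t₁ ≤ 1 →
    ∃ t ∈ Set.Ioo t₀ t₁, (ctrbMat Γ t).rank = n

/-- `(P, S)` solves the coupled Riccati/Lyapunov equations on `[0,1]` with
boundary conditions `S 0 = Sig0`, `S 1 = Sig1` (derivatives entrywise, within `[0,1]`). -/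
def IsCoupledSol {n p q : ℕ} (A Q : ℝ → Matrix (Fin n) (Fin n) ℝ)
    (B : ℝ → Matrix (Fin n) (Fin p) ℝ) (C : ℝ → Matrix (Fin n) (Fin q) ℝ)
    (D : ℝ → Matrix (Fin q) (Fin q) ℝ) (Sig0 Sig1 : Matrix (Fin n) (Fin n) ℝ)
    (P S : ℝ → Matrix (Fin n) (Fin n) ℝ) : Prop :=
  (∀ t ∈ Set.Icc (0:ℝ) 1, (P t)ᵀ = P t) ∧
  (∀ t ∈ Set.Icc (0:ℝ) 1, ∀ (i j : Fin n),
    HasDerivWithinAt (fun τ : ℝ => P τ i j)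
      ((-(A t)ᵀ * P t - P t * A t + P t * (B t * (B t)ᵀ) * P t - Q t) i j)
      (Set.Icc (0:ℝ) 1) t) ∧
  (∀ t ∈ Set.Icc (0:ℝ) 1, ∀ (i j : Fin n),
    HasDerivWithinAt (fun τ : ℝ => S τ i j)
      (((A t - B t * (B t)ᵀ * P t) * S t + S t * (A t - B t * (B t)ᵀ * P t)ᵀ +
        C t * D t * (C t)ᵀ) i j)
      (Set.Icc (0:ℝ) 1) t) ∧
  S 0 = Sig0 ∧ S 1 = Sig1

/-! ### Ordinary differential equations on the unit interval -/

section ODE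

open Set Metric
open scoped NNReal

variable {E : Type*} [NormedAddCommGroup E] [NormedSpace ℝ E]

/-- The radial retraction of a normed space onto the closed ball of radius `R` around `0`. -/
noncomputable def radialRetract (R : ℝ) (x : E) : E := (R / max R ‖x‖) • x

lemma radialRetract_of_le {R : ℝ} (hR : 0 < R) {x : E} (hx : ‖x‖ ≤ R) :
    radialRetract R x = x := by
  simp [radialRetract, max_eq_left hx, hR.ne']

lemma norm_radialRetract_le {R : ℝ} (hR : 0 < R) (x : E) : ‖radialRetract R x‖ ≤ R := by
  have h : 0 < max R ‖x‖ := lt_max_of_lt_left hR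
  rw [radialRetract, norm_smul, Real.norm_of_nonneg (by positivity), div_mul_eq_mul_div,
    div_le_iff₀ h]
  exact mul_le_mul_of_nonneg_left (le_max_right _ _) hR.le

lemma norm_radialRetract_le_self {R : ℝ} (hR : 0 < R) (x : E) : ‖radialRetract R x‖ ≤ ‖x‖ := by
  have h : 0 < max R ‖x‖ := lt_max_of_lt_left hR
  rw [radialRetract, norm_smul, Real.norm_of_nonneg (by positivity)]
  exact mul_le_of_le_one_left (norm_nonneg _) ((div_le_one h).2 (le_max_left _ _))

lemma lipschitzWith_radialRetract {R : ℝ} (hR : 0 < R) :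
    LipschitzWith 2 (radialRetract R : E → E) := by
  refine LipschitzWith.of_dist_le_mul fun x y => ?_
  rw [dist_eq_norm, dist_eq_norm]
  set a := max R ‖x‖ with ha
  set b := max R ‖y‖ with hb
  have ha0 : 0 < a := lt_max_of_lt_left hR
  have hb0 : 0 < b := lt_max_of_lt_left hR
  have hab : |b - a| ≤ ‖x - y‖ := by
    calc |b - a| ≤ max |R - R| |‖y‖ - ‖x‖| := abs_max_sub_max_le_max _ _ _ _
      _ ≤ ‖x - y‖ := by
        rw [norm_sub_rev]
        simpa using abs_norm_sub_norm_le y x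
  have e : radialRetract R x - radialRetract R y =
      (R / a) • (x - y) + ((R / a) * ((b - a) / b)) • y := by
    have : R / a * ((b - a) / b) = R / a - R / b := by field_simp
    rw [this]
    simp only [radialRetract, ← ha, ← hb, smul_sub, sub_smul]
    abel
  have h1 : R / a ≤ 1 := (div_le_one ha0).2 (le_max_left _ _)
  have h1' : 0 ≤ R / a := by positivity
  have h2 : ‖y‖ / b ≤ 1 := (div_le_one hb0).2 (le_max_right _ _)
  rw [e]
  refine (norm_add_le _ _).trans ?_
  rw [norm_smul, norm_smul, norm_mul, Real.norm_of_nonneg h1', norm_div, Real.norm_eq_abs,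
    Real.norm_of_nonneg hb0.le]
  have h3 : R / a * (|b - a| / b) * ‖y‖ = R / a * (|b - a| * (‖y‖ / b)) := by ring
  rw [h3]
  have h4 : |b - a| * (‖y‖ / b) ≤ ‖x - y‖ * 1 :=
    mul_le_mul hab h2 (by positivity) (norm_nonneg _)
  have h5 : R / a * (|b - a| * (‖y‖ / b)) ≤ 1 * (‖x - y‖ * 1) :=
    mul_le_mul h1 h4 (by positivity) zero_le_one
  have h6 := mul_le_mul_of_nonneg_right h1 (norm_nonneg (x - y))
  simp only [NNReal.coe_ofNat]
  linarith

/-- `x` solves `x' = f (t, x)` on the unit interval (one-sided derivatives at the ends). -/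
def SolvesOn (f : ℝ → E → E) (x : ℝ → E) : Prop :=
  ∀ t ∈ Icc (0 : ℝ) 1, HasDerivWithinAt x (f t (x t)) (Icc 0 1) t

lemma SolvesOn.continuousOn {f : ℝ → E → E} {x : ℝ → E} (h : SolvesOn f x) :
    ContinuousOn x (Icc 0 1) := fun t ht => (h t ht).continuousWithinAt

lemma HasDerivWithinAt.Ici_of_unit {x : ℝ → E} {x' : E} {t : ℝ}
    (h : HasDerivWithinAt x x' (Icc 0 1) t) (ht : t ∈ Ico (0 : ℝ) 1) :
    HasDerivWithinAt x x' (Ici t) t :=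
  h.mono_of_mem_nhdsWithin (Icc_mem_nhdsGE_of_mem ht)

lemma unit_reverse {x : ℝ → E} {x' : E} {t : ℝ}
    (h : HasDerivWithinAt x x' (Icc 0 1) (1 - t)) :
    HasDerivWithinAt (fun s => x (1 - s)) (-x') (Icc 0 1) t := by
  have h1 : HasDerivWithinAt (fun s : ℝ => 1 - s) (-1) (Icc 0 1) t := by
    simpa using ((hasDerivAt_id t).const_sub 1).hasDerivWithinAt
  have := HasDerivWithinAt.scomp (t' := Icc 0 1) t h h1
    (fun s hs => ⟨by linarith [hs.2], by linarith [hs.1]⟩)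
  rw [neg_one_smul] at this
  exact this

lemma unit_reverse_mem {t : ℝ} (ht : t ∈ Icc (0 : ℝ) 1) : 1 - t ∈ Icc (0 : ℝ) 1 :=
  ⟨by linarith [ht.2], by linarith [ht.1]⟩

/-- Lipschitz dependence of solutions on the value at time `0`. -/
lemma SolvesOn.dist_le_zero {f : ℝ → E → E} {K : ℝ≥0}
    (hf : ∀ t ∈ Icc (0 : ℝ) 1, LipschitzWith K (f t)) {x y : ℝ → E}
    (hx : SolvesOn f x) (hy : SolvesOn f y) {t : ℝ} (ht : t ∈ Icc (0 : ℝ) 1) :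
    ‖x t - y t‖ ≤ Real.exp K * ‖x 0 - y 0‖ := by
  have h := dist_le_of_trajectories_ODE_of_mem (v := f) (s := fun _ => univ) (K := K)
    (fun t ht => (hf t (Ico_subset_Icc_self ht)).lipschitzOnWith)
    hx.continuousOn (fun t ht => (hx t (Ico_subset_Icc_self ht)).Ici_of_unit ht)
    (fun _ _ => trivial) hy.continuousOn
    (fun t ht => (hy t (Ico_subset_Icc_self ht)).Ici_of_unit ht)
    (fun _ _ => trivial) le_rfl t ht
  rw [dist_eq_norm, dist_eq_norm, mul_comm] at h
  refine h.trans (mul_le_mul_of_nonneg_right (Real.exp_le_exp.2 ?_) (norm_nonneg _))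
  have := ht.2
  have := K.coe_nonneg
  nlinarith

lemma SolvesOn.reverse {f : ℝ → E → E} {x : ℝ → E} (hx : SolvesOn f x) :
    SolvesOn (fun t y => -f (1 - t) y) (fun t => x (1 - t)) :=
  fun _ ht => unit_reverse (hx _ (unit_reverse_mem ht))

/-- Lipschitz dependence of solutions on the value at time `1`. -/
lemma SolvesOn.dist_le_one {f : ℝ → E → E} {K : ℝ≥0}
    (hf : ∀ t ∈ Icc (0 : ℝ) 1, LipschitzWith K (f t)) {x y : ℝ → E}
    (hx : SolvesOn f x) (hy : SolvesOn f y) {t : ℝ} (ht : t ∈ Icc (0 : ℝ) 1) :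
    ‖x t - y t‖ ≤ Real.exp K * ‖x 1 - y 1‖ := by
  have h := SolvesOn.dist_le_zero (K := K)
    (fun _ ht => (hf _ (unit_reverse_mem ht)).neg) hx.reverse hy.reverse (unit_reverse_mem ht)
  simpa using h

lemma exists_solvesOn_of_bounded [CompleteSpace E] {f : ℝ → E → E} {K : ℝ≥0} {L : ℝ}
    (hf : ∀ t ∈ Icc (0 : ℝ) 1, LipschitzWith K (f t))
    (hc : ∀ x, ContinuousOn (fun t => f t x) (Icc 0 1))
    (hL : ∀ t ∈ Icc (0 : ℝ) 1, ∀ x, ‖f t x‖ ≤ L) {t₀ : ℝ} (ht₀ : t₀ ∈ Icc (0 : ℝ) 1) (x₀ : E) :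
    ∃ x, SolvesOn f x ∧ x t₀ = x₀ := by
  have hL0 : 0 ≤ L := (norm_nonneg _).trans (hL t₀ ht₀ x₀)
  have hp : IsPicardLindelof f (⟨t₀, ht₀⟩ : Icc (0 : ℝ) 1) x₀ (L.toNNReal) 0 (L.toNNReal) K :=
    { lipschitzOnWith := fun t ht => (hf t ht).lipschitzOnWith
      continuousOn := fun x _ => hc x
      norm_le := fun t ht x _ => by rw [Real.coe_toNNReal _ hL0]; exact hL t ht x
      mul_max_le := by
        rw [Real.coe_toNNReal _ hL0]
        simp only [NNReal.coe_zero, sub_zero]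
        exact mul_le_of_le_one_right hL0
          (max_le (by linarith [ht₀.1]) (by linarith [ht₀.2])) }
  obtain ⟨x, hx0, hx⟩ := hp.exists_eq_forall_mem_Icc_hasDerivWithinAt₀
  exact ⟨x, hx, hx0⟩

/-- Global existence for a globally Lipschitz field: the field composed with a radial retraction
is bounded, and Grönwall's inequality keeps its solution in the ball where nothing was changed. -/
lemma exists_solvesOn [CompleteSpace E] {f : ℝ → E → E} {K : ℝ≥0}
    (hf : ∀ t ∈ Icc (0 : ℝ) 1, LipschitzWith K (f t))
    (hc : ∀ x, ContinuousOn (fun t => f t x) (Icc 0 1)) (x₀ : E) :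
    ∃ x, SolvesOn f x ∧ x 0 = x₀ := by
  obtain ⟨c, hc0⟩ := isCompact_Icc.exists_bound_of_continuousOn (hc 0)
  have hc0' : 0 ≤ c := (norm_nonneg _).trans (hc0 0 ⟨le_rfl, zero_le_one⟩)
  have hgrow : ∀ t ∈ Icc (0 : ℝ) 1, ∀ x, ‖f t x‖ ≤ K * ‖x‖ + c := fun t ht x => by
    have h1 := (hf t ht).dist_le_mul x 0
    rw [dist_eq_norm, dist_eq_norm, sub_zero] at h1
    have h2 := norm_add_le (f t x - f t 0) (f t 0)
    rw [sub_add_cancel] at h2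
    linarith [hc0 t ht]
  set R := gronwallBound ‖x₀‖ K c 1 + 1 with hR
  have hmono := gronwallBound_mono (norm_nonneg x₀) hc0' K.coe_nonneg
  have hR0 : 0 < R := by
    have := hmono (zero_le_one (α := ℝ))
    rw [gronwallBound_x0] at this
    have h0 := norm_nonneg x₀
    rw [hR]
    linarith
  obtain ⟨x, hx, hx0⟩ := exists_solvesOn_of_bounded (f := fun t x => f t (radialRetract R x))
    (K := K * 2) (L := K * R + c)
    (fun t ht => (hf t ht).comp (lipschitzWith_radialRetract hR0)) (fun x => hc _)
    (fun t ht x => (hgrow t ht _).trans (by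
      gcongr
      exact norm_radialRetract_le hR0 x)) (t₀ := 0) ⟨le_rfl, zero_le_one⟩ x₀
  refine ⟨x, fun t ht => ?_, hx0⟩
  have hb : ‖x t‖ ≤ R := by
    have h1 := norm_le_gronwallBound_of_norm_deriv_right_le (K := K) (ε := c) (δ := ‖x₀‖)
      hx.continuousOn (fun t ht => (hx t (Ico_subset_Icc_self ht)).Ici_of_unit ht) (by rw [hx0])
      (fun t ht => (hgrow t (Ico_subset_Icc_self ht) _).trans (by
        gcongr
        exact norm_radialRetract_le_self hR0 _)) t ht
    have h2 := hmono (show t - 0 ≤ 1 by linarith [ht.2])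
    rw [hR]
    linarith
  have := hx t ht
  simpa only [radialRetract_of_le hR0 hb] using this

/-- A function whose derivative is nonnegative on `[a, b] ⊆ [0, 1]` satisfies `g a ≤ g b`. -/
lemma le_of_deriv_nonneg {g g' : ℝ → ℝ} {a b : ℝ} (ha : 0 ≤ a) (hab : a ≤ b) (hb : b ≤ 1)
    (hg : ∀ t ∈ Icc a b, HasDerivWithinAt g (g' t) (Icc 0 1) t)
    (hg' : ∀ t ∈ Icc a b, 0 ≤ g' t) : g a ≤ g b := by
  have hsub : Icc a b ⊆ Icc 0 1 := Icc_subset_Icc ha hb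
  refine monotoneOn_of_hasDerivWithinAt_nonneg (convex_Icc a b)
    (fun t ht => ((hg t ht).mono hsub).continuousWithinAt) (f' := g')
    (fun t ht => ?_) (fun t ht => hg' t (interior_subset ht))
    (left_mem_Icc.2 hab) (right_mem_Icc.2 hab) hab
  exact (hg t (interior_subset ht)).mono (interior_subset.trans hsub)

/-- A function on the unit interval with vanishing derivative is constant. -/
lemma eq_of_deriv_zero {g : ℝ → E} (hg : ∀ t ∈ Icc (0 : ℝ) 1, HasDerivWithinAt g 0 (Icc 0 1) t)
    {t : ℝ} (ht : t ∈ Icc (0 : ℝ) 1) : g t = g 0 := by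
  have h := SolvesOn.dist_le_zero (f := fun _ _ => (0 : E)) (K := 0)
    (fun t _ => LipschitzWith.const _) (x := g) (y := fun _ => g 0) hg
    (fun t _ => hasDerivWithinAt_const _ _ _) ht
  simpa [sub_eq_zero] using h

end ODE

/-! ### Matrix calculus -/

section PsdFactor

open scoped MatrixOrder ComplexOrder Matrix.Norms.L2Operator

lemma psd_factor {n : ℕ} {A : Matrix (Fin n) (Fin n) ℝ} (hA : A.PosSemidef) :
    ∃ L : Matrix (Fin n) (Fin n) ℝ, L * Lᵀ = A := by
  obtain ⟨B, hB⟩ := CStarAlgebra.nonneg_iff_eq_star_mul_self.mp hA.nonneg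
  refine ⟨Bᵀ, ?_⟩
  rw [hB, transpose_transpose, star_eq_conjTranspose, conjTranspose_eq_transpose_of_trivial]

end PsdFactor

section MatrixCalculus

open Set
open scoped NNReal

attribute [local instance] Matrix.frobeniusNormedAddCommGroup Matrix.frobeniusNormedSpace
  Matrix.frobeniusNormedRing Matrix.frobeniusNormedAlgebra

variable {n p q : ℕ}

lemma HasDerivWithinAt.linearMap {F : Type*} [NormedAddCommGroup F] [NormedSpace ℝ F]
    (l : Matrix (Fin n) (Fin p) ℝ →ₗ[ℝ] F) {X : ℝ → Matrix (Fin n) (Fin p) ℝ}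
    {X' : Matrix (Fin n) (Fin p) ℝ} {s : Set ℝ} {t : ℝ} (h : HasDerivWithinAt X X' s t) :
    HasDerivWithinAt (fun t => l (X t)) (l X') s t :=
  (LinearMap.toContinuousLinearMap l).hasFDerivAt.comp_hasDerivWithinAt t h

lemma HasDerivWithinAt.mtrace {X : ℝ → Matrix (Fin n) (Fin n) ℝ}
    {X' : Matrix (Fin n) (Fin n) ℝ} {s : Set ℝ} {t : ℝ} (h : HasDerivWithinAt X X' s t) :
    HasDerivWithinAt (fun t => (X t).trace) X'.trace s t :=
  HasDerivWithinAt.linearMap (traceLinearMap (Fin n) ℝ ℝ) h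

lemma HasDerivWithinAt.mtranspose {X : ℝ → Matrix (Fin n) (Fin p) ℝ}
    {X' : Matrix (Fin n) (Fin p) ℝ} {s : Set ℝ} {t : ℝ} (h : HasDerivWithinAt X X' s t) :
    HasDerivWithinAt (fun t => (X t)ᵀ) X'ᵀ s t :=
  HasDerivWithinAt.linearMap (transposeLinearEquiv (Fin n) (Fin p) ℝ ℝ).toLinearMap h

lemma hasDerivWithinAt_matrix {X : ℝ → Matrix (Fin n) (Fin p) ℝ}
    {X' : Matrix (Fin n) (Fin p) ℝ} {s : Set ℝ} {t : ℝ} :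
    HasDerivWithinAt X X' s t ↔ ∀ i j, HasDerivWithinAt (fun τ => X τ i j) (X' i j) s t := by
  constructor
  · intro h i j
    exact HasDerivWithinAt.linearMap (Matrix.entryLinearMap ℝ ℝ i j) h
  · intro h
    have h1 : HasDerivWithinAt (fun τ => ∑ i, ∑ j, X τ i j • Matrix.single i j (1 : ℝ))
        (∑ i, ∑ j, X' i j • Matrix.single i j (1 : ℝ)) s t :=
      HasDerivWithinAt.fun_sum fun i _ => HasDerivWithinAt.fun_sum fun j _ =>
        (h i j).smul_const _
    have e : ∀ Y : Matrix (Fin n) (Fin p) ℝ, ∑ i, ∑ j, Y i j • Matrix.single i j (1 : ℝ) = Y := by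
      intro Y
      conv_rhs => rw [matrix_eq_sum_single Y]
      simp
    simpa only [e] using h1

lemma abs_trace_le (n : ℕ) :
    ∃ c : ℝ, 0 < c ∧ ∀ X : Matrix (Fin n) (Fin n) ℝ, |X.trace| ≤ c * ‖X‖ :=
  SemilinearMapClass.bound_of_continuous (traceLinearMap (Fin n) ℝ ℝ)
    (LinearMap.continuous_of_finiteDimensional _)

lemma psd_symm {A : Matrix (Fin n) (Fin n) ℝ} (hA : A.PosSemidef) : Aᵀ = A := by
  simpa using hA.1.eq

lemma psd_conj {A : Matrix (Fin n) (Fin n) ℝ} (hA : A.PosSemidef)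
    (X : Matrix (Fin p) (Fin n) ℝ) : (X * A * Xᵀ).PosSemidef := by
  simpa using hA.mul_mul_conjTranspose_same X

lemma trace_mul_psd {A B : Matrix (Fin n) (Fin n) ℝ} (hA : A.PosSemidef) (hB : B.PosSemidef) :
    0 ≤ (A * B).trace := by
  obtain ⟨L, rfl⟩ := psd_factor hB
  have := (psd_conj hA Lᵀ).trace_nonneg
  rw [transpose_transpose, mul_assoc, Matrix.trace_mul_comm] at this
  rwa [← mul_assoc]

lemma psd_of_trace {A : Matrix (Fin n) (Fin n) ℝ} (hA : Aᵀ = A)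
    (h : ∀ Z : Matrix (Fin n) (Fin n) ℝ, Z.PosSemidef → 0 ≤ (A * Z).trace) : A.PosSemidef := by
  refine .of_dotProduct_mulVec_nonneg (by simpa [IsHermitian] using hA) fun x => ?_
  have h1 := h _ (posSemidef_vecMulVec_self_star x)
  rwa [mul_vecMulVec, trace_vecMulVec, dotProduct_comm] at h1

/-- Positive definite matrices are stable under small symmetric perturbations. -/
lemma posDef_perturb {A : Matrix (Fin n) (Fin n) ℝ} (hA : A.PosDef) :
    ∃ ε > 0, ∀ T : Matrix (Fin n) (Fin n) ℝ, Tᵀ = T → ‖T‖ ≤ ε → (A + T).PosDef := by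
  obtain ⟨L, hL⟩ := psd_factor hA.posSemidef
  have hu : IsUnit L := by
    have := hA.isUnit
    rw [← hL] at this
    exact isUnit_of_mul_isUnit_left this
  obtain ⟨c, hc0, hc⟩ := abs_trace_le n
  set W := L⁻¹ with hW
  have hLW : L * W = 1 := mul_nonsing_inv _ ((isUnit_iff_isUnit_det _).1 hu)
  set m := c * (‖W‖ * ‖W‖) + 1 with hm
  have hm0 : 0 < m := by positivity
  refine ⟨1 / (2 * m), by positivity, fun T hT hTn => ?_⟩
  refine .of_dotProduct_mulVec_pos ?_ fun x hx => ?_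
  · have := psd_symm hA.posSemidef
    simp [IsHermitian, this, hT]
  set y := Lᵀ *ᵥ x with hy
  have hxy : x = Wᵀ *ᵥ y := by
    rw [hy, mulVec_mulVec, ← transpose_mul, hLW, transpose_one, one_mulVec]
  have hy0 : y ≠ 0 := fun h => hx (by rw [hxy, h, mulVec_zero])
  set r := ‖WithLp.toLp 2 y‖ with hr
  have hr0 : 0 < r := by
    rw [hr, norm_pos_iff]
    simpa using hy0
  have hyy : y ⬝ᵥ y = r * r := by
    rw [hr, ← real_inner_self_eq_norm_mul_norm, EuclideanSpace.inner_toLp_toLp]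
    simp
  have hA' : x ⬝ᵥ A *ᵥ x = y ⬝ᵥ y := by
    rw [← hL, ← mulVec_mulVec, dotProduct_mulVec, ← mulVec_transpose]
  have hT' : x ⬝ᵥ T *ᵥ x = ((W * T * Wᵀ) * vecMulVec y y).trace := by
    rw [mul_vecMulVec, trace_vecMulVec, ← mulVec_mulVec, ← mulVec_mulVec, ← hxy,
      dotProduct_comm (W *ᵥ _), dotProduct_mulVec y, ← mulVec_transpose, ← hxy]
  have hv : ‖vecMulVec y y‖ ≤ r * r := by
    rw [vecMulVec_eq Unit]
    refine (frobenius_norm_mul _ _).trans ?_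
    rw [frobenius_norm_replicateCol, frobenius_norm_replicateRow]
  have hS : ‖W * T * Wᵀ‖ ≤ ‖W‖ * ‖W‖ * (1 / (2 * m)) := by
    refine (frobenius_norm_mul _ _).trans ?_
    rw [frobenius_norm_transpose]
    have := mul_le_mul_of_nonneg_right ((frobenius_norm_mul W T).trans
      (mul_le_mul_of_nonneg_left hTn (norm_nonneg W))) (norm_nonneg W)
    linarith
  have hb : |x ⬝ᵥ T *ᵥ x| ≤ 1 / 2 * (r * r) := by
    rw [hT']
    refine (hc _).trans ?_
    have h1 : ‖W * T * Wᵀ * vecMulVec y y‖ ≤ ‖W‖ * ‖W‖ * (1 / (2 * m)) * (r * r) :=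
      (frobenius_norm_mul _ _).trans (mul_le_mul hS hv (norm_nonneg _) (by positivity))
    have h2 : c * (‖W‖ * ‖W‖) * (1 / (2 * m)) ≤ 1 / 2 := by
      rw [mul_one_div, div_le_iff₀ (by positivity)]
      linarith
    have h3 := mul_le_mul_of_nonneg_left h1 hc0.le
    have h4 := mul_le_mul_of_nonneg_right h2 (mul_self_nonneg r)
    linarith
  rw [star_trivial, add_mulVec, dotProduct_add, hA', hyy]
  have := (abs_le.1 hb).1
  nlinarith

/-- The fundamental matrix of a linear equation together with its inverse. -/
lemma exists_fundamental {L : ℝ → Matrix (Fin n) (Fin n) ℝ} (hL : ContinuousOn L (Icc 0 1)) :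
    ∃ Φ W : ℝ → Matrix (Fin n) (Fin n) ℝ, SolvesOn (fun t X => L t * X) Φ ∧
      SolvesOn (fun t X => -(X * L t)) W ∧ Φ 0 = 1 ∧ W 0 = 1 ∧
      ∀ t ∈ Icc (0 : ℝ) 1, W t * Φ t = 1 ∧ Φ t * W t = 1 := by
  obtain ⟨c, hc⟩ := isCompact_Icc.exists_bound_of_continuousOn hL
  have hc0 : 0 ≤ c := (norm_nonneg _).trans (hc 0 ⟨le_rfl, zero_le_one⟩)
  obtain ⟨Φ, hΦ, hΦ0⟩ := exists_solvesOn (f := fun t X => L t * X) (K := c.toNNReal)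
    (fun t ht => LipschitzWith.of_dist_le_mul fun X Y => by
      rw [dist_eq_norm, dist_eq_norm, ← mul_sub, Real.coe_toNNReal _ hc0]
      exact (norm_mul_le _ _).trans (mul_le_mul_of_nonneg_right (hc t ht) (norm_nonneg _)))
    (fun X => hL.mul continuousOn_const) 1
  obtain ⟨W, hW, hW0⟩ := exists_solvesOn (f := fun t X => -(X * L t)) (K := c.toNNReal)
    (fun t ht => LipschitzWith.of_dist_le_mul fun X Y => by
      rw [dist_neg_neg, dist_eq_norm, dist_eq_norm, ← sub_mul, Real.coe_toNNReal _ hc0,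
        mul_comm c]
      exact (norm_mul_le _ _).trans (mul_le_mul_of_nonneg_left (hc t ht) (norm_nonneg _)))
    (fun X => (continuousOn_const.mul hL).neg) 1
  refine ⟨Φ, W, hΦ, hW, hΦ0, hW0, fun t ht => ?_⟩
  have h1 : W t * Φ t = W 0 * Φ 0 := eq_of_deriv_zero (g := fun t => W t * Φ t) (fun t ht => by
    have := (hW t ht).mul (hΦ t ht)
    rwa [neg_mul, mul_assoc, neg_add_cancel] at this) ht
  rw [hW0, hΦ0, one_mul] at h1
  exact ⟨h1, mul_eq_one_comm.1 h1⟩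

/-- A matrix function with positive semidefinite derivative increases in the Loewner order,
tested against positive semidefinite matrices. -/
lemma trace_mono {Y Y' : ℝ → Matrix (Fin n) (Fin n) ℝ} {a b : ℝ} (ha : 0 ≤ a) (hab : a ≤ b)
    (hb : b ≤ 1) (hY : ∀ t ∈ Icc (0 : ℝ) 1, HasDerivWithinAt Y (Y' t) (Icc 0 1) t)
    (hY' : ∀ t ∈ Icc (0 : ℝ) 1, (Y' t).PosSemidef) {Z : Matrix (Fin n) (Fin n) ℝ}
    (hZ : Z.PosSemidef) : (Y a * Z).trace ≤ (Y b * Z).trace :=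
  le_of_deriv_nonneg ha hab hb (g := fun t => (Y t * Z).trace)
    (fun t ht => ((hY t ⟨ha.trans ht.1, ht.2.trans hb⟩).mul_const Z).mtrace)
    (fun t ht => trace_mul_psd (hY' t ⟨ha.trans ht.1, ht.2.trans hb⟩) hZ)

lemma hasDerivAt_integral {E : Type*} [NormedAddCommGroup E] [NormedSpace ℝ E] [CompleteSpace E]
    {f : ℝ → E} (hf : Continuous f) (a t : ℝ) :
    HasDerivAt (fun u => ∫ s in a..u, f s) (f t) t :=
  (hf.integral_hasStrictDerivAt a t).hasDerivAt

lemma integral_psd {N : ℝ → Matrix (Fin n) (Fin n) ℝ} (hN : Continuous N)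
    (hpsd : ∀ t, (N t).PosSemidef) {a b : ℝ} (ha : 0 ≤ a) (hab : a ≤ b) (hb : b ≤ 1) :
    (∫ s in a..b, N s).PosSemidef := by
  refine psd_of_trace ?_ fun Z hZ => ?_
  · have := (LinearMap.toContinuousLinearMap
      (transposeLinearEquiv (Fin n) (Fin n) ℝ ℝ).toLinearMap).intervalIntegral_comp_comm
      (hN.intervalIntegrable (μ := MeasureTheory.volume) a b)
    refine this.symm.trans ?_
    congr 1
    ext1 s
    exact psd_symm (hpsd s)
  · have := trace_mono ha hab hb (Y := fun t => ∫ s in a..t, N s) (Y' := N)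
      (fun t _ => (hasDerivAt_integral hN a t).hasDerivWithinAt) (fun t _ => hpsd t) hZ
    simpa using this

end MatrixCalculus

/-! ### The driftless system: uniqueness -/

section Driftless

open Set
open scoped NNReal

attribute [local instance] Matrix.frobeniusNormedAddCommGroup Matrix.frobeniusNormedSpace
  Matrix.frobeniusNormedRing Matrix.frobeniusNormedAlgebra

variable {n : ℕ} {M Q N : ℝ → Matrix (Fin n) (Fin n) ℝ}

/-- `P` is a symmetric solution of `P' = P M P - Q` on the unit interval. -/
def IsRiccati (M Q P : ℝ → Matrix (Fin n) (Fin n) ℝ) : Prop :=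
  (∀ t ∈ Icc (0 : ℝ) 1, (P t)ᵀ = P t) ∧ SolvesOn (fun t X => X * M t * X - Q t) P

/-- `S` solves `S' = -M P S - S P M + N` on the unit interval. -/
def IsLyapunov (M N P S : ℝ → Matrix (Fin n) (Fin n) ℝ) : Prop :=
  SolvesOn (fun t X => -(M t * P t * X) - X * (P t * M t) + N t) S

/-- Nondegeneracy of `M` on every subinterval: no nonzero constant vector is annihilated by `M`
throughout a nontrivial subinterval of `[0, 1]`. -/
def NowhereDegenerate (M : ℝ → Matrix (Fin n) (Fin n) ℝ) : Prop :=
  ∀ a b : ℝ, 0 ≤ a → a < b → b ≤ 1 → ∀ v : Fin n → ℝ, (∀ t ∈ Icc a b, M t *ᵥ v = 0) → v = 0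

lemma lyapunov_lipschitz (hM : Continuous M) {P : ℝ → Matrix (Fin n) (Fin n) ℝ}
    (hP : ContinuousOn P (Icc 0 1)) :
    ∃ K : ℝ≥0, ∀ t ∈ Icc (0 : ℝ) 1, LipschitzWith K
      (fun X : Matrix (Fin n) (Fin n) ℝ => -(M t * P t * X) - X * (P t * M t) + N t) := by
  obtain ⟨c, hc⟩ := isCompact_Icc.exists_bound_of_continuousOn (hM.continuousOn.mul hP)
  obtain ⟨d, hd⟩ := isCompact_Icc.exists_bound_of_continuousOn (hP.mul hM.continuousOn)
  have hc0 : 0 ≤ c := (norm_nonneg _).trans (hc 0 ⟨le_rfl, zero_le_one⟩)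
  have hd0 : 0 ≤ d := (norm_nonneg _).trans (hd 0 ⟨le_rfl, zero_le_one⟩)
  refine ⟨(c + d).toNNReal, fun t ht => LipschitzWith.of_dist_le_mul fun X Y => ?_⟩
  rw [dist_eq_norm, dist_eq_norm, Real.coe_toNNReal _ (add_nonneg hc0 hd0)]
  have e : -(M t * P t * X) - X * (P t * M t) + N t - (-(M t * P t * Y) - Y * (P t * M t) + N t)
      = -(M t * P t * (X - Y) + (X - Y) * (P t * M t)) := by
    noncomm_ring
  rw [e, norm_neg]
  have h1 := (norm_mul_le (M t * P t) (X - Y)).trans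
    (mul_le_mul_of_nonneg_right (hc t ht) (norm_nonneg _))
  have h2 := (norm_mul_le (X - Y) (P t * M t)).trans
    (mul_le_mul_of_nonneg_left (hd t ht) (norm_nonneg _))
  have h3 := norm_add_le (M t * P t * (X - Y)) ((X - Y) * (P t * M t))
  linarith

/-- Conjugating `S` by the inverse fundamental matrix of `-M P` turns the Lyapunov equation into
`Y' = W N Wᵀ`, so positive definiteness propagates from time `0`. -/
lemma lyapunov_posDef (hM : Continuous M) (hMpsd : ∀ t, (M t).PosSemidef)
    (hNpsd : ∀ t, (N t).PosSemidef) {P S : ℝ → Matrix (Fin n) (Fin n) ℝ}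
    (hP : IsRiccati M Q P) (hS : IsLyapunov M N P S) (hS0 : (S 0).PosDef) :
    ∀ t ∈ Icc (0 : ℝ) 1, (S t).PosDef := by
  obtain ⟨Φ, W, hΦ, hW, hΦ0, hW0, hWΦ⟩ := exists_fundamental (L := fun t => -(M t * P t))
    ((hM.continuousOn.mul hP.2.continuousOn).neg)
  have hY : ∀ t ∈ Icc (0 : ℝ) 1, HasDerivWithinAt (fun t => W t * S t * (W t)ᵀ)
      (W t * N t * (W t)ᵀ) (Icc 0 1) t := by
    intro t ht
    have h1 := ((hW t ht).mul (hS t ht)).mul (hW t ht).mtranspose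
    refine h1.congr_deriv ?_
    have e : (-(W t * -(M t * P t)))ᵀ = P t * M t * (W t)ᵀ := by
      rw [mul_neg, neg_neg, transpose_mul, transpose_mul, hP.1 t ht, psd_symm (hMpsd t)]
    simp only [Pi.mul_apply]
    rw [e]
    noncomm_ring
  have hYpsd : ∀ t ∈ Icc (0 : ℝ) 1, (W t * N t * (W t)ᵀ).PosSemidef :=
    fun t _ => psd_conj (hNpsd t) _
  intro t ht
  have hsymm : (W t * S t * (W t)ᵀ)ᵀ = W t * S t * (W t)ᵀ := by
    have h := eq_of_deriv_zero (g := fun t => (W t * S t * (W t)ᵀ)ᵀ - W t * S t * (W t)ᵀ)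
      (fun t ht => by
        refine ((hY t ht).mtranspose.sub (hY t ht)).congr_deriv ?_
        rw [psd_symm (hYpsd t ht), sub_self]) ht
    simp only [hW0, transpose_one, mul_one, one_mul, psd_symm hS0.posSemidef, sub_self] at h
    exact sub_eq_zero.1 h
  have hpsd : (W t * S t * (W t)ᵀ - S 0).PosSemidef := by
    refine psd_of_trace ?_ fun Z hZ => ?_
    · rw [transpose_sub, hsymm, psd_symm hS0.posSemidef]
    · have := trace_mono le_rfl ht.1 ht.2 hY hYpsd hZ
      simp only [hW0, transpose_one, mul_one, one_mul] at this
      rw [sub_mul, trace_sub]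
      linarith
  have hYpd : (W t * S t * (W t)ᵀ).PosDef := by
    have := hS0.add_posSemidef hpsd
    rwa [add_sub_cancel] at this
  have hST : S t = Φ t * (W t * S t * (W t)ᵀ) * (Φ t)ᴴ := by
    have h1 := (hWΦ t ht).2
    have h2 : (W t)ᵀ * (Φ t)ᵀ = 1 := by rw [← transpose_mul, h1, transpose_one]
    rw [conjTranspose_eq_transpose_of_trivial]
    calc S t = (Φ t * W t) * S t * ((W t)ᵀ * (Φ t)ᵀ) := by rw [h1, h2, one_mul, mul_one]
      _ = _ := by noncomm_ring
  rw [hST]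
  refine hYpd.mul_mul_conjTranspose_same ?_
  intro u v huv
  have h1 := congrArg (fun u => u ᵥ* W t) huv
  simpa [vecMul_vecMul, (hWΦ t ht).2] using h1

/-- The difference of two Riccati solutions tested against a solution of the Lyapunov equation of
one of them. -/
lemma cross_deriv {P P' S : ℝ → Matrix (Fin n) (Fin n) ℝ} (hP : IsRiccati M Q P)
    (hP' : IsRiccati M Q P') (hS : IsLyapunov M N P S) {t : ℝ} (ht : t ∈ Icc (0 : ℝ) 1) :
    HasDerivWithinAt (fun t => ((P' t - P t) * S t).trace)
      (((P' t - P t) * M t * (P' t - P t) * S t).trace + ((P' t - P t) * N t).trace)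
      (Icc 0 1) t := by
  refine (((hP'.2 t ht).sub (hP.2 t ht)).mul (hS t ht)).mtrace.congr_deriv ?_
  have e : ((P' t - P t) * S t * (P t * M t)).trace
      = (P t * M t * ((P' t - P t) * S t)).trace := Matrix.trace_mul_comm _ _
  have e2 : (P' t * M t * P' t - Q t - (P t * M t * P t - Q t)) * S t
      + (P' t - P t) * (-(M t * P t * S t) - S t * (P t * M t) + N t)
      = (P' t - P t) * M t * (P' t - P t) * S t + P t * M t * ((P' t - P t) * S t)
        - (P' t - P t) * S t * (P t * M t) + (P' t - P t) * N t := by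
    noncomm_ring
  simp only [Pi.sub_apply]
  rw [e2, trace_add, trace_sub, trace_add, e]
  ring

lemma eq_zero_of_trace_mul_posDef {A S : Matrix (Fin n) (Fin n) ℝ} (hA : A.PosSemidef)
    (hS : S.PosDef) (h : (A * S).trace = 0) : A = 0 := by
  obtain ⟨L, hL⟩ := psd_factor hS.posSemidef
  have hu : IsUnit L := by
    have := hS.isUnit
    rw [← hL] at this
    exact isUnit_of_mul_isUnit_left this
  have h1 : Lᵀ * A * Lᵀᵀ = 0 := by
    rw [← (psd_conj hA Lᵀ).trace_eq_zero_iff, transpose_transpose, mul_assoc,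
      Matrix.trace_mul_comm, mul_assoc, hL, h]
  rw [transpose_transpose] at h1
  have h2 := hu.mul_left_eq_zero.1 h1
  have hu' : IsUnit Lᵀ := by rwa [isUnit_transpose]
  exact hu'.mul_right_eq_zero.1 h2

lemma mul_eq_zero_of_conj {A D : Matrix (Fin n) (Fin n) ℝ} (hA : A.PosSemidef) (hD : Dᵀ = D)
    (h : D * A * D = 0) : A * D = 0 := by
  obtain ⟨L, rfl⟩ := psd_factor hA
  have h1 : (D * L) * (D * L)ᴴ = 0 := by
    rw [conjTranspose_eq_transpose_of_trivial, transpose_mul, hD, ← h]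
    noncomm_ring
  have h2 := self_mul_conjTranspose_eq_zero.1 h1
  have h3 : Lᵀ * D = 0 := by rw [← hD, ← transpose_mul, h2, transpose_zero]
  rw [mul_assoc, h3, mul_zero]

lemma driftless_unique (hM : Continuous M) (hMpsd : ∀ t, (M t).PosSemidef)
    (hNpsd : ∀ t, (N t).PosSemidef) (hH : NowhereDegenerate M)
    {P₁ S₁ P₂ S₂ : ℝ → Matrix (Fin n) (Fin n) ℝ}
    (hP₁ : IsRiccati M Q P₁) (hS₁ : IsLyapunov M N P₁ S₁)
    (hP₂ : IsRiccati M Q P₂) (hS₂ : IsLyapunov M N P₂ S₂)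
    (h0 : S₁ 0 = S₂ 0) (h1 : S₁ 1 = S₂ 1) (hpd : (S₁ 0).PosDef) :
    ∀ t ∈ Icc (0 : ℝ) 1, P₁ t = P₂ t ∧ S₁ t = S₂ t := by
  have hpd1 := lyapunov_posDef hM hMpsd hNpsd hP₁ hS₁ hpd
  have hpd2 := lyapunov_posDef hM hMpsd hNpsd hP₂ hS₂ (h0 ▸ hpd)
  have hDsymm : ∀ t ∈ Icc (0 : ℝ) 1, (P₁ t - P₂ t)ᵀ = P₁ t - P₂ t := fun t ht => by
    rw [transpose_sub, hP₁.1 t ht, hP₂.1 t ht]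
  have hpsd : ∀ t ∈ Icc (0 : ℝ) 1, ((P₁ t - P₂ t) * M t * (P₁ t - P₂ t)).PosSemidef :=
    fun t ht => by
      have := psd_conj (hMpsd t) (P₁ t - P₂ t)
      rwa [hDsymm t ht] at this
  have hg : ∀ t ∈ Icc (0 : ℝ) 1,
      HasDerivWithinAt (fun t => ((P₁ t - P₂ t) * S₂ t).trace + ((P₂ t - P₁ t) * S₁ t).trace)
        (((P₁ t - P₂ t) * M t * (P₁ t - P₂ t) * S₂ t).trace
          + ((P₁ t - P₂ t) * M t * (P₁ t - P₂ t) * S₁ t).trace) (Icc 0 1) t := by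
    intro t ht
    refine ((cross_deriv hP₂ hP₁ hS₂ ht).add (cross_deriv hP₁ hP₂ hS₁ ht)).congr_deriv ?_
    have e : P₂ t - P₁ t = -(P₁ t - P₂ t) := by abel
    rw [e]
    simp only [neg_mul, mul_neg, neg_neg, trace_neg]
    ring
  set g := fun t => ((P₁ t - P₂ t) * S₂ t).trace + ((P₂ t - P₁ t) * S₁ t).trace with hgdef
  have hend : ∀ t, S₁ t = S₂ t → g t = 0 := by
    intro t h
    simp only [hgdef]
    rw [h, ← trace_add, ← add_mul]
    simp
  have hg0 : ∀ t ∈ Icc (0 : ℝ) 1, g t = 0 := by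
    intro t ht
    have hnn : ∀ t ∈ Icc (0 : ℝ) 1, 0 ≤ ((P₁ t - P₂ t) * M t * (P₁ t - P₂ t) * S₂ t).trace
          + ((P₁ t - P₂ t) * M t * (P₁ t - P₂ t) * S₁ t).trace := fun t ht =>
      add_nonneg (trace_mul_psd (hpsd t ht) (hpd2 t ht).posSemidef)
        (trace_mul_psd (hpsd t ht) (hpd1 t ht).posSemidef)
    have ha := le_of_deriv_nonneg le_rfl ht.1 ht.2
      (fun s hs => hg s ⟨hs.1, hs.2.trans ht.2⟩) (fun s hs => hnn s ⟨hs.1, hs.2.trans ht.2⟩)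
    have hb := le_of_deriv_nonneg ht.1 ht.2 le_rfl
      (fun s hs => hg s ⟨ht.1.trans hs.1, hs.2⟩) (fun s hs => hnn s ⟨ht.1.trans hs.1, hs.2⟩)
    rw [hend 0 h0] at ha
    rw [hend 1 h1] at hb
    exact le_antisymm hb ha
  have hMD : ∀ t ∈ Icc (0 : ℝ) 1, M t * (P₁ t - P₂ t) = 0 := by
    intro t ht
    have hz : HasDerivWithinAt g 0 (Icc 0 1) t :=
      (hasDerivWithinAt_const t (Icc (0 : ℝ) 1) (0 : ℝ)).congr hg0 (hg0 t ht)
    have := (uniqueDiffOn_Icc zero_lt_one t ht).eq_deriv _ (hg t ht) hz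
    have h2 := trace_mul_psd (hpsd t ht) (hpd2 t ht).posSemidef
    have h3 := trace_mul_psd (hpsd t ht) (hpd1 t ht).posSemidef
    exact mul_eq_zero_of_conj (hMpsd t) (hDsymm t ht)
      (eq_zero_of_trace_mul_posDef (hpsd t ht) (hpd1 t ht) (by linarith))
  have hDM : ∀ t ∈ Icc (0 : ℝ) 1, (P₁ t - P₂ t) * M t = 0 := fun t ht => by
    rw [← hDsymm t ht, ← psd_symm (hMpsd t), ← transpose_mul, hMD t ht, transpose_zero]
  have hconst : ∀ t ∈ Icc (0 : ℝ) 1, P₁ t - P₂ t = P₁ 0 - P₂ 0 := fun t ht =>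
    eq_of_deriv_zero (g := fun t => P₁ t - P₂ t) (fun t ht => by
      refine ((hP₁.2 t ht).sub (hP₂.2 t ht)).congr_deriv ?_
      have : P₁ t * M t * P₁ t - Q t - (P₂ t * M t * P₂ t - Q t)
          = (P₁ t - P₂ t) * M t * P₁ t + P₂ t * (M t * (P₁ t - P₂ t)) := by noncomm_ring
      rw [this, hMD t ht, hDM t ht, zero_mul, mul_zero, add_zero]) ht
  have hD0 : P₁ 0 - P₂ 0 = 0 := by
    ext i j
    have := hH 0 1 le_rfl zero_lt_one le_rfl (fun i => (P₁ 0 - P₂ 0) i j) (fun t ht => by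
      have h := hMD t ht
      rw [hconst t ht] at h
      ext i
      exact congrFun (congrFun h i) j)
    exact congrFun this i
  have hPP : ∀ t ∈ Icc (0 : ℝ) 1, P₁ t = P₂ t := fun t ht => by
    rw [← sub_eq_zero, hconst t ht, hD0]
  intro t ht
  refine ⟨hPP t ht, ?_⟩
  obtain ⟨K, hK⟩ := lyapunov_lipschitz (N := N) hM hP₁.2.continuousOn
  have hS₂' : SolvesOn (fun t X => -(M t * P₁ t * X) - X * (P₁ t * M t) + N t) S₂ :=
    fun t ht => by
      have := hS₂ t ht
      simp only [← hPP t ht] at this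
      exact this
  have := SolvesOn.dist_le_zero hK hS₁ hS₂' ht
  rw [h0, sub_self, norm_zero, mul_zero] at this
  exact sub_eq_zero.1 (norm_le_zero_iff.1 this)

end Driftless

/-! ### The driftless system: a priori estimates -/

section APriori

open Set
open scoped NNReal

attribute [local instance] Matrix.frobeniusNormedAddCommGroup Matrix.frobeniusNormedSpace
  Matrix.frobeniusNormedRing Matrix.frobeniusNormedAlgebra

variable {n : ℕ} {M Q N : ℝ → Matrix (Fin n) (Fin n) ℝ}

/-- The retraction of the real line onto the unit interval. -/
noncomputable def clamp (t : ℝ) : ℝ := projIcc (0 : ℝ) 1 zero_le_one t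

lemma clamp_mem (t : ℝ) : clamp t ∈ Icc (0 : ℝ) 1 := (projIcc (0 : ℝ) 1 zero_le_one t).2

lemma clamp_of_mem {t : ℝ} (ht : t ∈ Icc (0 : ℝ) 1) : clamp t = t := by
  rw [clamp, projIcc_of_mem zero_le_one ht]

lemma continuous_clamp : Continuous clamp := continuous_subtype_val.comp continuous_projIcc

lemma ContinuousOn.comp_clamp {E : Type*} [TopologicalSpace E] {f : ℝ → E}
    (hf : ContinuousOn f (Icc 0 1)) : Continuous fun t => f (clamp t) :=
  hf.comp_continuous continuous_clamp clamp_mem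

/-- The running cost `∫₀ᵗ tr (P N)`; clamping the argument of `P` makes the integrand continuous
on the whole line. -/
noncomputable def runCost (N P : ℝ → Matrix (Fin n) (Fin n) ℝ) (t : ℝ) : ℝ :=
  ∫ s in (0 : ℝ)..t, (P (clamp s) * N s).trace

/-- The functional `tr (P(1) Σ₁) - tr (P(0) Σ₀) - ∫₀¹ tr (P N)`. Its critical points among Riccati
solutions are those whose Lyapunov flow carries `Σ₀` to `Σ₁`. -/
noncomputable def dualCost (N : ℝ → Matrix (Fin n) (Fin n) ℝ) (S0 S1 : Matrix (Fin n) (Fin n) ℝ)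
    (P : ℝ → Matrix (Fin n) (Fin n) ℝ) : ℝ :=
  (P 1 * S1).trace - (P 0 * S0).trace - runCost N P 1

lemma runCost_zero (N P : ℝ → Matrix (Fin n) (Fin n) ℝ) : runCost N P 0 = 0 := by
  simp [runCost]

lemma hasDerivWithinAt_runCost (hN : Continuous N) {P : ℝ → Matrix (Fin n) (Fin n) ℝ}
    (hP : ContinuousOn P (Icc 0 1)) {t : ℝ} (ht : t ∈ Icc (0 : ℝ) 1) :
    HasDerivWithinAt (runCost N P) (P t * N t).trace (Icc 0 1) t := by
  have hc : Continuous fun s => (P (clamp s) * N s).trace :=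
    (hP.comp_clamp.mul hN).matrix_trace
  have := (hasDerivAt_integral hc 0 t).hasDerivWithinAt (s := Icc (0 : ℝ) 1)
  rwa [clamp_of_mem ht] at this

/-- Weak duality on `[a, b]`: transporting a covariance from `a` to `b` by the open-loop matrix
control `K` bounds the growth of `P` from `a` to `b`, uniformly in the Riccati solution `P`. -/
lemma weak_duality (hM : Continuous M) (hQ : Continuous Q) (hN : Continuous N)
    (hMpsd : ∀ t, (M t).PosSemidef) (hNpsd : ∀ t, (N t).PosSemidef)
    {a b : ℝ} (ha : 0 ≤ a) (hab : a ≤ b) (hb : b ≤ 1) (L K : Matrix (Fin n) (Fin n) ℝ) :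
    ∃ C : ℝ, ∀ P, IsRiccati M Q P →
      (P a * (L * Lᵀ)).trace ≤
        (P b * ((L + (∫ s in a..b, M s) * K) * (L + (∫ s in a..b, M s) * K)ᵀ
          + ∫ s in a..b, N s)).trace - (runCost N P b - runCost N P a) + C := by
  set G := fun t => ∫ s in a..t, M s with hG
  set V := fun t => ∫ s in a..t, N s with hV
  set X := fun t => L + G t * K with hX
  have hGd : ∀ t, HasDerivAt G (M t) t := fun t => hasDerivAt_integral hM a t
  have hVd : ∀ t, HasDerivAt V (N t) t := fun t => hasDerivAt_integral hN a t
  have hXd : ∀ t, HasDerivAt X (M t * K) t := fun t => ((hGd t).mul_const K).const_add L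
  have hXc : Continuous X := continuous_iff_continuousAt.2 fun t => (hXd t).continuousAt
  have hVc : Continuous V := continuous_iff_continuousAt.2 fun t => (hVd t).continuousAt
  set w := fun t => ((X t * (X t)ᵀ + V t) * Q t).trace + (Kᵀ * M t * K).trace with hw
  have hwc : Continuous w :=
    ((((hXc.matrix_mul hXc.matrix_transpose).add hVc).matrix_mul hQ).matrix_trace).add
      ((continuous_const.matrix_mul hM).matrix_mul continuous_const).matrix_trace
  refine ⟨∫ s in a..b, w s, fun P hP => ?_⟩
  have key := le_of_deriv_nonneg ha hab hb
    (g := fun t => (P t * (X t * (X t)ᵀ + V t)).trace - runCost N P t + ∫ s in a..t, w s)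
    (g' := fun t => (P t * M t * P t * V t).trace
      + ((K + P t * X t)ᵀ * M t * (K + P t * X t)).trace)
    (fun t ht => by
      have ht' : t ∈ Icc (0 : ℝ) 1 := ⟨ha.trans ht.1, ht.2.trans hb⟩
      have hXw := (hXd t).hasDerivWithinAt (s := Icc (0 : ℝ) 1)
      have h1 := (((hP.2 t ht').mul ((hXw.mul hXw.mtranspose).add
        (hVd t).hasDerivWithinAt)).mtrace.sub
        (hasDerivWithinAt_runCost hN hP.2.continuousOn ht')).add
        (hasDerivAt_integral hwc a t).hasDerivWithinAt
      refine h1.congr_deriv ?_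
      have hPs := hP.1 t ht'
      simp only [hw, Pi.add_apply, Pi.mul_apply, transpose_add, transpose_mul, hPs,
        psd_symm (hMpsd t), mul_add, add_mul, sub_mul, trace_add, trace_sub]
      have e1 : (P t * M t * P t * (X t * (X t)ᵀ)).trace
          = ((X t)ᵀ * P t * M t * (P t * X t)).trace := by
        rw [← mul_assoc, Matrix.trace_mul_comm]
        simp only [mul_assoc]
      have e2 : (P t * (M t * K * (X t)ᵀ)).trace = ((X t)ᵀ * P t * M t * K).trace := by
        rw [← mul_assoc, Matrix.trace_mul_comm]
        simp only [mul_assoc]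
      have e3 : (P t * (X t * (Kᵀ * M t))).trace = (Kᵀ * M t * (P t * X t)).trace := by
        rw [← mul_assoc, Matrix.trace_mul_comm]
      have e4 : (Q t * (X t * (X t)ᵀ)).trace = (X t * (X t)ᵀ * Q t).trace :=
        Matrix.trace_mul_comm _ _
      have e5 : (Q t * V t).trace = (V t * Q t).trace := Matrix.trace_mul_comm _ _
      rw [e1, e2, e3, e4, e5]
      ring)
    (fun t ht => by
      have ht' : t ∈ Icc (0 : ℝ) 1 := ⟨ha.trans ht.1, ht.2.trans hb⟩
      have h1 := psd_conj (hMpsd t) (P t)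
      rw [hP.1 t ht'] at h1
      refine add_nonneg (trace_mul_psd h1 (integral_psd hN hNpsd ha ht.1 ht'.2)) ?_
      simpa using (psd_conj (hMpsd t) (K + P t * X t)ᵀ).trace_nonneg)
  simp only [hX, hG, hV, intervalIntegral.integral_same, zero_mul, add_zero] at key
  linarith

/-- The Gramian of a nowhere degenerate `M` over a nontrivial interval is invertible. -/
lemma gramian_isUnit (hM : Continuous M) (hMpsd : ∀ t, (M t).PosSemidef)
    (hH : NowhereDegenerate M) {a b : ℝ} (ha : 0 ≤ a) (hab : a < b) (hb : b ≤ 1) :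
    IsUnit (∫ s in a..b, M s) := by
  rw [← mulVec_injective_iff_isUnit]
  refine (injective_iff_map_eq_zero (mulVecLin (∫ s in a..b, M s))).2 fun v hv => ?_
  refine hH a b ha hab hb v fun t ht => ?_
  have hv' : (∫ s in a..b, M s) *ᵥ v = 0 := hv
  set Z := vecMulVec v (star v) with hZ
  have hZpsd : Z.PosSemidef := posSemidef_vecMulVec_self_star v
  have hd : ∀ t, HasDerivAt (fun t => ∫ s in a..t, M s) (M t) t := hasDerivAt_integral hM a
  set g := fun t => ((∫ s in a..t, M s) * Z).trace with hg
  have hmono : ∀ x y, a ≤ x → x ≤ y → y ≤ b → g x ≤ g y := fun x y hx hxy hy =>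
    trace_mono (ha.trans hx) hxy (hy.trans hb) (fun t _ => (hd t).hasDerivWithinAt)
      (fun t _ => hMpsd t) hZpsd
  have hga : g a = 0 := by simp [hg]
  have hgb : g b = 0 := by
    simp only [hg, hZ, mul_vecMulVec, hv', zero_vecMulVec, trace_zero]
  have hg0 : ∀ t ∈ Icc a b, g t = 0 := fun t ht =>
    le_antisymm (hgb ▸ hmono t b ht.1 ht.2 le_rfl) (hga ▸ hmono a t le_rfl ht.1 ht.2)
  have hz : HasDerivWithinAt g 0 (Icc a b) t :=
    (hasDerivWithinAt_const t (Icc a b) (0 : ℝ)).congr hg0 (hg0 t ht)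
  have h1 : (M t * Z).trace = 0 := (uniqueDiffOn_Icc hab t ht).eq_deriv _
    (((hd t).hasDerivWithinAt.mul_const Z).mtrace) hz
  rw [hZ, mul_vecMulVec, trace_vecMulVec, dotProduct_comm] at h1
  exact ((hMpsd t).dotProduct_mulVec_zero_iff v).1 h1

/-- The functional `dualCost` controls every linear functional of the end values. The covariance
is first left alone until a time `τ` close to `1`, and then steered to its target, which the
invertible Gramian over `[τ, 1]` makes possible. -/
lemma coercive (hM : Continuous M) (hQ : Continuous Q) (hN : Continuous N)
    (hMpsd : ∀ t, (M t).PosSemidef) (hNpsd : ∀ t, (N t).PosSemidef)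
    (hH : NowhereDegenerate M) {S0 S1 : Matrix (Fin n) (Fin n) ℝ} (hS0 : S0.PosDef)
    (hS1 : S1.PosDef) {E0 E1 : Matrix (Fin n) (Fin n) ℝ} (hE0 : E0ᵀ = E0) (hE1 : E1ᵀ = E1) :
    ∃ ε > 0, ∃ C : ℝ, ∀ P, IsRiccati M Q P →
      ε * ((P 0 * E0).trace + (P 1 * E1).trace) ≤ dualCost N S0 S1 P + C := by
  obtain ⟨ε₀, hε₀, h0⟩ := posDef_perturb hS0
  obtain ⟨ε₁, hε₁, h1⟩ := posDef_perturb hS1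
  set ε := min (ε₀ / (‖E0‖ + 1)) (ε₁ / 2 / (‖E1‖ + 1)) with hε
  have hε_pos : 0 < ε := lt_min (by positivity) (by positivity)
  have hεE0 : ‖ε • E0‖ ≤ ε₀ := by
    rw [norm_smul, Real.norm_of_nonneg hε_pos.le]
    have h2 : ε ≤ ε₀ / (‖E0‖ + 1) := min_le_left _ _
    rw [le_div_iff₀ (by positivity)] at h2
    linarith
  have hεE1 : ‖ε • E1‖ ≤ ε₁ / 2 := by
    rw [norm_smul, Real.norm_of_nonneg hε_pos.le]
    have h2 : ε ≤ ε₁ / 2 / (‖E1‖ + 1) := min_le_right _ _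
    rw [le_div_iff₀ (by positivity)] at h2
    linarith
  obtain ⟨τ, hτ0, hτ1, hτN⟩ : ∃ τ : ℝ, 0 ≤ τ ∧ τ < 1 ∧ ‖∫ s in τ..1, N s‖ ≤ ε₁ / 2 := by
    have hc : ContinuousAt (fun u => ∫ s in (1 : ℝ)..u, N s) 1 :=
      (hasDerivAt_integral hN 1 1).continuousAt
    obtain ⟨δ, hδ, h⟩ := Metric.continuousAt_iff.1 hc (ε₁ / 2) (by positivity)
    refine ⟨1 - min 1 (δ / 2), by linarith [min_le_left 1 (δ / 2)], ?_, ?_⟩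
    · have : 0 < min 1 (δ / 2) := lt_min one_pos (by positivity)
      linarith
    · have h2 := h (x := 1 - min 1 (δ / 2)) (by
        have : 0 ≤ min 1 (δ / 2) := le_min zero_le_one (by positivity)
        rw [Real.dist_eq, sub_sub_cancel_left, abs_neg, abs_of_nonneg this]
        linarith [min_le_right 1 (δ / 2)])
      rw [dist_eq_norm, intervalIntegral.integral_same, sub_zero,
        intervalIntegral.integral_symm, norm_neg] at h2
      exact h2.le
  have hA := h0 (ε • E0) (by rw [transpose_smul, hE0]) hεE0
  have hNint := integral_psd hN hNpsd hτ0 hτ1.le le_rfl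
  have hB := h1 (-(ε • E1) - ∫ s in τ..1, N s)
    (by rw [transpose_sub, transpose_neg, transpose_smul, hE1, psd_symm hNint]) (by
      have := norm_sub_le (-(ε • E1)) (∫ s in τ..1, N s)
      rw [norm_neg] at this
      linarith)
  obtain ⟨L, hL⟩ := psd_factor hA.posSemidef
  obtain ⟨L₂, hL₂⟩ := psd_factor
    (hA.posSemidef.add (integral_psd hN hNpsd le_rfl hτ0 hτ1.le))
  obtain ⟨R, hR⟩ := psd_factor hB.posSemidef
  have hG := gramian_isUnit hM hMpsd hH hτ0 hτ1 le_rfl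
  obtain ⟨C₁, hC₁⟩ := weak_duality hM hQ hN hMpsd hNpsd le_rfl hτ0 hτ1.le L 0
  obtain ⟨C₂, hC₂⟩ := weak_duality hM hQ hN hMpsd hNpsd hτ0 hτ1.le le_rfl L₂
    ((∫ s in τ..1, M s)⁻¹ * (R - L₂))
  rw [mul_nonsing_inv_cancel_left _ _ ((isUnit_iff_isUnit_det _).1 hG)] at hC₂
  simp only [mul_zero, add_zero, hL, hL₂, add_sub_cancel, hR, runCost_zero, sub_zero] at hC₁ hC₂
  refine ⟨ε, hε_pos, C₁ + C₂, fun P hP => ?_⟩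
  have k1 := hC₁ P hP
  have k2 := hC₂ P hP
  simp only [mul_add, mul_sub, mul_neg, trace_add, trace_sub, trace_neg, mul_smul_comm,
    trace_smul, smul_eq_mul] at k1 k2
  simp only [dualCost]
  linarith

/-- A symmetric matrix is bounded in norm by bounds on its pairings with positive semidefinite
matrices. -/
lemma norm_bound_of_trace (b : Matrix (Fin n) (Fin n) ℝ → ℝ) :
    ∃ R : ℝ, ∀ P : Matrix (Fin n) (Fin n) ℝ, Pᵀ = P →
      (∀ Z : Matrix (Fin n) (Fin n) ℝ, Z.PosSemidef → |(P * Z).trace| ≤ b Z) → ‖P‖ ≤ R := by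
  set b' : Matrix (Fin n) (Fin n) ℝ → ℝ := fun E =>
    (b ((1 + E) * (1 + E)ᵀ) + b 1 + b (E * Eᵀ)) / 2 with hb'
  refine ⟨∑ i, ∑ j, b' (Matrix.single j i 1) * ‖Matrix.single i j (1 : ℝ)‖, fun P hP h => ?_⟩
  have hpsd : ∀ E : Matrix (Fin n) (Fin n) ℝ, (E * Eᵀ).PosSemidef := fun E => by
    simpa using posSemidef_self_mul_conjTranspose E
  have h1 : ∀ E : Matrix (Fin n) (Fin n) ℝ, |(P * E).trace| ≤ b' E := by
    intro E
    have e : (P * Eᵀ).trace = (P * E).trace := by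
      rw [← trace_transpose, transpose_mul, transpose_transpose, hP, Matrix.trace_mul_comm]
    have k1 := h _ (hpsd (1 + E))
    have k2 := h 1 PosSemidef.one
    have k3 := h _ (hpsd E)
    have e2 : (P * ((1 + E) * (1 + E)ᵀ)).trace
        = (P * 1).trace + 2 * (P * E).trace + (P * (E * Eᵀ)).trace := by
      have e3 : P * ((1 + E) * (1 + E)ᵀ) = P * 1 + P * E + P * Eᵀ + P * (E * Eᵀ) := by
        rw [transpose_add, transpose_one]
        noncomm_ring
      rw [e3, trace_add, trace_add, trace_add, e]
      ring
    rw [abs_le] at k1 k2 k3 ⊢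
    rw [hb']
    constructor <;> simp only <;> linarith [k1.1, k1.2, k2.1, k2.2, k3.1, k3.2]
  have e : ∑ i, ∑ j, P i j • Matrix.single i j (1 : ℝ) = P := by
    conv_rhs => rw [matrix_eq_sum_single P]
    simp
  rw [← e]
  refine (norm_sum_le _ _).trans (Finset.sum_le_sum fun i _ => (norm_sum_le _ _).trans
    (Finset.sum_le_sum fun j _ => ?_))
  rw [norm_smul]
  refine mul_le_mul_of_nonneg_right ?_ (norm_nonneg _)
  have := h1 (Matrix.single j i 1)
  simpa [trace_mul_single] using this

/-- Riccati solutions in a sublevel set of `dualCost` are uniformly bounded. -/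
lemma apriori_bound (hM : Continuous M) (hQ : Continuous Q) (hN : Continuous N)
    (hMpsd : ∀ t, (M t).PosSemidef) (hQpsd : ∀ t, (Q t).PosSemidef)
    (hNpsd : ∀ t, (N t).PosSemidef)
    (hH : NowhereDegenerate M) {S0 S1 : Matrix (Fin n) (Fin n) ℝ} (hS0 : S0.PosDef)
    (hS1 : S1.PosDef) (c : ℝ) :
    ∃ R : ℝ, ∀ P, IsRiccati M Q P → dualCost N S0 S1 P ≤ c →
      ∀ t ∈ Icc (0 : ℝ) 1, ‖P t‖ ≤ R := by
  have hb : ∀ E0 E1 : Matrix (Fin n) (Fin n) ℝ, ∃ b : ℝ, E0ᵀ = E0 → E1ᵀ = E1 →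
      ∀ P, IsRiccati M Q P → dualCost N S0 S1 P ≤ c →
        (P 0 * E0).trace + (P 1 * E1).trace ≤ b := by
    intro E0 E1
    by_cases h : E0ᵀ = E0 ∧ E1ᵀ = E1
    · obtain ⟨ε, hε, C, hC⟩ := coercive (Q := Q) hM hQ hN hMpsd hNpsd hH hS0 hS1 h.1 h.2
      refine ⟨(c + C) / ε, fun _ _ P hP hc => ?_⟩
      rw [le_div_iff₀ hε, mul_comm]
      linarith [hC P hP]
    · exact ⟨0, fun h0 h1 => (h ⟨h0, h1⟩).elim⟩
  choose b hb using hb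
  obtain ⟨R, hR⟩ := norm_bound_of_trace (n := n) (fun Z =>
    |b (-Z) 0| + |b 0 Z| + 2 * ((∫ s in (0 : ℝ)..1, Q s) * Z).trace)
  refine ⟨R, fun P hP hc t ht => hR _ (hP.1 t ht) fun Z hZ => ?_⟩
  have hZs := psd_symm hZ
  have k1 := hb (-Z) 0 (by rw [transpose_neg, hZs]) (transpose_zero) P hP hc
  have k2 := hb 0 Z (transpose_zero) hZs P hP hc
  rw [mul_neg, trace_neg, mul_zero, trace_zero, add_zero] at k1
  rw [mul_zero, trace_zero, zero_add] at k2
  have hd := hasDerivAt_integral hQ 0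
  have hY : ∀ t ∈ Icc (0 : ℝ) 1, HasDerivWithinAt (fun t => P t + ∫ s in (0 : ℝ)..t, Q s)
      (P t * M t * P t) (Icc 0 1) t := fun t ht => by
    refine ((hP.2 t ht).add (hd t).hasDerivWithinAt).congr_deriv ?_
    simp
  have hY' : ∀ t ∈ Icc (0 : ℝ) 1, (P t * M t * P t).PosSemidef := fun t ht => by
    have := psd_conj (hMpsd t) (P t)
    rwa [hP.1 t ht] at this
  have m1 := trace_mono le_rfl ht.1 ht.2 hY hY' hZ
  have m2 := trace_mono ht.1 ht.2 le_rfl hY hY' hZ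
  have q1 := trace_mono le_rfl ht.1 ht.2 (fun t _ => (hd t).hasDerivWithinAt)
    (fun t _ => hQpsd t) hZ
  have q2 := trace_mono ht.1 ht.2 le_rfl (fun t _ => (hd t).hasDerivWithinAt)
    (fun t _ => hQpsd t) hZ
  simp only [add_mul, trace_add, intervalIntegral.integral_same, zero_mul, trace_zero] at m1 m2 q1
  have a1 := le_abs_self (b (-Z) 0)
  have a2 := le_abs_self (b 0 Z)
  have a3 := abs_nonneg (b (-Z) 0)
  have a4 := abs_nonneg (b 0 Z)
  rw [abs_le]
  constructor <;> linarith

end APriori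

/-! ### The driftless system: existence -/

section Existence

open Set
open scoped NNReal

attribute [local instance] Matrix.frobeniusNormedAddCommGroup Matrix.frobeniusNormedSpace
  Matrix.frobeniusNormedRing Matrix.frobeniusNormedAlgebra

variable {n : ℕ} {M Q N : ℝ → Matrix (Fin n) (Fin n) ℝ}

/-- The Riccati field, frozen radially outside the ball of radius `R`. -/
noncomputable def truncField (M Q : ℝ → Matrix (Fin n) (Fin n) ℝ) (R t : ℝ)
    (X : Matrix (Fin n) (Fin n) ℝ) : Matrix (Fin n) (Fin n) ℝ :=
  radialRetract R X * M t * radialRetract R X - Q t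

lemma transpose_radialRetract (R : ℝ) (X : Matrix (Fin n) (Fin n) ℝ) :
    (radialRetract R X)ᵀ = radialRetract R Xᵀ := by
  rw [radialRetract, radialRetract, transpose_smul, frobenius_norm_transpose]

lemma truncField_lipschitz (hM : Continuous M) {R : ℝ} (hR : 0 < R) :
    ∃ K : ℝ≥0, ∀ t ∈ Icc (0 : ℝ) 1, LipschitzWith K (truncField M Q R t) := by
  obtain ⟨m, hm⟩ := isCompact_Icc.exists_bound_of_continuousOn
    (hM.continuousOn (s := Icc (0 : ℝ) 1))
  have hm0 : 0 ≤ m := (norm_nonneg _).trans (hm 0 ⟨le_rfl, zero_le_one⟩)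
  refine ⟨(4 * (R * m)).toNNReal, fun t ht => LipschitzWith.of_dist_le_mul fun X Y => ?_⟩
  rw [dist_eq_norm, dist_eq_norm, Real.coe_toNNReal _ (by positivity)]
  set x := radialRetract R X with hx
  set y := radialRetract R Y with hy
  have e : truncField M Q R t X - truncField M Q R t Y
      = (x - y) * (M t * x) + (y * M t) * (x - y) := by
    simp only [truncField, ← hx, ← hy]
    noncomm_ring
  have hxR : ‖x‖ ≤ R := norm_radialRetract_le hR X
  have hyR : ‖y‖ ≤ R := norm_radialRetract_le hR Y
  have hxy : ‖x - y‖ ≤ 2 * ‖X - Y‖ := by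
    have := (lipschitzWith_radialRetract hR).dist_le_mul X Y
    rwa [dist_eq_norm, dist_eq_norm] at this
  have h1 : ‖M t * x‖ ≤ m * R := (norm_mul_le _ _).trans
    (mul_le_mul (hm t ht) hxR (norm_nonneg _) hm0)
  have h2 : ‖y * M t‖ ≤ R * m := (norm_mul_le _ _).trans
    (mul_le_mul hyR (hm t ht) (norm_nonneg _) hR.le)
  have h3 : ‖(x - y) * (M t * x)‖ ≤ 2 * ‖X - Y‖ * (m * R) := (norm_mul_le _ _).trans
    (mul_le_mul hxy h1 (norm_nonneg _) (by positivity))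
  have h4 : ‖y * M t * (x - y)‖ ≤ R * m * (2 * ‖X - Y‖) := (norm_mul_le _ _).trans
    (mul_le_mul h2 hxy (norm_nonneg _) (by positivity))
  rw [e]
  have h5 := norm_add_le ((x - y) * (M t * x)) (y * M t * (x - y))
  linarith

/-- The backward flow of the truncated Riccati equation, parametrised by the value at time `1`. -/
lemma exists_truncated_flow (hM : Continuous M) (hQ : Continuous Q)
    (hMpsd : ∀ t, (M t).PosSemidef) (hQpsd : ∀ t, (Q t).PosSemidef) {R : ℝ} (hR : 0 < R) :
    ∃ (K : ℝ≥0) (φ : Matrix (Fin n) (Fin n) ℝ → ℝ → Matrix (Fin n) (Fin n) ℝ),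
      (∀ G, SolvesOn (truncField M Q R) (φ G) ∧ φ G 1 = G) ∧
      (∀ t ∈ Icc (0 : ℝ) 1, LipschitzWith K fun G => φ G t) ∧
      (∀ G, Gᵀ = G → ∀ t ∈ Icc (0 : ℝ) 1, (φ G t)ᵀ = φ G t) ∧
      (∀ G x, SolvesOn (truncField M Q R) x → x 1 = G → ∀ t ∈ Icc (0 : ℝ) 1, x t = φ G t) := by
  obtain ⟨K, hK⟩ := truncField_lipschitz (Q := Q) hM hR
  obtain ⟨m, hm⟩ := isCompact_Icc.exists_bound_of_continuousOn
    (hM.continuousOn (s := Icc (0 : ℝ) 1))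
  obtain ⟨q, hq⟩ := isCompact_Icc.exists_bound_of_continuousOn
    (hQ.continuousOn (s := Icc (0 : ℝ) 1))
  have hm0 : 0 ≤ m := (norm_nonneg _).trans (hm 0 ⟨le_rfl, zero_le_one⟩)
  have hex : ∀ G : Matrix (Fin n) (Fin n) ℝ, ∃ x, SolvesOn (truncField M Q R) x ∧ x 1 = G :=
    fun G => exists_solvesOn_of_bounded (L := R * m * R + q) hK
      (fun X => (((continuous_const.mul hM).mul continuous_const).sub hQ).continuousOn)
      (fun t ht X => by
        have h1 := norm_radialRetract_le hR X
        have h2 : ‖radialRetract R X * M t‖ ≤ R * m := (norm_mul_le _ _).trans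
          (mul_le_mul h1 (hm t ht) (norm_nonneg _) hR.le)
        have h3 : ‖radialRetract R X * M t * radialRetract R X‖ ≤ R * m * R :=
          (norm_mul_le _ _).trans (mul_le_mul h2 h1 (norm_nonneg _) (by positivity))
        exact (norm_sub_le _ _).trans (add_le_add h3 (hq t ht)))
      ⟨zero_le_one, le_rfl⟩ G
  choose φ hφ using hex
  have huniq : ∀ G x, SolvesOn (truncField M Q R) x → x 1 = G →
      ∀ t ∈ Icc (0 : ℝ) 1, x t = φ G t := by
    intro G x hx hx1 t ht
    have := SolvesOn.dist_le_one hK hx (hφ G).1 ht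
    rw [hx1, (hφ G).2, sub_self, norm_zero, mul_zero] at this
    exact sub_eq_zero.1 (norm_le_zero_iff.1 this)
  refine ⟨⟨Real.exp K, (Real.exp_pos _).le⟩, φ, hφ, fun t ht =>
    LipschitzWith.of_dist_le_mul fun G G' => ?_, fun G hG => ?_, huniq⟩
  · have := SolvesOn.dist_le_one hK (hφ G).1 (hφ G').1 ht
    rw [(hφ G).2, (hφ G').2] at this
    rw [dist_eq_norm, dist_eq_norm]
    exact this
  · refine huniq G (fun t => (φ G t)ᵀ) (fun t ht => ?_) (by rw [(hφ G).2, hG])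
    refine ((hφ G).1 t ht).mtranspose.congr_deriv ?_
    simp only [truncField]
    rw [transpose_sub, transpose_mul, transpose_mul, psd_symm (hMpsd t), psd_symm (hQpsd t),
      transpose_radialRetract, mul_assoc]

lemma truncField_of_le {R : ℝ} (hR : 0 < R) {t : ℝ} {X : Matrix (Fin n) (Fin n) ℝ}
    (hX : ‖X‖ ≤ R) : truncField M Q R t X = X * M t * X - Q t := by
  rw [truncField, radialRetract_of_le hR hX]

/-- The Riccati equation has a solution on all of `[0, 1]`, namely the one vanishing at time `1`:
the truncated solutions with that terminal value satisfy `0 ≤ P ≤ ∫₀¹ Q`, whatever the truncation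
radius. -/
lemma exists_riccati (hM : Continuous M) (hQ : Continuous Q)
    (hMpsd : ∀ t, (M t).PosSemidef) (hQpsd : ∀ t, (Q t).PosSemidef) :
    ∃ P, IsRiccati M Q P := by
  obtain ⟨B, hB⟩ := norm_bound_of_trace (n := n) fun Z => ((∫ s in (0 : ℝ)..1, Q s) * Z).trace
  set R := max B 1 with hRdef
  have hR : 0 < R := lt_max_of_lt_right one_pos
  obtain ⟨-, φ, hφ, -, hsymm, -⟩ := exists_truncated_flow hM hQ hMpsd hQpsd hR
  set P := φ 0 with hPdef
  have hP := (hφ 0).1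
  have hP1 := (hφ 0).2
  have hPs := hsymm 0 transpose_zero
  rw [← hPdef] at hP hP1 hPs
  set c : ℝ → ℝ := fun t => R / max R ‖P t‖ with hc
  have hcc : ContinuousOn c (Icc 0 1) :=
    continuousOn_const.div (continuousOn_const.sup hP.continuousOn.norm)
      fun t _ => (lt_max_of_lt_left hR).ne'
  have hfield : ∀ t, truncField M Q R t (P t) = (c t * c t) • (P t * M t * P t) - Q t := by
    intro t
    simp only [truncField, radialRetract, hc, smul_mul_assoc, mul_smul_comm, smul_smul]
  have hpsd : ∀ t ∈ Icc (0 : ℝ) 1, ((c t * c t) • (P t * M t * P t)).PosSemidef := fun t ht => by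
    have := psd_conj (hMpsd t) (P t)
    rw [hPs t ht] at this
    exact this.smul (mul_self_nonneg _)
  -- `Y' = -½ c² M P Y` is chosen so that `(Yᵀ P Y)' = -Yᵀ Q Y`.
  obtain ⟨Y, W, hY, -, -, -, hWY⟩ := exists_fundamental
    (L := fun t => -((c t * c t / 2) • (M t * P t)))
    (((hcc.mul hcc).div_const 2).smul (hM.continuousOn.mul hP.continuousOn)).neg
  have hlow : ∀ t ∈ Icc (0 : ℝ) 1, HasDerivWithinAt (fun t => -((Y t)ᵀ * P t * Y t))
      ((Y t)ᵀ * Q t * (Y t)ᵀᵀ) (Icc 0 1) t := by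
    intro t ht
    have h := (((hY t ht).mtranspose.mul (hP t ht)).mul (hY t ht)).neg
    refine h.congr_deriv ?_
    simp only [Pi.mul_apply, hfield, transpose_transpose, transpose_mul, transpose_neg,
      transpose_smul, psd_symm (hMpsd t), hPs t ht, smul_mul_assoc, mul_smul_comm, neg_mul,
      mul_neg, mul_sub, sub_mul, add_mul, ← mul_assoc]
    module
  have hlowpsd : ∀ t ∈ Icc (0 : ℝ) 1, ((Y t)ᵀ * Q t * (Y t)ᵀᵀ).PosSemidef :=
    fun t _ => psd_conj (hQpsd t) _
  have hd := hasDerivAt_integral hQ 0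
  have hup : ∀ t ∈ Icc (0 : ℝ) 1, HasDerivWithinAt (fun t => P t + ∫ s in (0 : ℝ)..t, Q s)
      ((c t * c t) • (P t * M t * P t)) (Icc 0 1) t := fun t ht => by
    refine ((hP t ht).add (hd t).hasDerivWithinAt).congr_deriv ?_
    rw [hfield]
    abel
  have hbound : ∀ t ∈ Icc (0 : ℝ) 1, ‖P t‖ ≤ R := by
    intro t ht
    refine (hB _ (hPs t ht) fun Z hZ => ?_).trans (le_max_left _ _)
    have h1 := trace_mono ht.1 ht.2 le_rfl hup hpsd hZ
    have h2 := trace_mul_psd (integral_psd hQ hQpsd le_rfl ht.1 ht.2) hZ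
    have h3 := trace_mono ht.1 ht.2 le_rfl hlow hlowpsd (psd_conj hZ (W t))
    have e : ((Y t)ᵀ * P t * Y t * (W t * Z * (W t)ᵀ)).trace = (P t * Z).trace := by
      have e1 := (hWY t ht).2
      have e2 : (W t)ᵀ * (Y t)ᵀ = 1 := by rw [← transpose_mul, e1, transpose_one]
      calc ((Y t)ᵀ * P t * Y t * (W t * Z * (W t)ᵀ)).trace
          = ((Y t)ᵀ * (P t * Y t * (W t * Z * (W t)ᵀ))).trace := by simp only [mul_assoc]
        _ = (P t * Y t * (W t * Z * (W t)ᵀ) * (Y t)ᵀ).trace := Matrix.trace_mul_comm _ _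
        _ = (P t * (Y t * W t) * Z * ((W t)ᵀ * (Y t)ᵀ)).trace := by simp only [mul_assoc]
        _ = _ := by rw [e1, e2, mul_one, mul_one]
    simp only [hP1, mul_zero, zero_mul, neg_zero, trace_zero, neg_mul, trace_neg, e] at h3
    simp only [hP1, zero_add, add_mul, trace_add] at h1
    rw [abs_le]
    constructor <;> linarith
  refine ⟨P, hPs, fun t ht => ?_⟩
  have := hP t ht
  rwa [truncField_of_le hR (hbound t ht)] at this

/-- Comparison of `dualCost` at two Riccati solutions, up to an error quadratic in their
distance. -/
lemma dualCost_sub_le (hN : Continuous N) {P P' S : ℝ → Matrix (Fin n) (Fin n) ℝ}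
    (hP : IsRiccati M Q P) (hP' : IsRiccati M Q P') (hS : IsLyapunov M N P S) {c : ℝ}
    (hc : ∀ t ∈ Icc (0 : ℝ) 1, ((P' t - P t) * M t * (P' t - P t) * S t).trace ≤ c)
    (S1 : Matrix (Fin n) (Fin n) ℝ) :
    dualCost N (S 0) S1 P' - dualCost N (S 0) S1 P ≤ ((P' 1 - P 1) * (S1 - S 1)).trace + c := by
  have key := le_of_deriv_nonneg le_rfl zero_le_one le_rfl
    (g := fun t => runCost N P' t - runCost N P t - ((P' t - P t) * S t).trace + c * t)
    (g' := fun t => (P' t * N t).trace - (P t * N t).trace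
      - (((P' t - P t) * M t * (P' t - P t) * S t).trace + ((P' t - P t) * N t).trace) + c * 1)
    (fun t ht => (((hasDerivWithinAt_runCost hN hP'.2.continuousOn ht).sub
      (hasDerivWithinAt_runCost hN hP.2.continuousOn ht)).sub (cross_deriv hP hP' hS ht)).add
      ((hasDerivWithinAt_id t _).const_mul c))
    (fun t ht => by
      have := hc t ht
      rw [sub_mul _ _ (N t), trace_sub]
      linarith)
  simp only [runCost_zero] at key
  simp only [dualCost, sub_mul, mul_sub, trace_sub] at key ⊢
  linarith

lemma continuous_dualCost (hN : Continuous N) {K : ℝ≥0}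
    {φ : Matrix (Fin n) (Fin n) ℝ → ℝ → Matrix (Fin n) (Fin n) ℝ}
    (hφ : ∀ G, ContinuousOn (φ G) (Icc 0 1))
    (hlip : ∀ t ∈ Icc (0 : ℝ) 1, LipschitzWith K fun G => φ G t)
    (S0 S1 : Matrix (Fin n) (Fin n) ℝ) : Continuous fun G => dualCost N S0 S1 (φ G) := by
  have hjoint : Continuous fun p : Matrix (Fin n) (Fin n) ℝ × ℝ => φ p.1 (clamp p.2) := by
    refine continuous_prod_of_continuous_lipschitzWith
      (fun p : Matrix (Fin n) (Fin n) ℝ × ℝ => φ p.1 (clamp p.2)) K ?_ ?_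
    · exact fun G => (hφ G).comp_clamp
    · exact fun t => hlip (clamp t) (clamp_mem t)
  have hcont_pair : Continuous (Function.uncurry fun (G : Matrix (Fin n) (Fin n) ℝ) (s : ℝ) =>
      (φ G (clamp s) * N s).trace) :=
    (hjoint.matrix_mul (hN.comp continuous_snd)).matrix_trace
  have hrun : Continuous fun G => runCost N (φ G) 1 :=
    intervalIntegral.continuous_parametric_intervalIntegral_of_continuous' hcont_pair 0 1
  have h0 := (hlip 0 ⟨le_rfl, zero_le_one⟩).continuous
  have h1 := (hlip 1 ⟨zero_le_one, le_rfl⟩).continuous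
  exact ((h1.matrix_mul continuous_const).matrix_trace.sub
    (h0.matrix_mul continuous_const).matrix_trace).sub hrun

/-- The minimiser of `dualCost` is found among truncated Riccati solutions inside a ball; the a
priori bound puts it in the interior, where the first-order condition reads `Σ(1) = Σ₁`. -/
lemma driftless_exists (hM : Continuous M) (hQ : Continuous Q) (hN : Continuous N)
    (hMpsd : ∀ t, (M t).PosSemidef) (hQpsd : ∀ t, (Q t).PosSemidef)
    (hNpsd : ∀ t, (N t).PosSemidef)
    (hH : NowhereDegenerate M) {S0 S1 : Matrix (Fin n) (Fin n) ℝ} (hS0 : S0.PosDef)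
    (hS1 : S1.PosDef) :
    ∃ P S, IsRiccati M Q P ∧ IsLyapunov M N P S ∧ S 0 = S0 ∧ S 1 = S1 := by
  obtain ⟨P₀, hP₀⟩ := exists_riccati hM hQ hMpsd hQpsd
  obtain ⟨R₀, hR₀⟩ := apriori_bound hM hQ hN hMpsd hQpsd hNpsd hH hS0 hS1 (dualCost N S0 S1 P₀)
  have hR₀0 : 0 ≤ R₀ := (norm_nonneg _).trans (hR₀ P₀ hP₀ le_rfl 0 ⟨le_rfl, zero_le_one⟩)
  have hR : 0 < R₀ + 1 := by linarith
  obtain ⟨K, φ, hφ, hlip, hsymm, huniq⟩ := exists_truncated_flow hM hQ hMpsd hQpsd hR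
  -- Terminal values whose truncated solution never leaves the ball.
  set A : Set (Matrix (Fin n) (Fin n) ℝ) :=
    {G | Gᵀ = G ∧ ∀ t ∈ Icc (0 : ℝ) 1, ‖φ G t‖ ≤ R₀ + 1} with hA
  have hric : ∀ G ∈ A, IsRiccati M Q (φ G) := fun G hG => ⟨hsymm G hG.1, fun t ht => by
    have := (hφ G).1 t ht
    rwa [truncField_of_le hR (hG.2 t ht)] at this⟩
  have hAclosed : IsClosed A := by
    have e : A = {G | Gᵀ = G} ∩ ⋂ t ∈ Icc (0 : ℝ) 1, {G | ‖φ G t‖ ≤ R₀ + 1} := by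
      ext G
      simp [hA]
    rw [e]
    exact (isClosed_eq continuous_id.matrix_transpose continuous_id).inter
      (isClosed_iInter fun t => isClosed_iInter fun ht =>
        isClosed_le (hlip t ht).continuous.norm continuous_const)
  have hAcompact : IsCompact A := by
    refine Metric.isCompact_of_isClosed_isBounded hAclosed
      ((Metric.isBounded_closedBall (x := 0) (r := R₀ + 1)).subset fun G hG => ?_)
    have := hG.2 1 ⟨zero_le_one, le_rfl⟩
    rw [(hφ G).2] at this
    simpa using this
  have hcost := continuous_dualCost hN (fun G => (hφ G).1.continuousOn) hlip S0 S1
  have hP₀φ : ∀ t ∈ Icc (0 : ℝ) 1, P₀ t = φ (P₀ 1) t := huniq _ P₀ (fun t ht => by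
    rw [truncField_of_le hR ((hR₀ P₀ hP₀ le_rfl t ht).trans (by linarith))]
    exact hP₀.2 t ht) rfl
  have hP₀A : P₀ 1 ∈ A := ⟨hP₀.1 1 ⟨zero_le_one, le_rfl⟩, fun t ht => by
    rw [← hP₀φ t ht]
    exact (hR₀ P₀ hP₀ le_rfl t ht).trans (by linarith)⟩
  have hcost₀ : dualCost N S0 S1 (φ (P₀ 1)) = dualCost N S0 S1 P₀ := by
    have hrun : runCost N (φ (P₀ 1)) 1 = runCost N P₀ 1 := by
      simp only [runCost]
      congr 1
      ext1 s
      rw [← hP₀φ _ (clamp_mem s)]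
    rw [dualCost, dualCost, hrun, ← hP₀φ 0 ⟨le_rfl, zero_le_one⟩,
      ← hP₀φ 1 ⟨zero_le_one, le_rfl⟩]
  obtain ⟨G, hG, hmin⟩ := hAcompact.exists_isMinOn ⟨_, hP₀A⟩ hcost.continuousOn
  have hmin' : ∀ G' ∈ A, dualCost N S0 S1 (φ G) ≤ dualCost N S0 S1 (φ G') := fun G' h => hmin h
  have hP := hric G hG
  have hPbd : ∀ t ∈ Icc (0 : ℝ) 1, ‖φ G t‖ ≤ R₀ :=
    hR₀ _ hP ((hmin' _ hP₀A).trans hcost₀.le)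
  obtain ⟨KL, hKL⟩ := lyapunov_lipschitz (N := N) hM hP.2.continuousOn
  obtain ⟨S, hS, hSS0⟩ := exists_solvesOn hKL (fun X =>
    (((hM.continuousOn.mul hP.2.continuousOn).mul continuousOn_const).neg.sub
      (continuousOn_const.mul (hP.2.continuousOn.mul hM.continuousOn))).add hN.continuousOn) S0
  have hS' : IsLyapunov M N (φ G) S := hS
  refine ⟨φ G, S, hP, hS', hSS0, ?_⟩
  have hSpd := lyapunov_posDef hM hMpsd hNpsd hP hS' (hSS0 ▸ hS0) 1 ⟨zero_le_one, le_rfl⟩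
  set E := S1 - S 1 with hE
  have hEs : Eᵀ = E := by
    rw [hE, transpose_sub, psd_symm hS1.posSemidef, psd_symm hSpd.posSemidef]
  obtain ⟨ct, hct0, hct⟩ := abs_trace_le n
  obtain ⟨m, hm⟩ := isCompact_Icc.exists_bound_of_continuousOn
    (hM.continuousOn (s := Icc (0 : ℝ) 1))
  obtain ⟨σ, hσ⟩ := isCompact_Icc.exists_bound_of_continuousOn hS.continuousOn
  have hm0 : 0 ≤ m := (norm_nonneg _).trans (hm 0 ⟨le_rfl, zero_le_one⟩)
  have hσ0 : 0 ≤ σ := (norm_nonneg _).trans (hσ 0 ⟨le_rfl, zero_le_one⟩)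
  set k : ℝ := K * ‖E‖ with hk
  have hk0 : 0 ≤ k := mul_nonneg K.coe_nonneg (norm_nonneg _)
  set C := ct * (k * m * k * σ) with hC
  have hC0 : 0 ≤ C := by positivity
  -- Moving the terminal value in the direction `-E` changes the cost by `-s tr (E E) + O(s²)`.
  have hvar : ∀ s : ℝ, 0 < s → s * k ≤ 1 → (E * E).trace ≤ C * s := by
    intro s hs hsk
    have hdiff : ∀ t ∈ Icc (0 : ℝ) 1, ‖φ (G - s • E) t - φ G t‖ ≤ s * k := fun t ht => by
      have := (hlip t ht).dist_le_mul (G - s • E) G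
      rw [dist_eq_norm, dist_eq_norm, sub_sub_cancel_left, norm_neg, norm_smul,
        Real.norm_of_nonneg hs.le] at this
      rw [hk]
      linarith
    have hmem : G - s • E ∈ A := by
      refine ⟨by rw [transpose_sub, transpose_smul, hEs, hG.1], fun t ht => ?_⟩
      have h1 := norm_add_le (φ (G - s • E) t - φ G t) (φ G t)
      rw [sub_add_cancel] at h1
      linarith [hdiff t ht, hPbd t ht]
    have hcmp := dualCost_sub_le (c := C * s * s) hN hP (hric _ hmem) hS' (fun t ht => by
      refine (le_abs_self _).trans ((hct _).trans ?_)
      have hd := hdiff t ht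
      have hsk0 : 0 ≤ s * k := by positivity
      set D := φ (G - s • E) t - φ G t
      have h1 : ‖D * M t‖ ≤ s * k * m := (norm_mul_le _ _).trans
        (mul_le_mul hd (hm t ht) (norm_nonneg _) hsk0)
      have h2 : ‖D * M t * D‖ ≤ s * k * m * (s * k) := (norm_mul_le _ _).trans
        (mul_le_mul h1 hd (norm_nonneg _) (by positivity))
      have h3 : ‖D * M t * D * S t‖ ≤ s * k * m * (s * k) * σ := (norm_mul_le _ _).trans
        (mul_le_mul h2 (hσ t ht) (norm_nonneg _) (by positivity))
      have h4 := mul_le_mul_of_nonneg_left h3 hct0.le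
      rw [hC]
      linarith) S1
    rw [hSS0, (hφ _).2, (hφ _).2, sub_sub_cancel_left, ← hE, neg_mul, smul_mul_assoc,
      trace_neg, trace_smul, smul_eq_mul] at hcmp
    have h5 := hmin' _ hmem
    have h6 : s * (E * E).trace ≤ s * (C * s) := by linarith
    exact le_of_mul_le_mul_left h6 hs
  have hEE : (E * E).trace ≤ 0 := by
    refine le_of_forall_pos_le_add fun δ hδ => ?_
    have hs : 0 < min (1 / (k + 1)) (δ / (C + 1)) := lt_min (by positivity) (by positivity)
    set s := min (1 / (k + 1)) (δ / (C + 1))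
    have h1 : s ≤ 1 / (k + 1) := min_le_left _ _
    have h2 : s ≤ δ / (C + 1) := min_le_right _ _
    rw [le_div_iff₀ (by positivity)] at h1 h2
    have := hvar s hs (by linarith)
    linarith
  have hE0 : E = 0 := by
    have h1 : (Eᴴ * E).PosSemidef := posSemidef_conjTranspose_mul_self E
    have h2 : Eᴴ * E = E * E := by rw [conjTranspose_eq_transpose_of_trivial, hEs]
    have h3 := h1.trace_nonneg
    rw [← conjTranspose_mul_self_eq_zero, ← h1.trace_eq_zero_iff]
    rw [h2] at h3 ⊢
    exact le_antisymm hEE h3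
  exact (sub_eq_zero.1 hE0).symm

end Existence

/-! ### Reduction to the driftless system -/

section Reduction

open Set

attribute [local instance] Matrix.frobeniusNormedAddCommGroup Matrix.frobeniusNormedSpace
  Matrix.frobeniusNormedRing Matrix.frobeniusNormedAlgebra

variable {n p q : ℕ}

lemma HasDerivWithinAt.matrix_mul {X : ℝ → Matrix (Fin n) (Fin n) ℝ}
    {Y : ℝ → Matrix (Fin n) (Fin p) ℝ} {X' : Matrix (Fin n) (Fin n) ℝ}
    {Y' : Matrix (Fin n) (Fin p) ℝ} {s : Set ℝ} {t : ℝ} (hX : HasDerivWithinAt X X' s t)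
    (hY : HasDerivWithinAt Y Y' s t) :
    HasDerivWithinAt (fun t => X t * Y t) (X' * Y t + X t * Y') s t := by
  refine hasDerivWithinAt_matrix.2 fun i j => ?_
  have := HasDerivWithinAt.fun_sum (u := Finset.univ) fun l _ =>
    (hasDerivWithinAt_matrix.1 hX i l).mul (hasDerivWithinAt_matrix.1 hY l j)
  rw [Finset.sum_add_distrib] at this
  exact this

/-- A fundamental matrix `Φ` of `x' = A x` on `[0, 1]` and its inverse `W`, extended continuously
to the line by their end values. -/
structure FundamentalPair (A Φ W : ℝ → Matrix (Fin n) (Fin n) ℝ) : Prop where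
  cont_Φ : Continuous Φ
  cont_W : Continuous W
  deriv_Φ : SolvesOn (fun t X => A t * X) Φ
  deriv_W : SolvesOn (fun t X => -(X * A t)) W
  mul_WΦ : ∀ t, W t * Φ t = 1
  mul_ΦW : ∀ t, Φ t * W t = 1

lemma exists_fundamentalPair {A : ℝ → Matrix (Fin n) (Fin n) ℝ} (hA : Continuous A) :
    ∃ Φ W, FundamentalPair A Φ W := by
  obtain ⟨Φ, W, hΦ, hW, -, -, h⟩ := exists_fundamental hA.continuousOn
  refine ⟨fun t => Φ (clamp t), fun t => W (clamp t), hΦ.continuousOn.comp_clamp,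
    hW.continuousOn.comp_clamp, fun t ht => ?_, fun t ht => ?_,
    fun t => (h _ (clamp_mem t)).1, fun t => (h _ (clamp_mem t)).2⟩
  · refine (HasDerivWithinAt.congr (hΦ t ht) (fun s hs => ?_) ?_).congr_deriv ?_ <;>
      simp only [clamp_of_mem, *]
  · refine (HasDerivWithinAt.congr (hW t ht) (fun s hs => ?_) ?_).congr_deriv ?_ <;>
      simp only [clamp_of_mem, *]

/-- Total controllability makes the transported input weight `W B Bᵀ Wᵀ` nowhere degenerate: if
`vᵀ W B` vanishes on an interval, then so do its derivatives `vᵀ W Γ_k`. -/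
lemma nowhereDegenerate_of_totallyControllable {A Φ W : ℝ → Matrix (Fin n) (Fin n) ℝ}
    (hW : FundamentalPair A Φ W) {B : ℝ → Matrix (Fin n) (Fin p) ℝ}
    {Γ : ℕ → ℝ → Matrix (Fin n) (Fin p) ℝ} (hΓ : IsCtrbMatSeq A B Γ)
    (hTC : TotallyControllable Γ) :
    NowhereDegenerate fun t => W t * (B t * (B t)ᵀ) * (W t)ᵀ := by
  intro a b ha hab hb v hv
  have hzero : ∀ k, k ≤ n → ∀ t ∈ Ioo a b, v ᵥ* (W t * Γ k t) = 0 := by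
    intro k
    induction k with
    | zero =>
      intro _ t ht
      have h1 : (W t * (B t * (B t)ᵀ) * (W t)ᵀ) *ᵥ v = 0 := hv t (Ioo_subset_Icc_self ht)
      have e : W t * (B t * (B t)ᵀ) * (W t)ᵀ = (W t * B t) * (W t * B t)ᴴ := by
        rw [conjTranspose_eq_transpose_of_trivial, transpose_mul]
        simp only [Matrix.mul_assoc]
      rw [e, self_mul_conjTranspose_mulVec_eq_zero, conjTranspose_eq_transpose_of_trivial,
        mulVec_transpose] at h1
      rw [hΓ.1, h1]
    | succ k ih =>
      intro hk t ht
      have hkn : k < n := hk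
      have ht' : t ∈ Icc (0 : ℝ) 1 := ⟨ha.trans ht.1.le, ht.2.le.trans hb⟩
      have hG : HasDerivWithinAt (Γ k) (Γ (k + 1) t + A t * Γ k t) (Icc 0 1) t :=
        hasDerivWithinAt_matrix.2 fun i j => (hΓ.2 k hkn t i j).hasDerivWithinAt
      have hd := HasDerivWithinAt.matrix_mul (hW.deriv_W t ht') hG
      have e : -(W t * A t) * Γ k t + W t * (Γ (k + 1) t + A t * Γ k t) = W t * Γ (k + 1) t := by
        rw [Matrix.mul_add, Matrix.neg_mul, Matrix.mul_assoc]
        abel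
      rw [e] at hd
      have hsub : Ioo a b ⊆ Icc (0 : ℝ) 1 := fun s hs => ⟨ha.trans hs.1.le, hs.2.le.trans hb⟩
      ext j
      have hj : HasDerivWithinAt (fun t => (v ᵥ* (W t * Γ k t)) j)
          ((v ᵥ* (W t * Γ (k + 1) t)) j) (Ioo a b) t := by
        have := HasDerivWithinAt.fun_sum (u := Finset.univ) fun i _ =>
          ((hasDerivWithinAt_matrix.1 (hd.mono hsub) i j).const_mul (v i))
        exact this
      have hz : HasDerivWithinAt (fun t => (v ᵥ* (W t * Γ k t)) j) 0 (Ioo a b) t :=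
        (hasDerivWithinAt_const t (Ioo a b) (0 : ℝ)).congr
          (fun s hs => by rw [ih hkn.le s hs]; rfl) (by rw [ih hkn.le t ht]; rfl)
      exact ((isOpen_Ioo.uniqueDiffOn) t ht).eq_deriv _ hj hz
  obtain ⟨t, ht, hrank⟩ := hTC a b ha hab hb
  have hw : (v ᵥ* W t) ᵥ* ctrbMat Γ t = 0 := by
    ext kj
    have := congrFun (hzero kj.1 kj.1.2.le t ht) kj.2
    rw [← vecMul_vecMul] at this
    exact this
  have hinj : Function.Injective (ctrbMat Γ t).vecMul := by
    rw [vecMul_injective_iff, linearIndependent_iff_card_eq_finrank_span, Set.finrank,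
      ← rank_eq_finrank_span_row, hrank, Fintype.card_fin]
  have hw0 : v ᵥ* W t = 0 := hinj (hw.trans (zero_vecMul _).symm)
  have := congrArg (fun u => u ᵥ* Φ t) hw0
  simpa [vecMul_vecMul, hW.mul_WΦ] using this

variable {A Q Φ W : ℝ → Matrix (Fin n) (Fin n) ℝ} {B : ℝ → Matrix (Fin n) (Fin p) ℝ}
  {C : ℝ → Matrix (Fin n) (Fin q) ℝ} {D : ℝ → Matrix (Fin q) (Fin q) ℝ}
  {Sig0 Sig1 : Matrix (Fin n) (Fin n) ℝ} {P S : ℝ → Matrix (Fin n) (Fin n) ℝ}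

namespace FundamentalPair

lemma cancel_ΦW (hW : FundamentalPair A Φ W) (t : ℝ) (X : Matrix (Fin n) (Fin n) ℝ) :
    Φ t * (W t * X) = X := by rw [← mul_assoc, hW.mul_ΦW, one_mul]

lemma cancel_WΦ (hW : FundamentalPair A Φ W) (t : ℝ) (X : Matrix (Fin n) (Fin n) ℝ) :
    W t * (Φ t * X) = X := by rw [← mul_assoc, hW.mul_WΦ, one_mul]

lemma cancel_WΦ_transpose (hW : FundamentalPair A Φ W) (t : ℝ) (X : Matrix (Fin n) (Fin n) ℝ) :
    (W t)ᵀ * ((Φ t)ᵀ * X) = X := by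
  rw [← mul_assoc, ← transpose_mul, hW.mul_ΦW, transpose_one, one_mul]

lemma cancel_ΦW_transpose (hW : FundamentalPair A Φ W) (t : ℝ) (X : Matrix (Fin n) (Fin n) ℝ) :
    (Φ t)ᵀ * ((W t)ᵀ * X) = X := by
  rw [← mul_assoc, ← transpose_mul, hW.mul_WΦ, transpose_one, one_mul]

lemma mul_WΦ_transpose (hW : FundamentalPair A Φ W) (t : ℝ) : (W t)ᵀ * (Φ t)ᵀ = 1 := by
  rw [← transpose_mul, hW.mul_ΦW, transpose_one]

lemma mul_ΦW_transpose (hW : FundamentalPair A Φ W) (t : ℝ) : (Φ t)ᵀ * (W t)ᵀ = 1 := by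
  rw [← transpose_mul, hW.mul_WΦ, transpose_one]

/-- In the moving frame given by `Φ` the drift disappears. -/
lemma to_driftless (hW : FundamentalPair A Φ W)
    (h : IsCoupledSol A Q B C D Sig0 Sig1 P S) :
    IsRiccati (fun t => W t * (B t * (B t)ᵀ) * (W t)ᵀ) (fun t => (Φ t)ᵀ * Q t * Φ t)
        (fun t => (Φ t)ᵀ * P t * Φ t) ∧
      IsLyapunov (fun t => W t * (B t * (B t)ᵀ) * (W t)ᵀ)
        (fun t => W t * (C t * D t * (C t)ᵀ) * (W t)ᵀ)
        (fun t => (Φ t)ᵀ * P t * Φ t) (fun t => W t * S t * (W t)ᵀ) := by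
  obtain ⟨hsymm, hP, hS, -, -⟩ := h
  refine ⟨⟨fun t ht => ?_, fun t ht => ?_⟩, fun t ht => ?_⟩
  · beta_reduce
    rw [transpose_mul, transpose_mul, transpose_transpose, hsymm t ht, mul_assoc]
  · have h1 := hW.deriv_Φ t ht
    have h2 := ((h1.mtranspose).mul (hasDerivWithinAt_matrix.2 (hP t ht))).mul h1
    refine h2.congr_deriv ?_
    beta_reduce
    generalize B t * (B t)ᵀ = b
    simp only [Pi.mul_apply, transpose_mul, mul_assoc, hW.cancel_ΦW, hW.cancel_WΦ_transpose]
    noncomm_ring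
  · have h1 := hW.deriv_W t ht
    have h2 := (h1.mul (hasDerivWithinAt_matrix.2 (hS t ht))).mul h1.mtranspose
    refine h2.congr_deriv ?_
    have e : (A t - B t * (B t)ᵀ * P t)ᵀ = (A t)ᵀ - P t * (B t * (B t)ᵀ) := by
      rw [transpose_sub, transpose_mul, transpose_mul, transpose_transpose, hsymm t ht]
    rw [e]
    beta_reduce
    generalize B t * (B t)ᵀ = b
    generalize C t * D t * (C t)ᵀ = c
    simp only [Pi.mul_apply, transpose_neg, transpose_mul, mul_assoc, hW.cancel_ΦW,
      hW.cancel_WΦ_transpose]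
    noncomm_ring

lemma of_driftless (hW : FundamentalPair A Φ W)
    (hP : IsRiccati (fun t => W t * (B t * (B t)ᵀ) * (W t)ᵀ) (fun t => (Φ t)ᵀ * Q t * Φ t) P)
    (hS : IsLyapunov (fun t => W t * (B t * (B t)ᵀ) * (W t)ᵀ)
        (fun t => W t * (C t * D t * (C t)ᵀ) * (W t)ᵀ) P S)
    (h0 : Φ 0 * S 0 * (Φ 0)ᵀ = Sig0) (h1 : Φ 1 * S 1 * (Φ 1)ᵀ = Sig1) :
    IsCoupledSol A Q B C D Sig0 Sig1 (fun t => (W t)ᵀ * P t * W t)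
      (fun t => Φ t * S t * (Φ t)ᵀ) := by
  have hsymm : ∀ t ∈ Icc (0 : ℝ) 1, ((W t)ᵀ * P t * W t)ᵀ = (W t)ᵀ * P t * W t := fun t ht => by
    rw [transpose_mul, transpose_mul, transpose_transpose, hP.1 t ht, mul_assoc]
  refine ⟨hsymm, fun t ht => hasDerivWithinAt_matrix.1 ?_,
    fun t ht => hasDerivWithinAt_matrix.1 ?_, h0, h1⟩
  · have h1 := hW.deriv_W t ht
    have h2 := ((h1.mtranspose).mul (hP.2 t ht)).mul h1
    refine h2.congr_deriv ?_
    beta_reduce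
    generalize B t * (B t)ᵀ = b
    simp only [Pi.mul_apply, transpose_neg, transpose_mul, mul_assoc, mul_sub, sub_mul, add_mul,
      hW.cancel_WΦ_transpose, hW.mul_ΦW, mul_one]
    noncomm_ring
  · have h1 := hW.deriv_Φ t ht
    have h2 := (h1.mul (hS t ht)).mul h1.mtranspose
    refine h2.congr_deriv ?_
    have e : (A t - B t * (B t)ᵀ * ((W t)ᵀ * P t * W t))ᵀ
        = (A t)ᵀ - (W t)ᵀ * P t * W t * (B t * (B t)ᵀ) := by
      rw [transpose_sub, transpose_mul, hsymm t ht, transpose_mul, transpose_transpose]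
    rw [e]
    beta_reduce
    generalize B t * (B t)ᵀ = b
    generalize C t * D t * (C t)ᵀ = c
    simp only [Pi.mul_apply, transpose_mul, mul_assoc, mul_sub, sub_mul, mul_add, add_mul,
      mul_neg, neg_mul, hW.cancel_ΦW, hW.cancel_WΦ,
      hW.cancel_ΦW_transpose, hW.mul_WΦ_transpose, mul_one]
    noncomm_ring

lemma conj_W_posDef (hW : FundamentalPair A Φ W) {X : Matrix (Fin n) (Fin n) ℝ} (hX : X.PosDef)
    (t : ℝ) : (W t * X * (W t)ᵀ).PosDef := by
  have := hX.mul_mul_conjTranspose_same (B := W t) (fun u v huv => by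
    have h1 := congrArg (fun u => u ᵥ* Φ t) huv
    simpa [vecMul_vecMul, hW.mul_WΦ] using h1)
  rwa [conjTranspose_eq_transpose_of_trivial] at this

end FundamentalPair

lemma coupled_exists_unique (hA : Continuous A) (hB : Continuous B) (hQ : Continuous Q)
    (hC : Continuous C) (hD : Continuous D)
    (hQpsd : ∀ t, (Q t).PosSemidef) (hDpsd : ∀ t, (D t).PosSemidef)
    {Γ : ℕ → ℝ → Matrix (Fin n) (Fin p) ℝ} (hΓ : IsCtrbMatSeq A B Γ)
    (hTC : TotallyControllable Γ) (hSig0 : Sig0.PosDef) (hSig1 : Sig1.PosDef) :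
    (∃ P S : ℝ → Matrix (Fin n) (Fin n) ℝ, IsCoupledSol A Q B C D Sig0 Sig1 P S) ∧
    ∀ P₁ S₁ P₂ S₂ : ℝ → Matrix (Fin n) (Fin n) ℝ,
      IsCoupledSol A Q B C D Sig0 Sig1 P₁ S₁ → IsCoupledSol A Q B C D Sig0 Sig1 P₂ S₂ →
      ∀ t ∈ Set.Icc (0:ℝ) 1, P₁ t = P₂ t ∧ S₁ t = S₂ t := by
  obtain ⟨Φ, W, hW⟩ := exists_fundamentalPair hA
  have hH := nowhereDegenerate_of_totallyControllable hW hΓ hTC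
  have hMc : Continuous fun t => W t * (B t * (B t)ᵀ) * (W t)ᵀ :=
    (hW.cont_W.matrix_mul (hB.matrix_mul hB.matrix_transpose)).matrix_mul
      hW.cont_W.matrix_transpose
  have hQc : Continuous fun t => (Φ t)ᵀ * Q t * Φ t :=
    (hW.cont_Φ.matrix_transpose.matrix_mul hQ).matrix_mul hW.cont_Φ
  have hNc : Continuous fun t => W t * (C t * D t * (C t)ᵀ) * (W t)ᵀ :=
    (hW.cont_W.matrix_mul ((hC.matrix_mul hD).matrix_mul hC.matrix_transpose)).matrix_mul
      hW.cont_W.matrix_transpose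
  have hMpsd : ∀ t, (W t * (B t * (B t)ᵀ) * (W t)ᵀ).PosSemidef := fun t =>
    psd_conj (by simpa using posSemidef_self_mul_conjTranspose (B t)) _
  have hQpsd' : ∀ t, ((Φ t)ᵀ * Q t * Φ t).PosSemidef := fun t => by
    simpa using psd_conj (hQpsd t) (Φ t)ᵀ
  have hNpsd : ∀ t, (W t * (C t * D t * (C t)ᵀ) * (W t)ᵀ).PosSemidef := fun t =>
    psd_conj (psd_conj (hDpsd t) _) _
  constructor
  · obtain ⟨P, S, hP, hS, h0, h1⟩ := driftless_exists hMc hQc hNc hMpsd hQpsd' hNpsd hH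
      (hW.conj_W_posDef hSig0 0) (hW.conj_W_posDef hSig1 1)
    refine ⟨_, _, hW.of_driftless hP hS ?_ ?_⟩
    · rw [h0]
      simp only [mul_assoc, hW.cancel_ΦW, hW.mul_WΦ_transpose, mul_one]
    · rw [h1]
      simp only [mul_assoc, hW.cancel_ΦW, hW.mul_WΦ_transpose, mul_one]
  · intro P₁ S₁ P₂ S₂ h₁ h₂ t ht
    have k₁ := hW.to_driftless h₁
    have k₂ := hW.to_driftless h₂
    obtain ⟨-, -, -, a0, a1⟩ := h₁
    obtain ⟨-, -, -, b0, b1⟩ := h₂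
    have key := driftless_unique hMc hMpsd hNpsd hH k₁.1 k₁.2 k₂.1 k₂.2
      (by simp only [a0, b0]) (by simp only [a1, b1])
      (by simp only [a0]; exact hW.conj_W_posDef hSig0 0) t ht
    have e1 : ∀ X : Matrix (Fin n) (Fin n) ℝ, (W t)ᵀ * ((Φ t)ᵀ * X * Φ t) * W t = X := fun X => by
      simp only [mul_assoc, hW.cancel_WΦ_transpose, hW.mul_ΦW, mul_one]
    have e2 : ∀ X : Matrix (Fin n) (Fin n) ℝ, Φ t * (W t * X * (W t)ᵀ) * (Φ t)ᵀ = X := fun X => by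
      simp only [mul_assoc, hW.cancel_ΦW, hW.mul_WΦ_transpose, mul_one]
    exact ⟨by rw [← e1 (P₁ t), key.1, e1], by rw [← e2 (S₁ t), key.2, e2]⟩

end Reduction

theorem stmt_14 {n p q : ℕ} (hn : 1 ≤ n) (hp : 1 ≤ p) (hq : 1 ≤ q)
    (A Q : ℝ → Matrix (Fin n) (Fin n) ℝ) (B : ℝ → Matrix (Fin n) (Fin p) ℝ)
    (C : ℝ → Matrix (Fin n) (Fin q) ℝ) (D : ℝ → Matrix (Fin q) (Fin q) ℝ)
    (hA : Continuous A) (hB : Continuous B) (hQ : Continuous Q)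
    (hC : Continuous C) (hD : Continuous D)
    (hQpsd : ∀ t, (Q t).PosSemidef) (hDpsd : ∀ t, (D t).PosSemidef)
    (hAsm : ∀ i j, ContDiff ℝ (n - 1 : ℕ) fun t => A t i j)
    (hBsm : ∀ i j, ContDiff ℝ (n : ℕ) fun t => B t i j)
    (Γ : ℕ → ℝ → Matrix (Fin n) (Fin p) ℝ)
    (hΓ : IsCtrbMatSeq A B Γ)
    (hTC : TotallyControllable Γ)
    (Sig0 Sig1 : Matrix (Fin n) (Fin n) ℝ) (hSig0 : Sig0.PosDef) (hSig1 : Sig1.PosDef) :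
    (∃ P S : ℝ → Matrix (Fin n) (Fin n) ℝ, IsCoupledSol A Q B C D Sig0 Sig1 P S) ∧
    ∀ P₁ S₁ P₂ S₂ : ℝ → Matrix (Fin n) (Fin n) ℝ,
      IsCoupledSol A Q B C D Sig0 Sig1 P₁ S₁ → IsCoupledSol A Q B C D Sig0 Sig1 P₂ S₂ →
      P₁ 0 = P₂ 0 ∧ ∀ t ∈ Set.Icc (0:ℝ) 1, P₁ t = P₂ t ∧ S₁ t = S₂ t := by
  obtain ⟨hex, huniq⟩ := coupled_exists_unique hA hB hQ hC hD hQpsd hDpsd hΓ hTC hSig0 hSig1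
  exact ⟨hex, fun P₁ S₁ P₂ S₂ h₁ h₂ =>
    ⟨(huniq P₁ S₁ P₂ S₂ h₁ h₂ 0 ⟨le_rfl, zero_le_one⟩).1, huniq P₁ S₁ P₂ S₂ h₁ h₂⟩⟩
end

section
/- Let G and H be integers with G ≥ H ≥ 0, let γ, α₀, …, α_H, β₀, …, β_H be real numbers, let f : [0,1] → ℝ be of class C^G with f(t) > 0 on [0,1], and let ρ : [0,1] → ℝ be continuous with ρ(0) < 0 and ρ(1) < γ. Then there exists u : [0,1] → ℝ of class C^G such that ∫₀¹ f(τ)u(τ) dτ = γ, ∫₀ᵗ f(τ)u(τ) dτ > ρ(t) for all t ∈ [0,1], and the i-th derivative of u satisfies u^{(i)}(0) = α_i and u^{(i)}(1) = β_i for all i ∈ {0, 1, …, H}. -/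
/-!
The control is `u = w + φ' / f`.

The function `w` is the sum of the two prescribed Taylor jets, at `0` and at `1`, each multiplied by
a smooth cutoff living in a `2δ`-neighbourhood of its endpoint. It takes care of the boundary
derivatives, and its contribution `W(t) = ∫₀ᵗ f w` is `O(δ)`, hence at most `η` in absolute value.

The function `φ` is smooth and locally constant near both endpoints, so `φ' / f` does not affect the
boundary derivatives, while it contributes exactly `φ(t) - φ(0) = φ(t)` to the integral. It climbs
from `0` to a large constant `M` on `[δ, 2δ]` and goes from `M` down to `c = γ - W(1)` on
`[1 - 2δ, 1 - δ]`. Since `ρ < -2η` on `[0, 2δ]` and `ρ < γ - 2η` on `[1 - 2δ, 1]`, by continuity of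
`ρ` at the endpoints, and `ρ + η < M` everywhere, `φ + W` stays above `ρ`.
-/

/-- The polynomial of degree at most `H` whose `i`-th derivative at `a` is `c i` for `i ≤ H`. -/
noncomputable def jetPoly (H : ℕ) (c : ℕ → ℝ) (a t : ℝ) : ℝ :=
  ∑ j ∈ Finset.range (H + 1), c j / (j.factorial : ℝ) * (t - a) ^ j

lemma jetPoly_contDiff (H : ℕ) (c : ℕ → ℝ) (a : ℝ) {n : WithTop ℕ∞} :
    ContDiff ℝ n (jetPoly H c a) := by
  unfold jetPoly
  fun_prop

lemma iteratedDerivWithin_jetPoly (H : ℕ) (c : ℕ → ℝ) (a : ℝ) (ha : a ∈ Set.Icc (0:ℝ) 1)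
    (i : ℕ) (hi : i ≤ H) :
    iteratedDerivWithin i (jetPoly H c a) (Set.Icc 0 1) a = c i := by
  rw [iteratedDerivWithin_eq_iteratedDeriv (uniqueDiffOn_Icc zero_lt_one)
    (jetPoly_contDiff H c a).contDiffAt ha]
  unfold jetPoly
  rw [iteratedDeriv_fun_sum (fun j _ => by fun_prop)]
  have key : ∀ j, iteratedDeriv i (fun t : ℝ => c j / (j.factorial : ℝ) * (t - a) ^ j) a
      = if i = j then c j else 0 := by
    intro j
    rw [iteratedDeriv_const_mul_field,
      iteratedDeriv_comp_sub_const (f := fun t : ℝ => t ^ j) (n := i) (s := a)]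
    simp only [sub_self, iteratedDeriv_fun_pow_zero]
    have : (j.factorial : ℝ) ≠ 0 := by positivity
    split_ifs <;> simp [this]
  simp only [key, Finset.sum_ite_eq, Finset.mem_range]
  rw [if_pos (by omega)]

/-- A smooth step, for `δ > 0`: `0` on `(-∞, δ]`, `1` on `[2δ, ∞)`. -/
noncomputable def smoothStep (δ t : ℝ) : ℝ := Real.smoothTransition (t / δ - 1)

lemma smoothStep_eq_zero {δ t : ℝ} (hδ : 0 < δ) (h : t ≤ δ) : smoothStep δ t = 0 :=
  Real.smoothTransition.zero_of_nonpos (by have := (div_le_one hδ).2 h; linarith)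

lemma smoothStep_eq_one {δ t : ℝ} (hδ : 0 < δ) (h : 2 * δ ≤ t) : smoothStep δ t = 1 :=
  Real.smoothTransition.one_of_one_le (by have := (le_div_iff₀ hδ).2 h; linarith)

lemma smoothStep_nonneg (δ t : ℝ) : 0 ≤ smoothStep δ t := Real.smoothTransition.nonneg _

lemma smoothStep_le_one (δ t : ℝ) : smoothStep δ t ≤ 1 := Real.smoothTransition.le_one _

lemma smoothStep_contDiff (δ : ℝ) {n : ℕ∞} : ContDiff ℝ n (smoothStep δ) := by
  unfold smoothStep
  exact Real.smoothTransition.contDiff.comp (by fun_prop)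

lemma integral_one_sub_smoothStep_le {δ : ℝ} (hδ : 0 < δ) (hδ4 : δ ≤ 1 / 4) :
    ∫ t in (0:ℝ)..1, (1 - smoothStep δ t) ≤ 2 * δ := by
  have hc : Continuous fun t => 1 - smoothStep δ t :=
    continuous_const.sub (smoothStep_contDiff δ (n := 0)).continuous
  rw [← intervalIntegral.integral_add_adjacent_intervals
    (hc.intervalIntegrable 0 (2 * δ)) (hc.intervalIntegrable (2 * δ) 1)]
  have h1 : ∫ t in (0:ℝ)..(2 * δ), (1 - smoothStep δ t) ≤ ∫ t in (0:ℝ)..(2 * δ), (1:ℝ) :=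
    intervalIntegral.integral_mono_on (by linarith) (hc.intervalIntegrable _ _)
      (continuous_const.intervalIntegrable _ _)
      (fun t _ => by linarith [smoothStep_nonneg δ t])
  have h2 : ∫ t in (2 * δ)..1, (1 - smoothStep δ t) = ∫ t in (2 * δ)..1, (0:ℝ) := by
    apply intervalIntegral.integral_congr
    intro t ht
    rw [Set.uIcc_of_le (by linarith)] at ht
    simp [smoothStep_eq_one hδ ht.1]
  rw [h2]
  simp at h1 ⊢
  exact h1

/-- The jets `P₀` at `0` and `P₁` at `1`, cut off outside the `2δ`-neighbourhoods of `0` and `1`. -/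
noncomputable def cutJets (P₀ P₁ : ℝ → ℝ) (δ t : ℝ) : ℝ :=
  (1 - smoothStep δ t) * P₀ t + (1 - smoothStep δ (1 - t)) * P₁ t

lemma cutJets_contDiff {P₀ P₁ : ℝ → ℝ} {n : ℕ∞} (h₀ : ContDiff ℝ n P₀) (h₁ : ContDiff ℝ n P₁)
    (δ : ℝ) : ContDiff ℝ n (cutJets P₀ P₁ δ) := by
  have hs := smoothStep_contDiff δ (n := n)
  unfold cutJets
  exact ((contDiff_const.sub hs).mul h₀).add
    ((contDiff_const.sub (hs.comp (contDiff_const.sub contDiff_id))).mul h₁)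

lemma abs_integral_cutJets_le {f P₀ P₁ : ℝ → ℝ} {K δ : ℝ}
    (hδ : 0 < δ) (hδ4 : δ ≤ 1 / 4)
    (h₀ : ∀ t ∈ Set.Icc (0:ℝ) 1, |f t * P₀ t| ≤ K) (h₁ : ∀ t ∈ Set.Icc (0:ℝ) 1, |f t * P₁ t| ≤ K)
    {t : ℝ} (ht : t ∈ Set.Icc (0:ℝ) 1) :
    |∫ τ in (0:ℝ)..t, f τ * cutJets P₀ P₁ δ τ| ≤ 4 * K * δ := by
  have hK : 0 ≤ K := (abs_nonneg _).trans (h₀ 0 (by simp))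
  have hs : Continuous (smoothStep δ) := (smoothStep_contDiff δ (n := 0)).continuous
  set g : ℝ → ℝ := fun τ => K * ((1 - smoothStep δ τ) + (1 - smoothStep δ (1 - τ))) with hg
  have hgc : Continuous g := by fun_prop
  have hgn : ∀ τ, 0 ≤ g τ := fun τ => mul_nonneg hK
    (by linarith [smoothStep_le_one δ τ, smoothStep_le_one δ (1 - τ)])
  have hbound : ∀ τ ∈ Set.Icc (0:ℝ) 1, ‖f τ * cutJets P₀ P₁ δ τ‖ ≤ g τ := by
    intro τ hτ
    have e : f τ * cutJets P₀ P₁ δ τ = (1 - smoothStep δ τ) * (f τ * P₀ τ)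
        + (1 - smoothStep δ (1 - τ)) * (f τ * P₁ τ) := by unfold cutJets; ring
    have a0 : 0 ≤ 1 - smoothStep δ τ := by linarith [smoothStep_le_one δ τ]
    have a1 : 0 ≤ 1 - smoothStep δ (1 - τ) := by linarith [smoothStep_le_one δ (1 - τ)]
    rw [e, Real.norm_eq_abs]
    refine (abs_add_le _ _).trans ?_
    rw [abs_mul (1 - smoothStep δ τ), abs_mul (1 - smoothStep δ (1 - τ)), abs_of_nonneg a0,
      abs_of_nonneg a1]
    have b0 := mul_le_mul_of_nonneg_left (h₀ τ hτ) a0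
    have b1 := mul_le_mul_of_nonneg_left (h₁ τ hτ) a1
    simp only [hg]
    linarith
  have step1 : |∫ τ in (0:ℝ)..t, f τ * cutJets P₀ P₁ δ τ| ≤ ∫ τ in (0:ℝ)..t, g τ := by
    rw [← Real.norm_eq_abs]
    refine intervalIntegral.norm_integral_le_of_norm_le ht.1 ?_ (hgc.intervalIntegrable _ _)
    filter_upwards with τ hτ
    exact hbound τ ⟨hτ.1.le, hτ.2.trans ht.2⟩
  have step2 : ∫ τ in (0:ℝ)..t, g τ ≤ ∫ τ in (0:ℝ)..1, g τ :=
    intervalIntegral.integral_mono_interval le_rfl ht.1 ht.2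
      (Filter.Eventually.of_forall hgn) (hgc.intervalIntegrable _ _)
  have step3 : ∫ τ in (0:ℝ)..1, g τ = K * (2 * ∫ τ in (0:ℝ)..1, (1 - smoothStep δ τ)) := by
    have hr : ∫ τ in (0:ℝ)..1, (1 - smoothStep δ (1 - τ)) = ∫ τ in (0:ℝ)..1, (1 - smoothStep δ τ) := by
      rw [intervalIntegral.integral_comp_sub_left (fun x => 1 - smoothStep δ x) 1]
      simp
    rw [hg, intervalIntegral.integral_const_mul, intervalIntegral.integral_add
      (Continuous.intervalIntegrable (by fun_prop) _ _)
      (Continuous.intervalIntegrable (by fun_prop) _ _), hr]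
    ring
  have step4 := mul_le_mul_of_nonneg_left (integral_one_sub_smoothStep_le hδ hδ4) hK
  linarith

/-- The plateau, for `0 < δ ≤ 1/4`: `0` up to `δ`, `M` on `[2δ, 1 - 2δ]`, `c` from `1 - δ` on. -/
noncomputable def plateau (M c δ t : ℝ) : ℝ :=
  M * smoothStep δ t - (M - c) * (1 - smoothStep δ (1 - t))

lemma plateau_contDiff (M c δ : ℝ) {n : ℕ∞} : ContDiff ℝ n (plateau M c δ) := by
  have hs := smoothStep_contDiff δ (n := n)
  unfold plateau
  exact (contDiff_const.mul hs).sub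
    (contDiff_const.mul (contDiff_const.sub (hs.comp (contDiff_const.sub contDiff_id))))

lemma plateau_eq_left {M c δ t : ℝ} (hδ : 0 < δ) (hδ4 : δ ≤ 1 / 4) (ht : t ≤ δ) :
    plateau M c δ t = 0 := by
  simp [plateau, smoothStep_eq_zero hδ ht, smoothStep_eq_one hδ (t := 1 - t) (by linarith)]

lemma plateau_eq_right {M c δ t : ℝ} (hδ : 0 < δ) (hδ4 : δ ≤ 1 / 4) (ht : 1 - δ ≤ t) :
    plateau M c δ t = c := by
  simp [plateau, smoothStep_eq_one hδ (t := t) (by linarith),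
    smoothStep_eq_zero hδ (t := 1 - t) (by linarith)]

lemma deriv_plateau_left {M c δ t : ℝ} (hδ : 0 < δ) (hδ4 : δ ≤ 1 / 4) (ht : t < δ) :
    deriv (plateau M c δ) t = 0 := by
  have : plateau M c δ =ᶠ[nhds t] fun _ => (0:ℝ) := by
    filter_upwards [Iio_mem_nhds ht] with s hs using plateau_eq_left hδ hδ4 (le_of_lt hs)
  rw [this.deriv_eq, deriv_const]

lemma deriv_plateau_right {M c δ t : ℝ} (hδ : 0 < δ) (hδ4 : δ ≤ 1 / 4) (ht : 1 - δ < t) :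
    deriv (plateau M c δ) t = 0 := by
  have : plateau M c δ =ᶠ[nhds t] fun _ => c := by
    filter_upwards [Ioi_mem_nhds ht] with s hs using plateau_eq_right hδ hδ4 (le_of_lt hs)
  rw [this.deriv_eq, deriv_const]

theorem stmt_15 (G H : ℕ) (hGH : H ≤ G) (γ : ℝ) (α β : ℕ → ℝ)
    (f : ℝ → ℝ) (hf : ContDiffOn ℝ G f (Set.Icc 0 1))
    (hfpos : ∀ t ∈ Set.Icc (0:ℝ) 1, 0 < f t)
    (ρ : ℝ → ℝ) (hρ : ContinuousOn ρ (Set.Icc 0 1))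
    (hρ0 : ρ 0 < 0) (hρ1 : ρ 1 < γ) :
    ∃ u : ℝ → ℝ, ContDiffOn ℝ G u (Set.Icc 0 1) ∧
      (∫ τ in (0:ℝ)..1, f τ * u τ) = γ ∧
      (∀ t ∈ Set.Icc (0:ℝ) 1, ρ t < ∫ τ in (0:ℝ)..t, f τ * u τ) ∧
      (∀ i ≤ H, iteratedDerivWithin i u (Set.Icc 0 1) 0 = α i ∧
        iteratedDerivWithin i u (Set.Icc 0 1) 1 = β i) := by
  have m0 : (0:ℝ) ∈ Set.Icc (0:ℝ) 1 := by simp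
  have m1 : (1:ℝ) ∈ Set.Icc (0:ℝ) 1 := by simp
  set P₀ := jetPoly H α 0 with hP₀
  set P₁ := jetPoly H β 1 with hP₁
  have cP₀ : ContDiff ℝ ((⊤ : ℕ∞) : WithTop ℕ∞) P₀ := jetPoly_contDiff H α 0
  have cP₁ : ContDiff ℝ ((⊤ : ℕ∞) : WithTop ℕ∞) P₁ := jetPoly_contDiff H β 1
  have hfc : ContinuousOn f (Set.Icc 0 1) := hf.continuousOn
  obtain ⟨K₀, hK₀⟩ := isCompact_Icc.exists_bound_of_continuousOn
    (hfc.mul cP₀.continuous.continuousOn)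
  obtain ⟨K₁, hK₁⟩ := isCompact_Icc.exists_bound_of_continuousOn
    (hfc.mul cP₁.continuous.continuousOn)
  obtain ⟨R, hR⟩ := isCompact_Icc.exists_bound_of_continuousOn hρ
  set K := max K₀ K₁
  have hK : 0 ≤ K := (norm_nonneg _).trans ((hK₀ 0 m0).trans (le_max_left _ _))
  obtain ⟨η, hη, hη0, hη1⟩ : ∃ η : ℝ, 0 < η ∧ ρ 0 < -(2 * η) ∧ ρ 1 < γ - 2 * η := by
    refine ⟨min (-ρ 0) (γ - ρ 1) / 3, ?_, ?_, ?_⟩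
    · have : 0 < min (-ρ 0) (γ - ρ 1) := lt_min (by linarith) (by linarith)
      positivity
    · have := min_le_left (-ρ 0) (γ - ρ 1)
      linarith
    · have := min_le_right (-ρ 0) (γ - ρ 1)
      linarith
  obtain ⟨d₀, hd₀, hd₀'⟩ := Metric.mem_nhdsWithin_iff.1
    ((hρ 0 m0).eventually (Iio_mem_nhds hη0))
  obtain ⟨d₁, hd₁, hd₁'⟩ := Metric.mem_nhdsWithin_iff.1
    ((hρ 1 m1).eventually (Iio_mem_nhds hη1))
  obtain ⟨δ, hδ, hδ4, hδ0, hδ1, hδK⟩ : ∃ δ : ℝ, 0 < δ ∧ δ ≤ 1 / 4 ∧ 2 * δ < d₀ ∧ 2 * δ < d₁ ∧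
      4 * K * δ ≤ η := by
    have hKp : 0 < 4 * K + 1 := by linarith
    refine ⟨min (min (d₀ / 3) (d₁ / 3)) (min (1 / 4) (η / (4 * K + 1))), ?_, ?_, ?_, ?_, ?_⟩
    · refine lt_min (lt_min ?_ ?_) (lt_min ?_ ?_) <;> positivity
    · exact (min_le_right _ _).trans (min_le_left _ _)
    · have := (min_le_left (min (d₀ / 3) (d₁ / 3)) (min (1 / 4) (η / (4 * K + 1)))).trans
        (min_le_left _ _)
      linarith
    · have := (min_le_left (min (d₀ / 3) (d₁ / 3)) (min (1 / 4) (η / (4 * K + 1)))).trans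
        (min_le_right _ _)
      linarith
    · have := (min_le_right (min (d₀ / 3) (d₁ / 3)) (min (1 / 4) (η / (4 * K + 1)))).trans
        (min_le_right _ _)
      calc _ ≤ 4 * K * (η / (4 * K + 1)) := by gcongr
        _ ≤ (4 * K + 1) * (η / (4 * K + 1)) := by gcongr; linarith
        _ = η := by field_simp
  have hρl : ∀ t ∈ Set.Icc (0:ℝ) 1, t ≤ 2 * δ → ρ t < -(2 * η) := fun t ht h =>
    hd₀' ⟨by rw [Metric.mem_ball, Real.dist_eq, abs_lt]; constructor <;> linarith [ht.1], ht⟩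
  have hρr : ∀ t ∈ Set.Icc (0:ℝ) 1, 1 - 2 * δ ≤ t → ρ t < γ - 2 * η := fun t ht h =>
    hd₁' ⟨by rw [Metric.mem_ball, Real.dist_eq, abs_lt]; constructor <;> linarith [ht.2], ht⟩
  set w := cutJets P₀ P₁ δ with hw
  have cw : ContDiff ℝ ((⊤ : ℕ∞) : WithTop ℕ∞) w := cutJets_contDiff cP₀ cP₁ δ
  have hW : ∀ t ∈ Set.Icc (0:ℝ) 1, |∫ τ in (0:ℝ)..t, f τ * w τ| ≤ η := fun t ht =>
    (abs_integral_cutJets_le hδ hδ4 (fun t ht => (hK₀ t ht).trans (le_max_left _ _))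
      (fun t ht => (hK₁ t ht).trans (le_max_right _ _)) ht).trans hδK
  set c := γ - ∫ τ in (0:ℝ)..1, f τ * w τ with hc
  set M := |c| + R + 2 * η with hM
  have hR0 : 0 ≤ R := (norm_nonneg _).trans (hR 0 m0)
  have hcM : c ≤ M := by linarith [le_abs_self c]
  have hM0 : 0 ≤ M := by linarith [abs_nonneg c]
  set φ := plateau M c δ with hφ
  have cφ : ContDiff ℝ ((⊤ : ℕ∞) : WithTop ℕ∞) φ := plateau_contDiff M c δ
  have cφ' : ContDiff ℝ ((⊤ : ℕ∞) : WithTop ℕ∞) (deriv φ) :=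
    (contDiff_infty_iff_deriv.1 cφ).2
  have hGtop : ((G : ℕ) : WithTop ℕ∞) ≤ ((⊤ : ℕ∞) : WithTop ℕ∞) := by
    exact_mod_cast le_top
  -- The integral of `f u` over `[0, t]`; the values of `f` outside `[0, 1]` play no role.
  have hint : ∀ t ∈ Set.Icc (0:ℝ) 1, ∫ τ in (0:ℝ)..t, f τ * (w τ + deriv φ τ / f τ)
      = (∫ τ in (0:ℝ)..t, f τ * w τ) + φ t := by
    intro t ht
    have hsub : Set.uIcc 0 t ⊆ Set.Icc (0:ℝ) 1 := by
      rw [Set.uIcc_of_le ht.1]; exact Set.Icc_subset_Icc_right ht.2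
    have e : ∫ τ in (0:ℝ)..t, f τ * (w τ + deriv φ τ / f τ)
        = ∫ τ in (0:ℝ)..t, (f τ * w τ + deriv φ τ) := by
      apply intervalIntegral.integral_congr
      intro τ hτ
      have := (hfpos τ (hsub hτ)).ne'
      simp only
      field_simp
    have hφ0 : φ 0 = 0 := plateau_eq_left hδ hδ4 hδ.le
    have hfw : IntervalIntegrable (fun τ => f τ * w τ) MeasureTheory.volume 0 t :=
      ((hfc.mono hsub).mul cw.continuous.continuousOn).intervalIntegrable
    rw [e, intervalIntegral.integral_add hfw
      (cφ'.continuous.intervalIntegrable _ _),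
      intervalIntegral.integral_deriv_eq_sub
        (fun x _ => (cφ.differentiable (by simp)).differentiableAt)
        (cφ'.continuous.intervalIntegrable _ _), hφ0, sub_zero]
  refine ⟨fun t => w t + deriv φ t / f t, ?_, ?_, ?_, ?_⟩
  · exact (cw.of_le hGtop).contDiffOn.add
      ((cφ'.of_le hGtop).contDiffOn.div hf fun t ht => (hfpos t ht).ne')
  · rw [hint 1 m1, hφ, plateau_eq_right hδ hδ4 (by linarith), hc]
    ring
  · intro t ht
    rw [hint t ht]
    have hWt := abs_le.1 (hW t ht)
    have hW1 := abs_le.1 (hW 1 m1)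
    have hs0 := smoothStep_nonneg δ t
    have hs1 := smoothStep_nonneg δ (1 - t)
    rcases le_total t (2 * δ) with h | h
    · have : 0 ≤ φ t := by
        rw [hφ, plateau, smoothStep_eq_one hδ (t := 1 - t) (by linarith)]
        nlinarith
      linarith [hρl t ht h]
    rcases le_total (1 - 2 * δ) t with h' | h'
    · have : c ≤ φ t := by
        rw [hφ, plateau, smoothStep_eq_one hδ h]
        nlinarith
      linarith [hρr t ht h']
    · have : φ t = M := by
        rw [hφ, plateau, smoothStep_eq_one hδ h, smoothStep_eq_one hδ (t := 1 - t) (by linarith)]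
        ring
      have hρt := (le_abs_self _).trans (hR t ht)
      linarith [abs_nonneg c]
  · intro i hi
    have e0 : ∀ t < δ, w t + deriv φ t / f t = P₀ t := by
      intro t ht
      rw [hφ, deriv_plateau_left hδ hδ4 ht, hw, cutJets, smoothStep_eq_zero hδ ht.le,
        smoothStep_eq_one hδ (t := 1 - t) (by linarith)]
      ring
    have e1 : ∀ t, 1 - δ < t → w t + deriv φ t / f t = P₁ t := by
      intro t ht
      rw [hφ, deriv_plateau_right hδ hδ4 ht, hw, cutJets,
        smoothStep_eq_one hδ (t := t) (by linarith),
        smoothStep_eq_zero hδ (t := 1 - t) (by linarith)]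
      ring
    constructor
    · rw [← iteratedDerivWithin_jetPoly H α 0 m0 i hi]
      refine Filter.EventuallyEq.iteratedDerivWithin_eq ?_ (e0 0 hδ)
      filter_upwards [mem_nhdsWithin_of_mem_nhds (Iio_mem_nhds hδ)] with t ht using e0 t ht
    · rw [← iteratedDerivWithin_jetPoly H β 1 m1 i hi]
      have h1 : 1 - δ < 1 := by linarith
      refine Filter.EventuallyEq.iteratedDerivWithin_eq ?_ (e1 1 h1)
      filter_upwards [mem_nhdsWithin_of_mem_nhds (Ioi_mem_nhds h1)] with t ht using e1 t ht
end

section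
/- Let (A, B) be a controllable pair of constant matrices with A ∈ ℝ^{n×n} and B ∈ ℝ^{n×p}, let H ≥ 0 be an integer, and let Σ₀, Σ₁ be symmetric positive definite n×n matrices. Let M, ν be of class C^{H+n−1} on [0,1] with M(t) symmetric positive semidefinite and ν(t) ≥ 0 on [0,1], and let U_i^0, U_i^1 ∈ ℝ^{n×p} for i ∈ {0, 1, …, H}. Then there exists U : [0,1] → ℝ^{n×p} of class C^H with U^{(i)}(0) = U_i^0 and U^{(i)}(1) = U_i^1 for all i ∈ {0, 1, …, H}, such that the solution of Σ'(t) = AΣ + ΣAᵀ + BU(t)ᵀ + U(t)Bᵀ + M(t) + 2ν(t)Σ with Σ(0) = Σ₀ satisfies Σ(t) ≻ 0 (symmetric positive definite) for all t ∈ [0,1] and Σ(1) = Σ₁. -/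
/-!
The unknown `Σ` enters the problem linearly, and the proof exploits that positive definite
trajectories can be improved by adding positive semidefinite homogeneous ones.

**Reduced coordinates.** Put `X = exp (-∫ 2ν) • (exp (-tA) Σ exp (-tA)ᵀ)` and `b = exp (-tA) B`.
The drift terms disappear (`hasMDeriv_reduced`), and writing
`U = Uh + exp (∫ 2ν) • (exp (tA) V)` with `Uh` a smooth control that has the prescribed jets
(`exists_two_jets`), the equation becomes `X' = F₀ + b Vᵀ + V bᵀ` with `F₀` known. In particular
`X` is determined by its initial value, and any `V` vanishing near `0` and `1` leaves the jets of
`U` intact.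

**Steering windows.** By controllability the Gramian of `b` over any window, weighted by a
bump function, is invertible. Hence there is a smooth `R` supported in that window for which the
solution of `ζ' = b R` moves from `0` to the identity (`exists_steering`).

**Right end value, no positivity.** If `D` is the symmetric error at time `1`, the choice
`V = ½ D Rᵀ` adds `½ (ζ D + D ζᵀ)` to `X` and removes the error. Call the outcome `Xb`; it is
positive definite near `0` and near `1`, say on `[0,ε]` and `[1-ε,1]`.

**Positivity.** Using a window in `[0,ε]` and one in `[1-ε,1]`, construct `Z' = b w` with
`Z(0) = Z(1) = 0` and `Z = 1` on `[ε,1-ε]`. Then `(Z Zᵀ)' = b (Z wᵀ)ᵀ + (Z wᵀ) bᵀ`, so `c Z Zᵀ` is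
produced by the control `c Z wᵀ` for every `c ≥ 0`. The sum `Xb + c Z Zᵀ` has the same end values
as `Xb`, is positive definite near the ends since `Z Zᵀ` is positive semidefinite, and equals
`Xb + c` in between, which is positive definite for large `c`.
-/

open Matrix

/-- The controllability matrix `[B AB A²B ⋯ A^{n−1}B]` of a constant pair `(A, B)`. -/
def ctrbConstMat {n p : ℕ} (A : Matrix (Fin n) (Fin n) ℝ) (B : Matrix (Fin n) (Fin p) ℝ) :
    Matrix (Fin n) (Fin n × Fin p) ℝ :=
  Matrix.of fun i kj => (A ^ (kj.1 : ℕ) * B) i kj.2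

/-! ### Scalar preliminaries -/

/-- A continuous function on `[0,1]` has a primitive there; extending the integrand by constants
makes the primitive continuous on all of `ℝ`. -/
lemma exists_primitive_Icc (f : ℝ → ℝ) (hf : ContinuousOn f (Set.Icc 0 1)) :
    ∃ g : ℝ → ℝ, g 0 = 0 ∧ Continuous g ∧
      ∀ t ∈ Set.Icc (0:ℝ) 1, HasDerivWithinAt g (f t) (Set.Icc 0 1) t := by
  have hF : Continuous (Set.IccExtend zero_le_one ((Set.Icc (0:ℝ) 1).domRestrict f)) :=
    (continuousOn_iff_continuous_domRestrict.1 hf).Icc_extend'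
  have hD : ∀ t, HasDerivAt (fun t => ∫ s in (0:ℝ)..t,
      Set.IccExtend zero_le_one ((Set.Icc (0:ℝ) 1).domRestrict f) s)
      (Set.IccExtend zero_le_one ((Set.Icc (0:ℝ) 1).domRestrict f) t) t :=
    fun t => intervalIntegral.integral_hasDerivAt_right (hF.intervalIntegrable _ _)
      (hF.stronglyMeasurableAtFilter _ _) hF.continuousAt
  refine ⟨_, intervalIntegral.integral_same,
    continuous_iff_continuousAt.2 fun t => (hD t).continuousAt, fun t ht => ?_⟩
  have := (hD t).hasDerivWithinAt (s := Set.Icc (0:ℝ) 1)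
  rwa [Set.IccExtend_of_mem _ _ ht] at this

/-- A smooth function with prescribed jets of order `H` at `0`. -/
lemma exists_jet_zero (H : ℕ) (a : ℕ → ℝ) :
    ∃ h : ℝ → ℝ, (∀ m : ℕ, ContDiff ℝ m h) ∧ ∀ k ≤ H, iteratedDeriv k h 0 = a k := by
  have hc : ∀ m k : ℕ, ContDiff ℝ m (fun t : ℝ => (a k / k.factorial) * t ^ k) := by
    intro m k; fun_prop
  refine ⟨fun t => ∑ k ∈ Finset.range (H + 1), (a k / k.factorial) * t ^ k, ?_, ?_⟩
  · intro m; exact ContDiff.sum fun k _ => hc m k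
  · intro k hk
    rw [iteratedDeriv_fun_sum (fun i _ => (hc k i).contDiffAt)]
    rw [Finset.sum_eq_single k]
    · rw [iteratedDeriv_const_mul_field, iteratedDeriv_fun_pow_zero]
      simp [Nat.factorial_ne_zero]
    · intro b _ hb
      rw [iteratedDeriv_const_mul_field, iteratedDeriv_fun_pow_zero]
      simp [Ne.symm hb]
    · intro h; exact absurd (Finset.mem_range.2 (by omega)) h

/-- Two-point Hermite interpolation: a smooth function with prescribed jets of order `H` at both
ends of `[0,1]`. The two polynomials are glued with bump functions. -/
lemma exists_two_jets (H : ℕ) (a b : ℕ → ℝ) :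
    ∃ h : ℝ → ℝ, (∀ m : ℕ, ContDiff ℝ m h) ∧
      ∀ k ≤ H, iteratedDeriv k h 0 = a k ∧ iteratedDeriv k h 1 = b k := by
  obtain ⟨f, hf, hf0⟩ := exists_jet_zero H a
  obtain ⟨g, hg, hg0⟩ := exists_jet_zero H b
  let φ : ContDiffBump (0:ℝ) := ⟨1/4, 1/2, by norm_num, by norm_num⟩
  let ψ : ContDiffBump (1:ℝ) := ⟨1/4, 1/2, by norm_num, by norm_num⟩
  have hz0 : ∀ᶠ t in nhds (0:ℝ), φ t = 1 ∧ ψ t = 0 := by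
    filter_upwards [Metric.ball_mem_nhds (0:ℝ) (show (0:ℝ) < 1/4 by norm_num)] with t ht
    rw [Metric.mem_ball, Real.dist_eq, abs_lt] at ht
    refine ⟨φ.one_of_mem_closedBall ?_, ψ.zero_of_le_dist ?_⟩
    · simp only [Metric.mem_closedBall, Real.dist_eq, φ, abs_le]; constructor <;> linarith
    · simp only [Real.dist_eq, ψ, le_abs]; right; linarith
  have hz1 : ∀ᶠ t in nhds (1:ℝ), φ t = 0 ∧ ψ t = 1 := by
    filter_upwards [Metric.ball_mem_nhds (1:ℝ) (show (0:ℝ) < 1/4 by norm_num)] with t ht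
    rw [Metric.mem_ball, Real.dist_eq, abs_lt] at ht
    refine ⟨φ.zero_of_le_dist ?_, ψ.one_of_mem_closedBall ?_⟩
    · simp only [Real.dist_eq, φ, le_abs]; left; linarith
    · simp only [Metric.mem_closedBall, Real.dist_eq, ψ, abs_le]; constructor <;> linarith
  refine ⟨fun t => φ t * f t + ψ t * g (t - 1), fun m => ?_, fun k hk => ⟨?_, ?_⟩⟩
  · exact (φ.contDiff.mul (hf m)).add
      (ψ.contDiff.mul ((hg m).comp (contDiff_id.sub contDiff_const)))
  · rw [← hf0 k hk]
    apply Filter.EventuallyEq.iteratedDeriv_eq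
    filter_upwards [hz0] with t ht
    simp [ht.1, ht.2]
  · have : iteratedDeriv k (fun t => g (t - 1)) 1 = b k := by
      rw [iteratedDeriv_comp_sub_const]; simpa using hg0 k hk
    rw [← this]
    apply Filter.EventuallyEq.iteratedDeriv_eq
    filter_upwards [hz1] with t ht
    simp [ht.1, ht.2]

/-! ### Entrywise calculus of matrix-valued functions -/

/-- `X` has derivative `X'` at `t` within `s`, entry by entry. -/
def HasMDeriv {m n : ℕ} (X : ℝ → Matrix (Fin m) (Fin n) ℝ) (X' : Matrix (Fin m) (Fin n) ℝ)
    (s : Set ℝ) (t : ℝ) : Prop :=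
  ∀ i j, HasDerivWithinAt (fun τ => X τ i j) (X' i j) s t

/-- `X` is of class `C^k` on `s`, entry by entry. -/
def MContDiffOn {m n : ℕ} (k : ℕ) (X : ℝ → Matrix (Fin m) (Fin n) ℝ) (s : Set ℝ) : Prop :=
  ∀ i j, ContDiffOn ℝ k (fun τ => X τ i j) s

section calculus

variable {l m n : ℕ} {s : Set ℝ} {t : ℝ}

lemma HasMDeriv.mono {X : ℝ → Matrix (Fin m) (Fin n) ℝ} {X'} {s' : Set ℝ}
    (h : HasMDeriv X X' s t) (hs : s' ⊆ s) : HasMDeriv X X' s' t :=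
  fun i j => (h i j).mono hs

lemma HasMDeriv.add {X Y : ℝ → Matrix (Fin m) (Fin n) ℝ} {X' Y'}
    (hX : HasMDeriv X X' s t) (hY : HasMDeriv Y Y' s t) :
    HasMDeriv (fun τ => X τ + Y τ) (X' + Y') s t :=
  fun i j => (hX i j).add (hY i j)

lemma HasMDeriv.sub {X Y : ℝ → Matrix (Fin m) (Fin n) ℝ} {X' Y'}
    (hX : HasMDeriv X X' s t) (hY : HasMDeriv Y Y' s t) :
    HasMDeriv (fun τ => X τ - Y τ) (X' - Y') s t :=
  fun i j => (hX i j).sub (hY i j)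

lemma HasMDeriv.smul {X : ℝ → Matrix (Fin m) (Fin n) ℝ} {X'} {r : ℝ → ℝ} {r' : ℝ}
    (hr : HasDerivWithinAt r r' s t) (hX : HasMDeriv X X' s t) :
    HasMDeriv (fun τ => r τ • X τ) (r' • X t + r t • X') s t :=
  fun i j => hr.mul (hX i j)

lemma HasMDeriv.const_smul {X : ℝ → Matrix (Fin m) (Fin n) ℝ} {X'} (c : ℝ)
    (hX : HasMDeriv X X' s t) : HasMDeriv (fun τ => c • X τ) (c • X') s t :=
  fun i j => (hX i j).const_mul c

lemma HasMDeriv.transpose {X : ℝ → Matrix (Fin m) (Fin n) ℝ} {X'}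
    (hX : HasMDeriv X X' s t) : HasMDeriv (fun τ => (X τ)ᵀ) X'ᵀ s t :=
  fun i j => hX j i

lemma hasMDeriv_const (C : Matrix (Fin m) (Fin n) ℝ) : HasMDeriv (fun _ => C) 0 s t :=
  fun _ _ => hasDerivWithinAt_const _ _ _

lemma HasMDeriv.mul {X : ℝ → Matrix (Fin l) (Fin m) ℝ} {Y : ℝ → Matrix (Fin m) (Fin n) ℝ} {X' Y'}
    (hX : HasMDeriv X X' s t) (hY : HasMDeriv Y Y' s t) :
    HasMDeriv (fun τ => X τ * Y τ) (X' * Y t + X t * Y') s t := by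
  intro i j
  simp only [Matrix.mul_apply, Matrix.add_apply, ← Finset.sum_add_distrib]
  exact HasDerivWithinAt.fun_sum fun k _ => (hX i k).mul (hY k j)

lemma HasMDeriv.congr_deriv {X : ℝ → Matrix (Fin m) (Fin n) ℝ} {X' Y'}
    (hX : HasMDeriv X X' s t) (h : X' = Y') : HasMDeriv X Y' s t := h ▸ hX

/-- Two matrix functions on `[0,1]` with the same derivative and the same initial value agree. -/
lemma eq_of_hasMDeriv {X Y F : ℝ → Matrix (Fin m) (Fin n) ℝ} (h0 : X 0 = Y 0)
    (hX : ∀ t ∈ Set.Icc (0:ℝ) 1, HasMDeriv X (F t) (Set.Icc 0 1) t)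
    (hY : ∀ t ∈ Set.Icc (0:ℝ) 1, HasMDeriv Y (F t) (Set.Icc 0 1) t) :
    ∀ t ∈ Set.Icc (0:ℝ) 1, X t = Y t := by
  intro t ht
  ext i j
  have hd : ∀ t ∈ Set.Icc (0:ℝ) 1,
      HasDerivWithinAt (fun τ => X τ i j - Y τ i j) 0 (Set.Icc 0 1) t := fun t ht => by
    simpa using (hX t ht i j).fun_sub (hY t ht i j)
  have := constant_of_derivWithin_zero (fun t ht => (hd t ht).differentiableWithinAt)
    (fun t ht => (hd t (Set.Ico_subset_Icc_self ht)).derivWithin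
      (uniqueDiffOn_Icc zero_lt_one t (Set.Ico_subset_Icc_self ht))) t ht
  simp only [h0, sub_self] at this
  linarith

lemma MContDiffOn.mul {k : ℕ} {X : ℝ → Matrix (Fin l) (Fin m) ℝ}
    {Y : ℝ → Matrix (Fin m) (Fin n) ℝ} (hX : MContDiffOn k X s) (hY : MContDiffOn k Y s) :
    MContDiffOn k (fun τ => X τ * Y τ) s := by
  intro i j
  simp only [Matrix.mul_apply]
  exact ContDiffOn.sum fun r _ => (hX i r).mul (hY r j)

lemma MContDiffOn.add {k : ℕ} {X Y : ℝ → Matrix (Fin m) (Fin n) ℝ}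
    (hX : MContDiffOn k X s) (hY : MContDiffOn k Y s) : MContDiffOn k (fun τ => X τ + Y τ) s :=
  fun i j => (hX i j).add (hY i j)

lemma MContDiffOn.sub {k : ℕ} {X Y : ℝ → Matrix (Fin m) (Fin n) ℝ}
    (hX : MContDiffOn k X s) (hY : MContDiffOn k Y s) : MContDiffOn k (fun τ => X τ - Y τ) s :=
  fun i j => (hX i j).sub (hY i j)

lemma MContDiffOn.smul {k : ℕ} {X : ℝ → Matrix (Fin m) (Fin n) ℝ} {r : ℝ → ℝ}
    (hr : ContDiffOn ℝ k r s) (hX : MContDiffOn k X s) : MContDiffOn k (fun τ => r τ • X τ) s :=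
  fun i j => hr.mul (hX i j)

lemma MContDiffOn.transpose {k : ℕ} {X : ℝ → Matrix (Fin m) (Fin n) ℝ}
    (hX : MContDiffOn k X s) : MContDiffOn k (fun τ => (X τ)ᵀ) s :=
  fun i j => hX j i

lemma mContDiffOn_const {k : ℕ} (C : Matrix (Fin m) (Fin n) ℝ) :
    MContDiffOn k (fun _ => C) s := fun _ _ => contDiffOn_const

lemma MContDiffOn.mono {k : ℕ} {X : ℝ → Matrix (Fin m) (Fin n) ℝ} {s' : Set ℝ}
    (hX : MContDiffOn k X s) (hs : s' ⊆ s) : MContDiffOn k X s' := fun i j => (hX i j).mono hs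

lemma MContDiffOn.of_le {k k' : ℕ} {X : ℝ → Matrix (Fin m) (Fin n) ℝ}
    (hX : MContDiffOn k X s) (hk : k' ≤ k) : MContDiffOn k' X s :=
  fun i j => (hX i j).of_le (by exact_mod_cast hk)

/-- A primitive of a `C^k` function is `C^{k+1}`. -/
lemma contDiffOn_succ_of_hasDeriv {k : ℕ} {f f' : ℝ → ℝ} (hs : UniqueDiffOn ℝ s)
    (h : ∀ t ∈ s, HasDerivWithinAt f (f' t) s t) (hf' : ContDiffOn ℝ k f' s) :
    ContDiffOn ℝ (k + 1 : ℕ) f s := by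
  push_cast
  rw [contDiffOn_succ_iff_derivWithin hs]
  refine ⟨fun t ht => (h t ht).differentiableWithinAt, by simp, hf'.congr fun t ht => ?_⟩
  exact (h t ht).derivWithin (hs t ht)

lemma mContDiffOn_succ {k : ℕ} {X X' : ℝ → Matrix (Fin m) (Fin n) ℝ} (hs : UniqueDiffOn ℝ s)
    (h : ∀ t ∈ s, HasMDeriv X (X' t) s t) (hX' : MContDiffOn k X' s) : MContDiffOn (k + 1) X s :=
  fun i j => contDiffOn_succ_of_hasDeriv hs (fun t ht => h t ht i j) (hX' i j)

lemma MContDiffOn.continuousOn {k : ℕ} {X : ℝ → Matrix (Fin m) (Fin n) ℝ}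
    (hX : MContDiffOn k X s) : ContinuousOn X s :=
  continuousOn_pi.2 fun i => continuousOn_pi.2 fun j => (hX i j).continuousOn

end calculus

/-! ### The matrix exponential and the controllability Gramian -/

section exponential

attribute [local instance] Matrix.linftyOpNormedRing Matrix.linftyOpNormedAlgebra

/-- The one-parameter group `t ↦ exp (tA)` with the properties used below; the norm on matrices
stays internal to this lemma. -/
lemma exists_flow {n : ℕ} (A : Matrix (Fin n) (Fin n) ℝ) :
    ∃ E : ℝ → Matrix (Fin n) (Fin n) ℝ, E 0 = 1 ∧ (∀ t, E t * E (-t) = 1) ∧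
      (∀ t, HasMDeriv E (A * E t) Set.univ t) ∧
      (∀ t, HasMDeriv (fun τ => E (-τ)) (-(E (-t) * A)) Set.univ t) ∧
      ∀ k, MContDiffOn k E Set.univ := by
  have hent : ∀ (X : ℝ → Matrix (Fin n) (Fin n) ℝ) X' t, HasDerivAt X X' t →
      HasMDeriv X X' Set.univ t := by
    intro X X' t h i j
    let L : Matrix (Fin n) (Fin n) ℝ →L[ℝ] ℝ :=
      LinearMap.toContinuousLinearMap (Matrix.entryLinearMap ℝ ℝ i j)
    exact (L.hasFDerivAt.comp_hasDerivAt t h).hasDerivWithinAt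
  have hd : ∀ t, HasMDeriv (fun t : ℝ => NormedSpace.exp (t • A))
      (A * NormedSpace.exp (t • A)) Set.univ t :=
    fun t => hent _ _ _ (hasDerivAt_exp_smul_const' A t)
  refine ⟨fun t => NormedSpace.exp (t • A), by simp, fun t => ?_, hd, fun t => ?_, fun k => ?_⟩
  · rw [← Matrix.exp_add_of_commute]
    · simp
    · exact ((Commute.refl A).smul_left t).smul_right (-t)
  · exact HasMDeriv.congr_deriv
      (hent _ _ _ ((hasDerivAt_exp_smul_const A (-t)).scomp t (hasDerivAt_neg t))) (neg_one_smul ℝ _)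
  · induction k with
    | zero => exact fun i j => contDiffOn_zero.2 fun t _ => (hd t i j).continuousWithinAt
    | succ k ih => 
      exact mContDiffOn_succ uniqueDiffOn_univ (fun t _ => hd t)
        ((mContDiffOn_const A).mul ih)

end exponential

lemma HasMDeriv.bilin {m n : ℕ} {X : ℝ → Matrix (Fin m) (Fin n) ℝ} {X' : Matrix (Fin m) (Fin n) ℝ}
    {s : Set ℝ} {t : ℝ} (h : HasMDeriv X X' s t) (x : Fin m → ℝ) (y : Fin n → ℝ) :
    HasDerivWithinAt (fun τ => x ⬝ᵥ (X τ *ᵥ y)) (x ⬝ᵥ (X' *ᵥ y)) s t := by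
  simp only [dotProduct, mulVec]
  exact HasDerivWithinAt.fun_sum fun i _ =>
    (HasDerivWithinAt.fun_sum fun j _ => (h i j).mul_const (y j)).const_mul (x i)

/-- Full row rank of the controllability matrix, in kernel form (the Kalman test). -/
lemma eq_zero_of_ctrb {n p : ℕ} {A : Matrix (Fin n) (Fin n) ℝ} {B : Matrix (Fin n) (Fin p) ℝ}
    (hctrb : (ctrbConstMat A B).rank = n) (y : Fin n → ℝ)
    (hy : ∀ k : ℕ, y ᵥ* (A ^ k * B) = 0) : y = 0 := by
  have hli : LinearIndependent ℝ (ctrbConstMat A B).row := by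
    rw [linearIndependent_iff_card_eq_finrank_span, Set.finrank, ← rank_eq_finrank_span_row, hctrb,
      Fintype.card_fin]
  rw [← vecMul_injective_iff] at hli
  apply hli
  simp only [zero_vecMul]
  ext ⟨k, j⟩
  exact congrFun (hy k) j

/-- Observability: a covector that annihilates `exp (-tA) B` on an open interval vanishes. All
derivatives in `t` vanish too, so it also annihilates `exp (-tA) A^k B` for every `k`. -/
lemma eq_zero_of_flow {n p : ℕ} {A : Matrix (Fin n) (Fin n) ℝ} {B : Matrix (Fin n) (Fin p) ℝ}
    (hctrb : (ctrbConstMat A B).rank = n) {E : ℝ → Matrix (Fin n) (Fin n) ℝ}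
    (hinv : ∀ t, E t * E (-t) = 1)
    (hE : ∀ t, HasMDeriv (fun τ => E (-τ)) (-(E (-t) * A)) Set.univ t)
    {a b : ℝ} (hab : a < b) (x : Fin n → ℝ)
    (hx : ∀ t ∈ Set.Ioo a b, x ᵥ* (E (-t) * B) = 0) : x = 0 := by
  have key : ∀ k : ℕ, ∀ t ∈ Set.Ioo a b, x ᵥ* (E (-t) * (A ^ k * B)) = 0 := by
    intro k
    induction k with
    | zero => simpa using hx
    | succ k ih =>
      intro t ht
      ext j
      have h1 := hasDerivWithinAt_univ.1
        (((hE t).mul (hasMDeriv_const (A ^ k * B))).bilin x (Pi.single j 1))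
      have h2 : HasDerivAt (fun τ => x ⬝ᵥ ((E (-τ) * (A ^ k * B)) *ᵥ Pi.single j 1)) 0 t := by
        refine (hasDerivAt_const t (0:ℝ)).congr_of_eventuallyEq ?_
        filter_upwards [Ioo_mem_nhds ht.1 ht.2] with τ hτ
        rw [dotProduct_mulVec, ih τ hτ, zero_dotProduct]
      have h3 := h1.unique h2
      rw [Matrix.mul_zero, add_zero, dotProduct_mulVec, dotProduct_single_one, Matrix.neg_mul,
        vecMul_neg] at h3
      simp only [Pi.neg_apply, neg_eq_zero] at h3
      rw [pow_succ', Matrix.mul_assoc, ← Matrix.mul_assoc (E (-t)), h3]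
      rfl
  obtain ⟨t, ht⟩ := Set.nonempty_Ioo.2 hab
  have hy : x ᵥ* E (-t) = 0 := eq_zero_of_ctrb hctrb _ fun k => by
    rw [vecMul_vecMul]; exact key k t ht
  have h1 : E (-t) * E t = 1 := mul_eq_one_comm.1 (hinv t)
  rw [← vecMul_one x, ← h1, ← vecMul_vecMul, hy, zero_vecMul]

/-- Steering in a window. For `a < b` there is a smooth control `R`, supported in `[a,b]`, whose
state `Z' = exp (-tA) B R` moves from `0` to the identity: with a bump `φ` and the weighted Gramian
`W = ∫ φ exp (-tA) B Bᵀ exp (-tA)ᵀ`, take `R = φ Bᵀ exp (-tA)ᵀ W⁻¹`. -/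
lemma exists_steering {n p : ℕ} {A : Matrix (Fin n) (Fin n) ℝ} {B : Matrix (Fin n) (Fin p) ℝ}
    (hctrb : (ctrbConstMat A B).rank = n) {E : ℝ → Matrix (Fin n) (Fin n) ℝ}
    (hinv : ∀ t, E t * E (-t) = 1)
    (hE : ∀ t, HasMDeriv (fun τ => E (-τ)) (-(E (-t) * A)) Set.univ t)
    (hEs : ∀ k, MContDiffOn k (fun τ => E (-τ)) Set.univ) {a b : ℝ} (hab : a < b) :
    ∃ (R : ℝ → Matrix (Fin p) (Fin n) ℝ) (Z : ℝ → Matrix (Fin n) (Fin n) ℝ),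
      (∀ k, MContDiffOn k R Set.univ) ∧ (∀ k, MContDiffOn k Z Set.univ) ∧
      (∀ t, t ≤ a ∨ b ≤ t → R t = 0) ∧
      (∀ t, HasMDeriv Z (E (-t) * B * R t) Set.univ t) ∧
      (∀ t ≤ a, Z t = 0) ∧ (∀ t, b ≤ t → Z t = 1) := by
  let φ : ContDiffBump ((a + b) / 2) :=
    ⟨(b - a) / 4, (b - a) / 2, by linarith, by linarith⟩
  have hφ0 : ∀ t, t ≤ a ∨ b ≤ t → φ t = 0 := by
    intro t ht
    apply φ.zero_of_le_dist
    simp only [Real.dist_eq, φ, le_abs]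
    rcases ht with h | h
    · right; linarith
    · left; linarith
  have hφpos : ∀ t ∈ Set.Ioo a b, 0 < φ t := by
    intro t ht
    apply φ.pos_of_mem_ball
    simp only [Metric.mem_ball, Real.dist_eq, φ, abs_lt]
    constructor <;> linarith [ht.1, ht.2]
  let b' : ℝ → Matrix (Fin n) (Fin p) ℝ := fun t => E (-t) * B
  have hb' : ∀ k, MContDiffOn k b' Set.univ := fun k => (hEs k).mul (mContDiffOn_const B)
  let G : ℝ → Matrix (Fin n) (Fin n) ℝ := fun t => φ t • (b' t * (b' t)ᵀ)
  have hG : ∀ k, MContDiffOn k G Set.univ := fun k =>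
    MContDiffOn.smul φ.contDiff.contDiffOn ((hb' k).mul (hb' k).transpose)
  have hGc : ∀ i j, Continuous fun t => G t i j := fun i j =>
    continuousOn_univ.1 (hG 0 i j).continuousOn
  have hG0 : ∀ t, t ≤ a ∨ b ≤ t → G t = 0 := fun t ht => by simp [G, hφ0 t ht]
  let V : ℝ → Matrix (Fin n) (Fin n) ℝ := fun t => Matrix.of fun i j => ∫ s in a..t, G s i j
  have hV : ∀ t, HasMDeriv V (G t) Set.univ t := fun t i j =>
    (intervalIntegral.integral_hasDerivAt_right ((hGc i j).intervalIntegrable _ _)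
      ((hGc i j).stronglyMeasurableAtFilter _ _) (hGc i j).continuousAt).hasDerivWithinAt
  have hVa : ∀ t ≤ a, V t = 0 := by
    intro t ht
    ext i j
    have : ∫ s in a..t, G s i j = ∫ s in a..t, (0:ℝ) := by
      apply intervalIntegral.integral_congr
      intro s hs
      rw [Set.uIcc_of_ge ht] at hs
      simp [hG0 s (Or.inl hs.2)]
    simpa [V] using this
  have hVb : ∀ t, b ≤ t → V t = V b := by
    intro t ht
    ext i j
    have : ∫ s in b..t, G s i j = ∫ s in b..t, (0:ℝ) := by
      apply intervalIntegral.integral_congr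
      intro s hs
      rw [Set.uIcc_of_le ht] at hs
      simp [hG0 s (Or.inr hs.1)]
    have h2 := intervalIntegral.integral_add_adjacent_intervals
      ((hGc i j).intervalIntegrable a b) ((hGc i j).intervalIntegrable (μ := MeasureTheory.volume) b t)
    simp only [V, Matrix.of_apply]
    rw [← h2, this]; simp
  have hquad : ∀ (x : Fin n → ℝ) t,
      x ⬝ᵥ (G t *ᵥ x) = φ t * ((x ᵥ* b' t) ⬝ᵥ (x ᵥ* b' t)) := by
    intro x t
    simp only [G, smul_mulVec, dotProduct_smul, smul_eq_mul]
    rw [← mulVec_mulVec, dotProduct_mulVec, mulVec_transpose]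
  have hunit : IsUnit (V b) := by
    rw [← Matrix.mulVec_injective_iff_isUnit]
    intro x y hxy
    rw [← sub_eq_zero]
    set z := x - y with hz
    have hzero : V b *ᵥ z = 0 := by rw [hz, mulVec_sub]; exact sub_eq_zero.2 hxy
    -- `v t = zᵀ V(t) z` is monotone and vanishes at both ends of `[a,b]`
    let v : ℝ → ℝ := fun t => z ⬝ᵥ (V t *ᵥ z)
    have hv : ∀ t, HasDerivAt v (φ t * ((z ᵥ* b' t) ⬝ᵥ (z ᵥ* b' t))) t := fun t => by
      rw [← hquad]; exact hasDerivWithinAt_univ.1 ((hV t).bilin z z)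
    have hmono : Monotone v := monotone_of_deriv_nonneg
      (fun t => (hv t).differentiableAt) fun t => by
        rw [(hv t).deriv]
        exact mul_nonneg φ.nonneg (by simpa using dotProduct_star_self_nonneg (z ᵥ* b' t))
    have hva : v a = 0 := by simp [v, hVa a le_rfl]
    have hvb : v b = 0 := by simp [v, hzero]
    apply eq_zero_of_flow hctrb hinv hE hab
    intro t ht
    have h0 : HasDerivAt v 0 t := by
      refine (hasDerivAt_const t (0:ℝ)).congr_of_eventuallyEq ?_
      filter_upwards [Ioo_mem_nhds ht.1 ht.2] with τ hτ
      exact le_antisymm (hvb ▸ hmono hτ.2.le) (hva ▸ hmono hτ.1.le)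
    have h1 := (hv t).unique h0
    have h2 := (mul_eq_zero.1 h1).resolve_left (hφpos t ht).ne'
    exact dotProduct_self_eq_zero.1 h2
  have hdet := (Matrix.isUnit_iff_isUnit_det _).1 hunit
  have hR : ∀ k, MContDiffOn k (fun t => φ t • ((b' t)ᵀ * (V b)⁻¹)) Set.univ := fun k =>
    MContDiffOn.smul φ.contDiff.contDiffOn ((hb' k).transpose.mul (mContDiffOn_const _))
  have hZ : ∀ t, HasMDeriv (fun t => V t * (V b)⁻¹)
      (b' t * (φ t • ((b' t)ᵀ * (V b)⁻¹))) Set.univ t := fun t =>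
    ((hV t).mul (hasMDeriv_const _)).congr_deriv (by
      simp [G, Matrix.mul_assoc])
  refine ⟨fun t => φ t • ((b' t)ᵀ * (V b)⁻¹), fun t => V t * (V b)⁻¹, hR, fun k => ?_,
    fun t ht => by simp [hφ0 t ht], hZ, fun t ht => by simp [hVa t ht], fun t ht => ?_⟩
  · exact (mContDiffOn_succ uniqueDiffOn_univ (fun t _ => hZ t) ((hb' k).mul (hR k))).of_le
      (Nat.le_succ k)
  · simp only [hVb t ht]; exact Matrix.mul_nonsing_inv _ hdet

/-! ### Positivity -/

/-- By homogeneity, positivity of the quadratic form need only be tested on the unit sphere. -/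
lemma posDef_of_sphere {n : ℕ} {X : Matrix (Fin n) (Fin n) ℝ} (hX : X.IsHermitian)
    (h : ∀ x ∈ Metric.sphere (0 : Fin n → ℝ) 1, 0 < x ⬝ᵥ (X *ᵥ x)) : X.PosDef := by
  refine Matrix.PosDef.of_dotProduct_mulVec_pos hX fun x hx => ?_
  have hn : 0 < ‖x‖ := norm_pos_iff.2 hx
  have := h (‖x‖⁻¹ • x) (by simp [norm_smul, hn.ne'])
  simp only [mulVec_smul, dotProduct_smul, smul_dotProduct, smul_eq_mul] at this
  have hi : 0 < ‖x‖⁻¹ := inv_pos.2 hn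
  simpa using pos_of_mul_pos_right (pos_of_mul_pos_right this hi.le) hi.le

/-- Positive definiteness is preserved near a point. -/
lemma eventually_posDef {n : ℕ} {X : ℝ → Matrix (Fin n) (Fin n) ℝ} (hX : Continuous X)
    (hsym : ∀ t, (X t).IsHermitian) {t₀ : ℝ} (h0 : (X t₀).PosDef) :
    ∀ᶠ t in nhds t₀, (X t).PosDef := by
  have hq : Continuous fun q : ℝ × (Fin n → ℝ) => q.2 ⬝ᵥ (X q.1 *ᵥ q.2) := by fun_prop
  have h := (isCompact_sphere (0 : Fin n → ℝ) 1).eventually_forall_of_forall_eventually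
    (x₀ := t₀) (P := fun t x => 0 < x ⬝ᵥ (X t *ᵥ x)) fun x hx => by
      have hx0 : x ≠ 0 := by rintro rfl; simp at hx
      have := h0.dotProduct_mulVec_pos hx0
      exact (hq.continuousAt (x := (t₀, x))).eventually (lt_mem_nhds (by simpa using this))
  filter_upwards [h] with t ht
  exact posDef_of_sphere (hsym t) ht

/-- A continuous family of symmetric matrices on a compact interval becomes positive definite
after adding a large multiple of the identity. -/
lemma exists_shift_posDef {n : ℕ} {X : ℝ → Matrix (Fin n) (Fin n) ℝ} (hX : Continuous X)
    (hsym : ∀ t, (X t).IsHermitian) :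
    ∃ c : ℝ, 0 ≤ c ∧ ∀ t ∈ Set.Icc (0:ℝ) 1, (X t + c • 1).PosDef := by
  have hq : Continuous fun q : ℝ × (Fin n → ℝ) => q.2 ⬝ᵥ (X q.1 *ᵥ q.2) := by fun_prop
  obtain ⟨C, hC⟩ := ((isCompact_Icc (a := (0:ℝ)) (b := 1)).prod
    (isCompact_sphere (0 : Fin n → ℝ) 1)).exists_bound_of_continuousOn hq.continuousOn
  refine ⟨|C| + 1, by positivity, fun t ht => posDef_of_sphere ((hsym t).add ?_) fun x hx => ?_⟩
  · simp [Matrix.IsHermitian]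
  · have h1 : -|C| ≤ x ⬝ᵥ (X t *ᵥ x) := by
      have := hC (t, x) ⟨ht, hx⟩
      rw [Real.norm_eq_abs] at this
      linarith [neg_abs_le (x ⬝ᵥ (X t *ᵥ x)), le_abs_self C]
    -- on the unit sphere of the sup norm the Euclidean norm is at least one
    have h2 : 1 ≤ x ⬝ᵥ x := by
      rw [mem_sphere_zero_iff_norm] at hx
      by_contra hlt
      push Not at hlt
      have : ‖x‖ < 1 := (pi_norm_lt_iff one_pos).2 fun i => by
        have : x i * x i ≤ x ⬝ᵥ x :=
          Finset.single_le_sum (f := fun i => x i * x i) (fun i _ => mul_self_nonneg _)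
            (Finset.mem_univ i)
        rw [Real.norm_eq_abs, abs_lt]
        constructor <;> nlinarith
      linarith
    have h3 : 0 ≤ |C| := abs_nonneg C
    simp only [add_mulVec, smul_mulVec, one_mulVec, dotProduct_add, dotProduct_smul, smul_eq_mul]
    nlinarith

/-! ### Steering covariances -/

/-- A continuous symmetric matrix function on `[0,1]` has a symmetric primitive. -/
lemma exists_symm_primitive {n : ℕ} {F : ℝ → Matrix (Fin n) (Fin n) ℝ}
    (hF : ContinuousOn F (Set.Icc 0 1)) (hsym : ∀ t ∈ Set.Icc (0:ℝ) 1, (F t)ᵀ = F t) :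
    ∃ N : ℝ → Matrix (Fin n) (Fin n) ℝ, N 0 = 0 ∧ Continuous N ∧ (∀ t, (N t)ᵀ = N t) ∧
      ∀ t ∈ Set.Icc (0:ℝ) 1, HasMDeriv N (F t) (Set.Icc 0 1) t := by
  have hFij : ∀ i j, ContinuousOn (fun t => F t i j) (Set.Icc 0 1) := fun i j =>
    continuousOn_pi.1 (continuousOn_pi.1 hF i) j
  choose g g0 gc gd using fun i j => exists_primitive_Icc _ (hFij i j)
  let N₁ : ℝ → Matrix (Fin n) (Fin n) ℝ := fun t => Matrix.of fun i j => g i j t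
  have hN₁c : Continuous N₁ := continuous_matrix fun i j => gc i j
  have hN₁ : ∀ t ∈ Set.Icc (0:ℝ) 1, HasMDeriv N₁ (F t) (Set.Icc 0 1) t :=
    fun t ht i j => gd i j t ht
  have h0 : N₁ 0 = 0 := by ext i j; exact g0 i j
  refine ⟨fun t => (1/2 : ℝ) • (N₁ t + (N₁ t)ᵀ), by simp [h0], by fun_prop, fun t => ?_,
    fun t ht => ?_⟩
  · simp [add_comm]
  · refine (((hN₁ t ht).add (hN₁ t ht).transpose).const_smul (1/2)).congr_deriv ?_
    rw [hsym t ht]; module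

/-- In the coordinates `r • (exp (-tA) S exp (-tA)ᵀ)`, `r = exp (-∫ 2ν)`, the drift of the
covariance equation disappears. -/
lemma hasMDeriv_reduced {n p : ℕ} {A : Matrix (Fin n) (Fin n) ℝ} {B : Matrix (Fin n) (Fin p) ℝ}
    {E S : ℝ → Matrix (Fin n) (Fin n) ℝ} {U : Matrix (Fin n) (Fin p) ℝ}
    {M' : Matrix (Fin n) (Fin n) ℝ} {r : ℝ → ℝ} {v t : ℝ}
    (hE : HasMDeriv (fun τ => E (-τ)) (-(E (-t) * A)) Set.univ t)
    (hr : HasDerivWithinAt r (-(2 * v) * r t) (Set.Icc 0 1) t)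
    (hS : HasMDeriv S (A * S t + S t * Aᵀ + B * Uᵀ + U * Bᵀ + M' + (2 * v) • S t)
      (Set.Icc 0 1) t) :
    HasMDeriv (fun τ => r τ • (E (-τ) * S τ * (E (-τ))ᵀ))
      (r t • (E (-t) * (B * Uᵀ + U * Bᵀ + M') * (E (-t))ᵀ)) (Set.Icc 0 1) t := by
  have hE' := hE.mono (Set.subset_univ (Set.Icc (0:ℝ) 1))
  refine (HasMDeriv.smul hr ((hE'.mul hS).mul hE'.transpose)).congr_deriv ?_
  simp only [transpose_neg, transpose_mul, Matrix.mul_add, Matrix.add_mul, Matrix.smul_mul,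
    Matrix.mul_smul, Matrix.neg_mul, Matrix.mul_neg, Matrix.mul_assoc]
  module

/-- The effect of adding the control `ρ • (E V)` in the reduced coordinates, where `E' = E⁻¹` and
`r = ρ⁻¹`. -/
lemma reduced_control {n p : ℕ} {B Uh V : Matrix (Fin n) (Fin p) ℝ}
    {E E' M' : Matrix (Fin n) (Fin n) ℝ} {r ρ : ℝ} (hE : E' * E = 1) (hr : r * ρ = 1) :
    r • (E' * (B * (Uh + ρ • (E * V))ᵀ + (Uh + ρ • (E * V)) * Bᵀ + M') * E'ᵀ) =
      r • (E' * (B * Uhᵀ + Uh * Bᵀ + M') * E'ᵀ) + (E' * B * Vᵀ + V * (E' * B)ᵀ) := by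
  have h2 : Vᵀ * (Eᵀ * E'ᵀ) = Vᵀ := by
    rw [← Matrix.transpose_mul, hE, transpose_one, Matrix.mul_one]
  have h3 : E' * (E * (V * (Bᵀ * E'ᵀ))) = V * (Bᵀ * E'ᵀ) := by
    rw [← Matrix.mul_assoc, hE, Matrix.one_mul]
  simp only [transpose_add, transpose_smul, transpose_mul, Matrix.mul_add, Matrix.add_mul,
    Matrix.smul_mul, Matrix.mul_smul, Matrix.mul_assoc, h2, h3, smul_add, smul_smul, hr, one_smul]
  abel

theorem stmt_16 {n p : ℕ} (hn : 1 ≤ n) (hp : 1 ≤ p)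
    (A : Matrix (Fin n) (Fin n) ℝ) (B : Matrix (Fin n) (Fin p) ℝ)
    (hctrb : (ctrbConstMat A B).rank = n)
    (H : ℕ)
    (Sig0 Sig1 : Matrix (Fin n) (Fin n) ℝ) (hSig0 : Sig0.PosDef) (hSig1 : Sig1.PosDef)
    (M : ℝ → Matrix (Fin n) (Fin n) ℝ) (ν : ℝ → ℝ)
    (hM : ∀ i j, ContDiffOn ℝ (H + n - 1 : ℕ) (fun t => M t i j) (Set.Icc 0 1))
    (hν : ContDiffOn ℝ (H + n - 1 : ℕ) ν (Set.Icc 0 1))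
    (hMpsd : ∀ t ∈ Set.Icc (0:ℝ) 1, (M t).PosSemidef)
    (hνpos : ∀ t ∈ Set.Icc (0:ℝ) 1, 0 ≤ ν t)
    (U0 U1 : ℕ → Matrix (Fin n) (Fin p) ℝ) :
    ∃ U : ℝ → Matrix (Fin n) (Fin p) ℝ,
      (∀ i j, ContDiffOn ℝ (H : ℕ) (fun t => U t i j) (Set.Icc 0 1)) ∧
      (∀ k ≤ H, ∀ i j,
        iteratedDerivWithin k (fun t => U t i j) (Set.Icc 0 1) 0 = U0 k i j ∧
        iteratedDerivWithin k (fun t => U t i j) (Set.Icc 0 1) 1 = U1 k i j) ∧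
      ∀ S : ℝ → Matrix (Fin n) (Fin n) ℝ, S 0 = Sig0 →
        (∀ t ∈ Set.Icc (0:ℝ) 1, ∀ (i j : Fin n),
          HasDerivWithinAt (fun τ : ℝ => S τ i j)
            ((A * S t + S t * Aᵀ + B * (U t)ᵀ + U t * Bᵀ + M t + (2 * ν t) • S t) i j)
            (Set.Icc (0:ℝ) 1) t) →
        (∀ t ∈ Set.Icc (0:ℝ) 1, (S t).PosDef) ∧ S 1 = Sig1 := by
  obtain ⟨E, hE0, hinv, _, hEnd, hEs⟩ := exists_flow A
  have hinv' : ∀ t, E (-t) * E t = 1 := fun t => mul_eq_one_comm.1 (hinv t)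
  have hEns : ∀ k, MContDiffOn k (fun τ => E (-τ)) Set.univ := fun k i j =>
    (hEs k i j).comp contDiff_neg.contDiffOn (Set.mapsTo_univ _ _)
  have hle : H ≤ H + n - 1 := by omega
  have hν' : ContDiffOn ℝ H ν (Set.Icc 0 1) := hν.of_le (by exact_mod_cast hle)
  have hMc : ContinuousOn M (Set.Icc 0 1) :=
    continuousOn_pi.2 fun i => continuousOn_pi.2 fun j => (hM i j).continuousOn
  have hu : UniqueDiffOn ℝ (Set.Icc (0:ℝ) 1) := uniqueDiffOn_Icc zero_lt_one
  have hsub : Set.Icc (0:ℝ) 1 ⊆ Set.univ := Set.subset_univ _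
  have h0mem : (0:ℝ) ∈ Set.Icc (0:ℝ) 1 := by simp
  have h1mem : (1:ℝ) ∈ Set.Icc (0:ℝ) 1 := by simp
  -- `exp L` is the integrating factor of the scalar term `2ν`
  obtain ⟨L, hL0, hLc, hLd⟩ := exists_primitive_Icc (fun t => 2 * ν t)
    (continuousOn_const.mul hν'.continuousOn)
  have hLs : ContDiffOn ℝ H L (Set.Icc 0 1) :=
    (contDiffOn_succ_of_hasDeriv hu hLd (contDiffOn_const.mul hν')).of_le
      (by exact_mod_cast Nat.le_succ H)
  let r : ℝ → ℝ := fun t => Real.exp (-L t)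
  let ρ : ℝ → ℝ := fun t => Real.exp (L t)
  have hrc : Continuous r := Real.continuous_exp.comp hLc.neg
  have hrρ : ∀ t, r t * ρ t = 1 := fun t => by simp [r, ρ, ← Real.exp_add]
  have hr0 : r 0 = 1 := by simp [r, hL0]
  have hrd : ∀ t ∈ Set.Icc (0:ℝ) 1, HasDerivWithinAt r (-(2 * ν t) * r t) (Set.Icc 0 1) t :=
    fun t ht => by
      have := (hLd t ht).fun_neg.exp
      rwa [mul_comm] at this
  -- a control with the right jets, and the trajectory it produces from `Sig0`
  choose h hhs hhj using fun i j => exists_two_jets H (fun k => U0 k i j) (fun k => U1 k i j)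
  let Uh : ℝ → Matrix (Fin n) (Fin p) ℝ := fun t => Matrix.of fun i j => h i j t
  have hUhs : ∀ k, MContDiffOn k Uh Set.univ := fun k i j => (hhs i j k).contDiffOn
  have hUhc : Continuous Uh := continuous_matrix fun i j => (hhs i j 0).continuous
  have hEnc : Continuous fun t => E (-t) := continuousOn_univ.1 (hEns 0).continuousOn
  let F0 : ℝ → Matrix (Fin n) (Fin n) ℝ := fun t =>
    r t • (E (-t) * (B * (Uh t)ᵀ + Uh t * Bᵀ + M t) * (E (-t))ᵀ)
  have hF0c : ContinuousOn F0 (Set.Icc 0 1) := by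
    have h1 : Continuous fun t => B * (Uh t)ᵀ + Uh t * Bᵀ := by fun_prop
    exact hrc.continuousOn.smul ((hEnc.continuousOn.mul (h1.continuousOn.add hMc)).mul
      hEnc.matrix_transpose.continuousOn)
  have hMt : ∀ t ∈ Set.Icc (0:ℝ) 1, (M t)ᵀ = M t := fun t ht => by
    simpa [conjTranspose_eq_transpose_of_trivial] using (hMpsd t ht).isHermitian.eq
  have hF0t : ∀ t ∈ Set.Icc (0:ℝ) 1, (F0 t)ᵀ = F0 t := by
    intro t ht
    simp [F0, hMt t ht, Matrix.mul_assoc, add_comm]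
  obtain ⟨N, hN0, hNc, hNt, hNd⟩ := exists_symm_primitive hF0c hF0t
  let X1 : Matrix (Fin n) (Fin n) ℝ := r 1 • (E (-1) * Sig1 * (E (-1))ᵀ)
  have hEinj : ∀ t, Function.Injective (E t).vecMul := fun t =>
    Matrix.vecMul_injective_of_isUnit
      ⟨⟨E t, E (-t), hinv t, hinv' t⟩, rfl⟩
  have hX1 : X1.PosDef :=
    (by simpa [conjTranspose_eq_transpose_of_trivial] using
      hSig1.mul_mul_conjTranspose_same (hEinj (-1)) :
        (E (-1) * Sig1 * (E (-1))ᵀ).PosDef).smul (Real.exp_pos _)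
  have htr : ∀ {Q : Matrix (Fin n) (Fin n) ℝ}, Q.PosDef → Qᵀ = Q := fun {Q} hQ => by
    simpa [conjTranspose_eq_transpose_of_trivial] using hQ.isHermitian.eq
  -- the correction that makes the end value right, ignoring positivity
  let D : Matrix (Fin n) (Fin n) ℝ := X1 - (Sig0 + N 1)
  have hDt : Dᵀ = D := by simp [D, htr hX1, htr hSig0, hNt]
  obtain ⟨R, ζ, hRs, hζs, hR0, hζd, hζ0, hζ1⟩ :=
    exists_steering hctrb hinv hEnd hEns (show (1/4:ℝ) < 1/2 by norm_num)
  let Xb : ℝ → Matrix (Fin n) (Fin n) ℝ := fun t =>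
    Sig0 + N t + (1/2 : ℝ) • (ζ t * D + D * (ζ t)ᵀ)
  have hζc : Continuous ζ := continuousOn_univ.1 (hζs 0).continuousOn
  have hXbc : Continuous Xb := by fun_prop
  have hXbt : ∀ t, (Xb t)ᵀ = Xb t := fun t => by
    simp [Xb, hDt, hNt, htr hSig0, add_comm]
  have hXbh : ∀ t, (Xb t).IsHermitian := fun t => by
    rw [Matrix.IsHermitian, conjTranspose_eq_transpose_of_trivial, hXbt]
  have hXb0 : Xb 0 = Sig0 := by simp [Xb, hN0, hζ0 0 (by norm_num)]
  have hXb1 : Xb 1 = X1 := by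
    simp only [Xb, hζ1 1 (by norm_num), transpose_one, Matrix.one_mul, Matrix.mul_one, D]
    module
  have hXbd : ∀ t ∈ Set.Icc (0:ℝ) 1, HasMDeriv Xb
      (F0 t + (1/2 : ℝ) • (E (-t) * B * R t * D + D * (E (-t) * B * R t)ᵀ)) (Set.Icc 0 1) t := by
    intro t ht
    have hz := (hζd t).mono hsub
    refine (((hasMDeriv_const Sig0).add (hNd t ht)).add
      (((hz.mul (hasMDeriv_const D)).add
        ((hasMDeriv_const D).mul hz.transpose)).const_smul (1/2))).congr_deriv ?_
    simp
  -- `Xb` is positive definite near both end points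
  obtain ⟨ε, hε, hε4, hpos0, hpos1⟩ : ∃ ε : ℝ, 0 < ε ∧ ε ≤ 1/4 ∧
      (∀ t, 0 ≤ t → t ≤ ε → (Xb t).PosDef) ∧ ∀ t, 1 - ε ≤ t → t ≤ 1 → (Xb t).PosDef := by
    obtain ⟨δ, hδ, h0⟩ := Metric.eventually_nhds_iff.1
      (eventually_posDef hXbc hXbh (t₀ := 0) (hXb0 ▸ hSig0))
    obtain ⟨δ', hδ', h1⟩ := Metric.eventually_nhds_iff.1
      (eventually_posDef hXbc hXbh (t₀ := 1) (hXb1 ▸ hX1))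
    have a1 := min_le_left (min δ δ') (1/2)
    have a2 := min_le_right (min δ δ') (1/2)
    have a3 := min_le_left δ δ'
    have a4 := min_le_right δ δ'
    have a5 : 0 < min (min δ δ') (1/2) := by positivity
    refine ⟨min (min δ δ') (1/2) / 2, by linarith, by linarith, fun t ht ht' => h0 ?_,
      fun t ht ht' => h1 ?_⟩
    · rw [Real.dist_eq, abs_lt]; constructor <;> linarith
    · rw [Real.dist_eq, abs_lt]; constructor <;> linarith
  obtain ⟨R₁, ζ₁, hR₁s, hζ₁s, hR₁0, hζ₁d, hζ₁0, hζ₁1⟩ :=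
    exists_steering hctrb hinv hEnd hEns (show ε / 2 < ε by linarith)
  obtain ⟨R₂, ζ₂, hR₂s, hζ₂s, hR₂0, hζ₂d, hζ₂0, hζ₂1⟩ :=
    exists_steering hctrb hinv hEnd hEns (show 1 - ε < 1 - ε / 2 by linarith)
  -- `Z` vanishes at both ends and is the identity on `[ε, 1 - ε]`
  let Z : ℝ → Matrix (Fin n) (Fin n) ℝ := fun t => ζ₁ t - ζ₂ t
  let w : ℝ → Matrix (Fin p) (Fin n) ℝ := fun t => R₁ t - R₂ t
  have hZd : ∀ t, HasMDeriv Z (E (-t) * B * w t) Set.univ t := fun t =>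
    ((hζ₁d t).sub (hζ₂d t)).congr_deriv (by simp [w, Matrix.mul_sub])
  have hZs : ∀ k, MContDiffOn k Z Set.univ := fun k => (hζ₁s k).sub (hζ₂s k)
  have hws : ∀ k, MContDiffOn k w Set.univ := fun k => (hR₁s k).sub (hR₂s k)
  have hZ0 : Z 0 = 0 := by
    simp [Z, hζ₁0 0 (by linarith), hζ₂0 0 (by linarith)]
  have hZ1 : Z 1 = 0 := by
    simp [Z, hζ₁1 1 (by linarith), hζ₂1 1 (by linarith)]
  have hZmid : ∀ t, ε ≤ t → t ≤ 1 - ε → Z t = 1 := fun t h1 h2 => by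
    simp [Z, hζ₁1 t h1, hζ₂0 t h2]
  obtain ⟨c, hc, hcpos⟩ := exists_shift_posDef hXbc hXbh
  let X : ℝ → Matrix (Fin n) (Fin n) ℝ := fun t => Xb t + c • (Z t * (Z t)ᵀ)
  have hXpos : ∀ t ∈ Set.Icc (0:ℝ) 1, (X t).PosDef := by
    intro t ht
    have hpsd : (c • (Z t * (Z t)ᵀ)).PosSemidef := by
      have := (posSemidef_self_mul_conjTranspose (Z t)).smul hc
      rwa [conjTranspose_eq_transpose_of_trivial] at this
    rcases le_total t ε with h1 | h1
    · exact (hpos0 t ht.1 h1).add_posSemidef hpsd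
    rcases le_total (1 - ε) t with h2 | h2
    · exact (hpos1 t h2 ht.2).add_posSemidef hpsd
    · simpa [X, hZmid t h1 h2] using hcpos t ht
  let V : ℝ → Matrix (Fin n) (Fin p) ℝ := fun t =>
    (1/2 : ℝ) • (D * (R t)ᵀ) + c • (Z t * (w t)ᵀ)
  have hVs : ∀ k, MContDiffOn k V Set.univ := fun k =>
    (MContDiffOn.smul contDiffOn_const ((mContDiffOn_const D).mul (hRs k).transpose)).add
      (MContDiffOn.smul contDiffOn_const ((hZs k).mul (hws k).transpose))
  have hV0 : ∀ᶠ t in nhds (0:ℝ), V t = 0 := by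
    filter_upwards [gt_mem_nhds (show (0:ℝ) < ε / 2 by linarith)] with t ht
    simp [V, w, hR0 t (Or.inl (by linarith)), hR₁0 t (Or.inl (by linarith)),
      hR₂0 t (Or.inl (by linarith))]
  have hV1 : ∀ᶠ t in nhds (1:ℝ), V t = 0 := by
    filter_upwards [lt_mem_nhds (show 1 - ε / 2 < (1:ℝ) by linarith)] with t ht
    simp [V, w, hR0 t (Or.inr (by linarith)), hR₁0 t (Or.inr (by linarith)),
      hR₂0 t (Or.inr (by linarith))]
  have hXd : ∀ t ∈ Set.Icc (0:ℝ) 1, HasMDeriv X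
      (F0 t + (E (-t) * B * (V t)ᵀ + V t * (E (-t) * B)ᵀ)) (Set.Icc 0 1) t := by
    intro t ht
    have hz := (hZd t).mono hsub
    refine ((hXbd t ht).add ((hz.mul hz.transpose).const_smul c)).congr_deriv ?_
    simp only [V, transpose_add, transpose_smul, transpose_mul, transpose_transpose, hDt,
      Matrix.mul_add, Matrix.add_mul, Matrix.smul_mul, Matrix.mul_smul, Matrix.mul_assoc]
    module
  have hX0 : X 0 = Sig0 := by simp [X, hXb0, hZ0]
  have hX1' : X 1 = X1 := by simp [X, hXb1, hZ1]
  let U : ℝ → Matrix (Fin n) (Fin p) ℝ := fun t => Uh t + ρ t • (E t * V t)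
  have hjet : ∀ t₀ ∈ Set.Icc (0:ℝ) 1, (∀ᶠ t in nhds t₀, V t = 0) → ∀ k i j,
      iteratedDerivWithin k (fun t => U t i j) (Set.Icc 0 1) t₀ = iteratedDeriv k (h i j) t₀ := by
    intro t₀ ht₀ hV k i j
    rw [← iteratedDerivWithin_eq_iteratedDeriv hu (hhs i j k).contDiffAt ht₀]
    have hev : ∀ᶠ t in nhds t₀, U t i j = h i j t := by
      filter_upwards [hV] with t ht
      simp [U, ht, Uh]
    exact (Filter.EventuallyEq.filter_mono hev nhdsWithin_le_nhds).iteratedDerivWithin_eq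
      hev.self_of_nhds
  refine ⟨U, ?_, fun k hk i j => ⟨?_, ?_⟩, ?_⟩
  · exact ((hUhs H).mono hsub).add
      (MContDiffOn.smul hLs.exp (((hEs H).mono hsub).mul ((hVs H).mono hsub)))
  · rw [hjet 0 h0mem hV0]; exact (hhj i j k hk).1
  · rw [hjet 1 h1mem hV1]; exact (hhj i j k hk).2
  · intro S hS0 hSd
    have hSX : ∀ t ∈ Set.Icc (0:ℝ) 1, r t • (E (-t) * S t * (E (-t))ᵀ) = X t := by
      refine eq_of_hasMDeriv (X := fun t => r t • (E (-t) * S t * (E (-t))ᵀ)) ?_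
        (fun t ht => ?_) hXd
      · simp [hr0, hE0, hS0, hX0]
      · exact (hasMDeriv_reduced (hEnd t) (hrd t ht) (hSd t ht)).congr_deriv
          (reduced_control (hinv' t) (hrρ t))
    have hback : ∀ t (Q : Matrix (Fin n) (Fin n) ℝ),
        ρ t • (E t * (r t • (E (-t) * Q * (E (-t))ᵀ)) * (E t)ᵀ) = Q := by
      intro t Q
      have : E t * (E (-t) * Q * (E (-t))ᵀ) * (E t)ᵀ = Q := by
        calc _ = (E t * E (-t)) * Q * (E t * E (-t))ᵀ := by
              simp only [transpose_mul, Matrix.mul_assoc]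
          _ = Q := by simp [hinv]
      rw [Matrix.mul_smul, Matrix.smul_mul, smul_smul, this, mul_comm, hrρ, one_smul]
    refine ⟨fun t ht => ?_, ?_⟩
    · rw [← hback t (S t), hSX t ht, ← conjTranspose_eq_transpose_of_trivial]
      exact ((hXpos t ht).mul_mul_conjTranspose_same (hEinj t)).smul (Real.exp_pos _)
    · rw [← hback 1 (S 1), hSX 1 h1mem, hX1']
      exact hback 1 Sig1
end
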